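/- arXiv:1808.06557 — 3 statements merged into one kernel-verified Lean document; each statement's English description precedes it below -/
import Mathlib

section
/- Let a, b, c be positive integers with gcd(a,b)=1, a^x+b^y=c^z being the ternary purely exponential equation, and min{a,b,c} > 1 (with a, b, c pairwise coprime). Then the set of triples (x,y,z) of positive integers satisfying a^x + b^y = c^z is finite. -/
/-!
The proof combines hypergeometric Padé approximants (in the style of Thue–Siegel and
Beukers–Schlickewei) with a pigeonhole argument on the directions of the solution vectors.

*Padé identity.* The residues of `1 / (s (s - p) (s - r)) ^ (N + 1)`, with `r = p + q`, add up to
zero. Written out, with `n = 2N + 1` and `W = padeForm N` a form of degree `N` with positive integer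
coefficients,
`p ^ n * W(q, r) + (-1) ^ N * q ^ n * W(p, r) = r ^ n * W(p, -q)`.

*Gap principle* (`gap`). Let `(x, y, z)` and `(X, Y, Z)` be solutions and put `p = a ^ x`,
`q = b ^ y`, `r = c ^ z`. Writing `a ^ X = p ^ n * ε₀` and `b ^ Y = q ^ n * ε₁`, the second
solution gives `p ^ n * ε₀ + q ^ n * ε₁ ≡ 0` modulo `r ^ n`, while the Padé identity with `N` odd
gives `p ^ n * W(q, r) ≡ q ^ n * W(p, r)`. Eliminating, `r ^ n` divides (up to denominators)
`ε₀ * W(p, r) + ε₁ * W(q, r)`, which is nonzero because it is a sum of positive terms: taking `N` odd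
makes the usual determinant nonvanishing argument unnecessary. As `W` has size about `r ^ N`, the
numerators and denominators of `ε₀`, `ε₁` must have size at least about `r ^ (N + 1)`.

*Conclusion.* The ratios `x / z` and `y / z` are bounded, so the solutions fall into finitely many
narrow cones. If a cone contains a solution with `z ≥ 24` and another with `Z` much larger, then
with `n ≈ Z / z` the exponents `X - n x`, `Y - n y` are small compared with `N z`
(`close_directions`), contradicting the gap principle. So each cone contains finitely many solutions.
-/

/-! ### Vanishing of the sum of residues -/

open PowerSeries in
/-- The expansion of `1 / (s + u)` in powers of `s`. -/
noncomputable def poleInv (u : ℚ) : PowerSeries ℚ := (C u + X)⁻¹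

open PowerSeries in
lemma poleInv_mul {u : ℚ} (hu : u ≠ 0) : poleInv u * (C u + X) = 1 :=
  PowerSeries.inv_mul_cancel _ (by simpa using hu)

open PowerSeries in
/-- The sum of the residues at `α`, `β`, `γ` of `1 / ((s - α) ^ i * (s - β) ^ j * (s - γ) ^ k)`. Each
residue is a coefficient of the local expansion of the other two factors; the extra factor `X` turns
the index `i - 1` into `i`, so that the value is `0` when `i = 0`. -/
noncomputable def residueSum (α β γ : ℚ) (i j k : ℕ) : ℚ :=
  coeff i (X * (poleInv (α - β) ^ j * poleInv (α - γ) ^ k)) +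
  coeff j (X * (poleInv (β - γ) ^ k * poleInv (β - α) ^ i)) +
  coeff k (X * (poleInv (γ - α) ^ i * poleInv (γ - β) ^ j))

lemma residueSum_cyclic (α β γ : ℚ) (i j k : ℕ) :
    residueSum α β γ i j k = residueSum β γ α j k i := by
  unfold residueSum; ring

open PowerSeries in
/-- The effect on residues of
`(β - γ) / ((s - β) * (s - γ)) = 1 / (s - β) - 1 / (s - γ)`. -/
lemma residueSum_step {α β γ : ℚ} (hab : α ≠ β) (hbc : β ≠ γ) (hac : α ≠ γ) (i j k : ℕ) :
    (β - γ) * residueSum α β γ i (j + 1) (k + 1) =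
      residueSum α β γ i (j + 1) k - residueSum α β γ i j (k + 1) := by
  have h1 := poleInv_mul (sub_ne_zero.2 hab)
  have h2 := poleInv_mul (sub_ne_zero.2 hac)
  have h3 := poleInv_mul (sub_ne_zero.2 hbc)
  have h4 := poleInv_mul (sub_ne_zero.2 hbc.symm)
  unfold residueSum
  generalize poleInv (α - β) = f at *
  generalize poleInv (α - γ) = g at *
  generalize poleInv (β - γ) = u at *
  generalize poleInv (γ - β) = v at *
  generalize poleInv (β - α) ^ i = s
  generalize poleInv (γ - α) ^ i = t
  simp only [map_sub] at h1 h2 h3 h4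
  have e1 : (β - γ) * coeff i (X * (f ^ (j + 1) * g ^ (k + 1))) =
      coeff i (X * (f ^ (j + 1) * g ^ k)) - coeff i (X * (f ^ j * g ^ (k + 1))) := by
    rw [← coeff_C_mul, ← map_sub, map_sub C]
    congr 1
    linear_combination (X * f ^ (j + 1) * g ^ k) * h2 - (X * f ^ j * g ^ (k + 1)) * h1
  have e2 : (β - γ) * coeff (j + 1) (X * (u ^ (k + 1) * s)) =
      coeff (j + 1) (X * (u ^ k * s)) - coeff j (X * (u ^ (k + 1) * s)) := by
    rw [← coeff_succ_X_mul j (X * (u ^ (k + 1) * s)), ← coeff_C_mul, ← map_sub, map_sub C]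
    congr 1
    linear_combination (X * u ^ k * s) * h3
  have e3 : (β - γ) * coeff (k + 1) (X * (t * v ^ (j + 1))) =
      coeff k (X * (t * v ^ (j + 1))) - coeff (k + 1) (X * (t * v ^ j)) := by
    rw [← coeff_succ_X_mul k (X * (t * v ^ (j + 1))), ← coeff_C_mul, ← map_sub, map_sub C]
    congr 1
    linear_combination (-X * v ^ j * t) * h4
  linear_combination e1 + e2 + e3

open PowerSeries in
lemma residueSum_single (α β γ : ℚ) (i : ℕ) :
    residueSum α β γ i 0 0 = if i = 1 then 1 else 0 := by
  simp [residueSum, coeff_X]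

/-- The residues sum to zero as soon as the total pole order is at least `2`; induction on that order
through `residueSum_step`. -/
lemma residueSum_eq_zero (m : ℕ) : ∀ {α β γ : ℚ} (_ : α ≠ β) (_ : β ≠ γ) (_ : α ≠ γ)
    (i j k : ℕ), i + j + k = m + 2 → residueSum α β γ i j k = 0 := by
  induction m with
  | zero =>
    have key : ∀ {α β γ : ℚ} (_ : α ≠ β) (_ : β ≠ γ) (_ : α ≠ γ),
        residueSum α β γ 2 0 0 = 0 ∧ residueSum α β γ 0 1 1 = 0 := by
      intro α β γ hab hbc hac
      refine ⟨by simp [residueSum_single], ?_⟩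
      have h := residueSum_step hab hbc hac 0 0 0
      rw [residueSum_cyclic α β γ 0 (0+1) 0, residueSum_cyclic α β γ 0 0 (0+1),
        residueSum_cyclic β γ α 0 (0+1) 0, residueSum_single, residueSum_single] at h
      simpa [sub_ne_zero.2 hbc] using h
    intro α β γ hab hbc hac i j k h
    obtain ⟨h1, h2⟩ := key hab hbc hac
    obtain ⟨h3, h4⟩ := key hbc hac.symm hab.symm
    obtain ⟨h5, h6⟩ := key hac.symm hab hbc.symm
    rw [← residueSum_cyclic] at h3 h4
    rw [← residueSum_cyclic, ← residueSum_cyclic] at h5 h6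
    have : i ≤ 2 := by omega
    have : j ≤ 2 := by omega
    interval_cases i <;> interval_cases j <;> 
      first
      | (obtain rfl : k = 0 := by omega
         assumption)
      | (obtain rfl : k = 1 := by omega
         assumption)
      | (obtain rfl : k = 2 := by omega
         assumption)
      | omega
  | succ m ih =>
    have key : ∀ {α β γ : ℚ} (_ : α ≠ β) (_ : β ≠ γ) (_ : α ≠ γ) (i j k : ℕ),
        i + (j + 1) + (k + 1) = m + 1 + 2 → residueSum α β γ i (j + 1) (k + 1) = 0 := by
      intro α β γ hab hbc hac i j k h
      have hs := residueSum_step hab hbc hac i j k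
      rw [ih hab hbc hac i (j + 1) k (by omega), ih hab hbc hac i j (k + 1) (by omega)] at hs
      simpa [sub_ne_zero.2 hbc] using hs
    intro α β γ hab hbc hac i j k h
    rcases j with _ | j
    · rcases k with _ | k
      · rw [residueSum_single, if_neg (by omega)]
      · rcases i with _ | i
        · rw [residueSum_cyclic, residueSum_cyclic, residueSum_single, if_neg (by omega)]
        · rw [residueSum_cyclic]
          exact key hbc hac.symm hab.symm 0 k i (by omega)
    · rcases k with _ | k
      · rcases i with _ | i
        · rw [residueSum_cyclic, residueSum_single, if_neg (by omega)]
        · rw [residueSum_cyclic, residueSum_cyclic]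
          exact key hac.symm hab hbc.symm 0 i j (by omega)
      · exact key hab hbc hac i j k h

/-! ### The Padé identity -/

/-- The form `W_N(u, v) = ∑_{i + j = N} C(N + i, N) C(N + j, N) u ^ i v ^ j`, the coefficient of `s ^ N`
in `((1 - u s) (1 - v s)) ^ (-(N + 1))`. -/
def padeForm {R : Type*} [CommSemiring R] (N : ℕ) (u v : R) : R :=
  ∑ ij ∈ Finset.HasAntidiagonal.antidiagonal N,
    ((N + ij.1).choose N : R) * ((N + ij.2).choose N : R) * u ^ ij.1 * v ^ ij.2

open PowerSeries in
lemma poleInv_pow {u : ℚ} (hu : u ≠ 0) (N : ℕ) :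
    poleInv u ^ (N + 1) = C (u⁻¹ ^ (N + 1)) *
      rescale (-u⁻¹) (mk fun m => ((N + m).choose N : ℚ)) := by
  have h1 := poleInv_mul hu
  have h2 := congrArg (rescale (-u⁻¹)) (mk_add_choose_mul_one_sub_pow_eq_one ℚ N)
  have h3 : C u⁻¹ * (C u + X) = rescale (-u⁻¹) (1 - X : PowerSeries ℚ) := by
    rw [mul_add, ← map_mul, inv_mul_cancel₀ hu, map_sub, rescale_X]
    simp
  simp only [map_mul, map_pow, ← h3, map_one] at h2
  rw [map_pow]
  generalize (rescale (-u⁻¹)) (mk fun m => ((N + m).choose N : ℚ)) = S at *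
  calc poleInv u ^ (N + 1)
      = poleInv u ^ (N + 1) * (S * (C u⁻¹ * (C u + X)) ^ (N + 1)) := by rw [h2, mul_one]
    _ = (poleInv u * (C u + X)) ^ (N + 1) * (C u⁻¹ ^ (N + 1) * S) := by
      simp only [mul_pow]; ring
    _ = _ := by rw [h1]; ring

open PowerSeries in
/-- The residue at a pole of order `N + 1` in terms of `padeForm`, where `u` and `v` are the
differences to the other two poles, also of order `N + 1`. -/
lemma coeff_poleInv {u v : ℚ} (hu : u ≠ 0) (hv : v ≠ 0) (N : ℕ) :
    (u * v) ^ (2 * N + 1) * coeff (N + 1) (X * (poleInv u ^ (N + 1) * poleInv v ^ (N + 1))) =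
      (-1) ^ N * padeForm N u v := by
  rw [coeff_succ_X_mul, poleInv_pow hu, poleInv_pow hv, mul_mul_mul_comm, ← map_mul, coeff_C_mul,
    coeff_mul, padeForm, Finset.mul_sum, Finset.mul_sum, Finset.mul_sum]
  refine Eq.trans ?_ Finset.Nat.sum_antidiagonal_swap
  refine Finset.sum_congr rfl fun ij h => ?_
  obtain ⟨i, j⟩ := ij
  obtain rfl : i + j = N := by simpa using h
  simp only [coeff_rescale, coeff_mk, Prod.swap]
  have e1 : ∀ w : ℚ, w ≠ 0 → ∀ i j : ℕ,
      w ^ (2 * (i + j) + 1) * w⁻¹ ^ (i + j + 1) * (-w⁻¹) ^ i = (-1) ^ i * w ^ j := by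
    intro w hw i j
    rw [neg_pow, inv_pow, inv_pow]
    field_simp
    ring
  have e2 := e1 u hu i j
  have e3 := e1 v hv j i
  rw [add_comm j i] at e3
  generalize (((i + j + i).choose (i + j) : ℕ) : ℚ) = s
  generalize (((i + j + j).choose (i + j) : ℕ) : ℚ) = t
  rw [mul_pow]
  calc _ = s * t * (u ^ (2 * (i + j) + 1) * u⁻¹ ^ (i + j + 1) * (-u⁻¹) ^ i) *
        (v ^ (2 * (i + j) + 1) * v⁻¹ ^ (i + j + 1) * (-v⁻¹) ^ j) := by ring
    _ = _ := by rw [e2, e3]; ring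

lemma padeForm_neg (N : ℕ) (u v : ℚ) : padeForm N (-u) (-v) = (-1) ^ N * padeForm N u v := by
  unfold padeForm
  rw [Finset.mul_sum]
  refine Finset.sum_congr rfl fun ij h => ?_
  obtain ⟨i, j⟩ := ij
  obtain rfl : i + j = N := by simpa using h
  simp only [neg_pow u, neg_pow v, pow_add]
  ring

lemma padeForm_comm (N : ℕ) (u v : ℚ) : padeForm N u v = padeForm N v u := by
  unfold padeForm
  refine Eq.trans ?_ Finset.Nat.sum_antidiagonal_swap
  refine Finset.sum_congr rfl fun ij h => ?_
  simp only [Prod.swap]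
  ring

/-- The vanishing sum of residues at the poles `0`, `p`, `p + q`, each of order `N + 1`. -/
lemma pade_identity_rat {p q : ℚ} (hp : 0 < p) (hq : 0 < q) (N : ℕ) :
    p ^ (2 * N + 1) * padeForm N q (p + q) + (-1) ^ N * q ^ (2 * N + 1) * padeForm N p (p + q) =
      (p + q) ^ (2 * N + 1) * padeForm N p (-q) := by
  have hr : 0 < p + q := by positivity
  have h := residueSum_eq_zero (3 * N + 1) (α := 0) (β := p) (γ := p + q) hp.ne
    (by linarith) hr.ne (N + 1) (N + 1) (N + 1) (by omega)
  have e1 : (0 : ℚ) - p = -p := by ring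
  have e2 : (0 : ℚ) - (p + q) = -(p + q) := by ring
  have e3 : p - (p + q) = -q := by ring
  have e4 : p - 0 = p := by ring
  have e5 : p + q - 0 = p + q := by ring
  have e6 : p + q - p = q := by ring
  rw [residueSum, e1, e2, e3, e4, e5, e6] at h
  have h1 := coeff_poleInv (neg_ne_zero.2 hp.ne') (neg_ne_zero.2 hr.ne') N
  have h2 := coeff_poleInv (neg_ne_zero.2 hq.ne') hp.ne' N
  have h3 := coeff_poleInv hr.ne' hq.ne' N
  rw [padeForm_neg] at h1
  rw [padeForm_comm] at h2 h3
  have o : Odd (2 * N + 1) := ⟨N, rfl⟩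
  have hs : ((-1 : ℚ) ^ N) * (-1) ^ N = 1 := by rw [← mul_pow]; simp
  rw [neg_mul_neg, mul_pow] at h1
  rw [neg_mul, o.neg_pow, mul_pow] at h2
  rw [mul_pow] at h3
  generalize PowerSeries.coeff (R := ℚ) _ _ = c1 at h h1
  generalize PowerSeries.coeff (R := ℚ) _ _ = c2 at h h2
  generalize PowerSeries.coeff (R := ℚ) _ _ = c3 at h h3
  generalize padeForm N p (p + q) = w1 at *
  generalize padeForm N p (-q) = w2 at *
  generalize padeForm N q (p + q) = w3 at *
  generalize p ^ (2 * N + 1) = x at *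
  generalize q ^ (2 * N + 1) = y at *
  generalize (p + q) ^ (2 * N + 1) = z at *
  generalize (-1 : ℚ) ^ N = s at *
  linear_combination (s * x * y * z) * h - s * y * h1 + s * z * h2 - s * x * h3 -
    (s * y * w1 - z * w2 + x * w3) * hs

/-- For odd `N` all quantities on the left and in the first term on the right are natural numbers, so
only the multiple of `(p + q) ^ (2 * N + 1)` may be negative. -/
lemma pade_identity {p q : ℕ} (hp : 0 < p) (hq : 0 < q) {N : ℕ} (hN : Odd N) :
    (p : ℤ) ^ (2 * N + 1) * (padeForm N q (p + q) : ℕ) =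
      q ^ (2 * N + 1) * (padeForm N p (p + q) : ℕ) +
      (p + q) ^ (2 * N + 1) * padeForm N (p : ℤ) (-q) := by
  have h := pade_identity_rat (p := p) (q := q) (by exact_mod_cast hp) (by exact_mod_cast hq) N
  rw [hN.neg_one_pow] at h
  have h' : (p : ℚ) ^ (2 * N + 1) * (padeForm N q (p + q) : ℕ) =
      q ^ (2 * N + 1) * (padeForm N p (p + q) : ℕ) +
      (p + q) ^ (2 * N + 1) * (padeForm N (p : ℤ) (-q) : ℤ) := by
    simp only [padeForm] at h ⊢
    push_cast
    linear_combination h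
  exact_mod_cast h'

lemma padeForm_pos {u v : ℕ} (hu : 0 < u) (hv : 0 < v) (N : ℕ) : 0 < padeForm N u v := by
  unfold padeForm
  refine Finset.sum_pos (fun ij _ => ?_) ⟨(0, N), by simp⟩
  have := Nat.choose_pos (Nat.le_add_right N ij.1)
  have := Nat.choose_pos (Nat.le_add_right N ij.2)
  simp only [Nat.cast_id]
  positivity

lemma padeForm_le {u v r : ℕ} (hu : u ≤ r) (hv : v ≤ r) (N : ℕ) :
    padeForm N u v ≤ 32 ^ N * r ^ N := by
  have hterm : ∀ ij ∈ Finset.HasAntidiagonal.antidiagonal N,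
      ((N + ij.1).choose N : ℕ) * ((N + ij.2).choose N : ℕ) * u ^ ij.1 * v ^ ij.2 ≤
        16 ^ N * r ^ N := by
    rintro ⟨i, j⟩ h
    have hij : i + j = N := by simpa using h
    have h1 : (N + i).choose N ≤ 4 ^ N := (Nat.choose_le_two_pow _ _).trans <| by
      rw [show 4 = 2 ^ 2 by norm_num, ← pow_mul]
      exact Nat.pow_le_pow_right (by norm_num) (by omega)
    have h2 : (N + j).choose N ≤ 4 ^ N := (Nat.choose_le_two_pow _ _).trans <| by
      rw [show 4 = 2 ^ 2 by norm_num, ← pow_mul]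
      exact Nat.pow_le_pow_right (by norm_num) (by omega)
    calc (N + i).choose N * (N + j).choose N * u ^ i * v ^ j
        ≤ 4 ^ N * 4 ^ N * r ^ i * r ^ j := by gcongr
      _ = 16 ^ N * r ^ N := by
        rw [← mul_pow, mul_assoc, ← pow_add, hij]
        norm_num
  have h := Finset.sum_le_card_nsmul _ _ _ hterm
  simp only [Finset.Nat.card_antidiagonal, smul_eq_mul] at h
  refine (show padeForm N u v ≤ _ by simpa [padeForm] using h).trans ?_
  rw [show 32 = 2 * 16 by norm_num, mul_pow, mul_assoc]
  exact Nat.mul_le_mul_right _ (Nat.lt_two_pow_self)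

/-! ### The gap principle -/

/-- Elimination of `p ^ n` and `q ^ n`, where `n = 2 * N + 1`, between the Padé identity and a second
relation among `p ^ n`, `q ^ n`, `(p + q) ^ n` whose coefficients are the fractions `E0 / D0`,
`E1 / D1`, `E2 / D2`. -/
lemma pow_dvd_combination {p q : ℕ} (hp : 0 < p) (hq : 0 < q)
    (hcop : Nat.Coprime p (p + q)) {N : ℕ} (hN : Odd N) {E0 D0 E1 D1 E2 D2 : ℕ}
    (h : p ^ (2 * N + 1) * E0 * D1 * D2 + q ^ (2 * N + 1) * E1 * D0 * D2 =
      (p + q) ^ (2 * N + 1) * E2 * D0 * D1) :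
    (p + q) ^ (2 * N + 1) ∣
      D2 * (E0 * D1 * padeForm N p (p + q) + E1 * D0 * padeForm N q (p + q)) := by
  have hc : Nat.Coprime ((p + q) ^ (2 * N + 1)) (p ^ (2 * N + 1)) := (hcop.pow _ _).symm
  refine hc.dvd_of_dvd_mul_left ?_
  have hid := pade_identity hp hq hN
  zify at h ⊢
  refine ⟨(padeForm N p (p + q) : ℕ) * E2 * D0 * D1 + D2 * E1 * D0 * padeForm N (p : ℤ) (-q), ?_⟩
  linear_combination (padeForm N p (p + q) : ℕ) * h + D2 * E1 * D0 * hid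

/-- `a ^ (X - m)` as the quotient of its numerator by its denominator: the two truncated
subtractions are the positive and negative parts of the exponent. -/
lemma mul_pow_sub (a X m : ℕ) : a ^ X * a ^ (m - X) = a ^ m * a ^ (X - m) := by
  rw [← pow_add, ← pow_add]
  congr 1
  omega

/-- Two solutions cannot be too close to being `n`-th powers of each other. Here `d0 = |X - n x|` and
`d1 = |Y - n y|`, and the inequality comes from comparing exponents of `c` after bounding `a` and `b`
by `c ^ (a + b)` and `2 * 32 ^ N` by `c ^ (6 * N)`. -/
lemma gap {a b c : ℕ} (ha : 1 < a) (hb : 1 < b) (hc : 1 < c) (hac : Nat.Coprime a c)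
    {x y z X Y Z : ℕ} (h : a ^ x + b ^ y = c ^ z) (H : a ^ X + b ^ Y = c ^ Z)
    {N : ℕ} (hN : Odd N) {n : ℕ} (hn : n = 2 * N + 1) {d0 d1 : ℕ}
    (hd0 : d0 = (X - n * x) + (n * x - X)) (hd1 : d1 = (Y - n * y) + (n * y - Y))
    (hZ : n * z ≤ Z) :
    z * (N + 1) ≤ (a + b) * (d0 + d1) + 6 * N := by
  have hp : 0 < a ^ x := by positivity
  have hq : 0 < b ^ y := by positivity
  have hA := padeForm_le (u := a ^ x) (v := a ^ x + b ^ y) (r := c ^ z) (by omega) h.le N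
  have hB := padeForm_le (u := b ^ y) (v := a ^ x + b ^ y) (r := c ^ z) (by omega) h.le N
  have hA' := padeForm_pos hp (add_pos hp hq) N
  have hdvd := pow_dvd_combination hp hq (by rw [h]; exact hac.pow _ _) hN
    (E0 := a ^ (X - n * x)) (D0 := a ^ (n * x - X)) (E1 := b ^ (Y - n * y))
    (D1 := b ^ (n * y - Y)) (E2 := c ^ (Z - n * z)) (D2 := 1) (by
      have e0 := mul_pow_sub a X (n * x)
      have e1 := mul_pow_sub b Y (n * y)
      have e2 : c ^ Z = c ^ (n * z) * c ^ (Z - n * z) := by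
        rw [← pow_add, Nat.add_sub_cancel' hZ]
      rw [← hn, h, ← pow_mul, ← pow_mul, ← pow_mul, mul_comm x, mul_comm y, mul_comm z,
        ← e0, ← e1, ← e2, ← H]
      ring)
  have hle := Nat.le_of_dvd (by positivity) hdvd
  rw [h] at hle hA hB
  rw [← hn] at hle
  have hac' : a ≤ c ^ (a + b) := by
    have := Nat.lt_pow_self hc (n := a + b)
    omega
  have hbc' : b ≤ c ^ (a + b) := by
    have := Nat.lt_pow_self hc (n := a + b)
    omega
  have hmix : ∀ e f : ℕ, e ≤ d0 → f ≤ d1 → a ^ e * b ^ f ≤ c ^ ((a + b) * (d0 + d1)) := by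
    intro e f he hf
    calc a ^ e * b ^ f ≤ (c ^ (a + b)) ^ e * (c ^ (a + b)) ^ f := by gcongr
      _ = c ^ ((a + b) * (e + f)) := by rw [← pow_add, ← pow_mul]
      _ ≤ _ := by gcongr; omega
  have hab0 := hmix (X - n * x) (n * y - Y) (by omega) (by omega)
  have hab1 := hmix (n * x - X) (Y - n * y) (by omega) (by omega)
  rw [mul_comm] at hab1
  have h32 : 2 * 32 ^ N ≤ c ^ (6 * N) := by
    have : 2 ^ 1 ≤ 2 ^ N := Nat.pow_le_pow_right (by norm_num) hN.pos
    calc 2 * 32 ^ N ≤ 2 ^ N * 32 ^ N := by gcongr; simpa using this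
      _ = 2 ^ (6 * N) := by rw [← mul_pow, pow_mul]; norm_num
      _ ≤ c ^ (6 * N) := Nat.pow_le_pow_left hc _
  have hfin : c ^ (z * n) ≤ c ^ ((a + b) * (d0 + d1) + 6 * N + z * N) := by
    calc c ^ (z * n) = (c ^ z) ^ n := pow_mul _ _ _
      _ ≤ _ := hle
      _ ≤ 1 * (c ^ ((a + b) * (d0 + d1)) * (32 ^ N * (c ^ z) ^ N) +
          c ^ ((a + b) * (d0 + d1)) * (32 ^ N * (c ^ z) ^ N)) := by gcongr
      _ = c ^ ((a + b) * (d0 + d1)) * (2 * 32 ^ N) * c ^ (z * N) := by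
        rw [pow_mul c z N]; ring
      _ ≤ c ^ ((a + b) * (d0 + d1)) * c ^ (6 * N) * c ^ (z * N) := by gcongr
      _ = _ := by simp only [pow_add]
  have := (Nat.pow_le_pow_iff_right hc).1 hfin
  subst hn
  nlinarith

/-! ### Pigeonhole on directions -/

/-- If `w / z` and `W / Z` agree up to `1 / T` and `n` is `Z / z` up to `4`, then `|W - n w|` is at
most `4 c z + Z / T`. -/
lemma close_directions {T c z Z n i w W : ℕ} (hz : 0 < z) (hZ : 0 < Z) (hle : n * z ≤ Z)
    (hlt : Z < (n + 4) * z) (hw : w ≤ c * z) (h1 : T * w / z = i) (h2 : T * W / Z = i) :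
    T * ((W - n * w) + (n * w - W)) ≤ 4 * T * c * z + Z := by
  have hi : i ≤ T * c := by
    rw [← h1]
    refine Nat.div_le_of_le_mul ?_
    calc T * w ≤ T * (c * z) := Nat.mul_le_mul_left _ hw
      _ = _ := by ring
  have l1 := Nat.div_mul_le_self (T * w) z
  have l2 := Nat.lt_div_mul_add (a := T * w) hz
  have l3 := Nat.div_mul_le_self (T * W) Z
  have l4 := Nat.lt_div_mul_add (a := T * W) hZ
  rw [h1] at l1 l2
  rw [h2] at l3 l4
  have m1 : n * (i * z) ≤ n * (T * w) := Nat.mul_le_mul_left _ l1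
  have m2 : n * (T * w) ≤ n * (i * z + z) := Nat.mul_le_mul_left _ l2.le
  have m3 : i * (n * z) ≤ i * Z := Nat.mul_le_mul_left _ hle
  have m4 : i * Z ≤ i * ((n + 4) * z) := Nat.mul_le_mul_left _ hlt.le
  have m5 : i * z ≤ T * c * z := Nat.mul_le_mul_right _ hi
  rcases le_total W (n * w) with hW | hW
  · rw [Nat.sub_eq_zero_of_le hW, zero_add, Nat.mul_sub, Nat.sub_le_iff_le_add]
    linarith [Nat.zero_le (4 * T * c * z)]
  · rw [Nat.sub_eq_zero_of_le hW, add_zero, Nat.mul_sub, Nat.sub_le_iff_le_add]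
    linarith

theorem stmt_0 (a b c : ℕ) (ha : 0 < a) (hb : 0 < b) (hc : 0 < c)
    (hab : Nat.Coprime a b) (hac : Nat.Coprime a c) (hbc : Nat.Coprime b c)
    (hmin : 1 < min a (min b c)) :
    {p : ℕ × ℕ × ℕ | 0 < p.1 ∧ 0 < p.2.1 ∧ 0 < p.2.2 ∧
      a ^ p.1 + b ^ p.2.1 = c ^ p.2.2}.Finite := by
  obtain ⟨ha1, hb1, hc1⟩ : 1 < a ∧ 1 < b ∧ 1 < c := by simpa using hmin
  have hexp : ∀ {d w z : ℕ}, 1 < d → d ^ w ≤ c ^ z → w ≤ c * z := by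
    intro d w z hd h
    refine (Nat.pow_le_pow_iff_right (a := 2) (by norm_num)).1 ?_
    calc 2 ^ w ≤ d ^ w := Nat.pow_le_pow_left hd _
      _ ≤ c ^ z := h
      _ ≤ (2 ^ c) ^ z := Nat.pow_le_pow_left Nat.lt_two_pow_self.le _
      _ = _ := (pow_mul _ _ _).symm
  obtain ⟨L, hL⟩ : ∃ L, L = a + b := ⟨_, rfl⟩
  have hL0 : 0 < L := by omega
  obtain ⟨T, hT⟩ : ∃ T, T = 8 * L := ⟨_, rfl⟩
  have hT0 : 0 < T := by omega
  set S := {p : ℕ × ℕ × ℕ | 0 < p.1 ∧ 0 < p.2.1 ∧ 0 < p.2.2 ∧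
      a ^ p.1 + b ^ p.2.1 = c ^ p.2.2} with hS
  have hx : ∀ p ∈ S, p.1 ≤ c * p.2.2 ∧ p.2.1 ≤ c * p.2.2 := by
    rintro ⟨x, y, z⟩ ⟨-, -, -, h⟩
    simp only at h ⊢
    exact ⟨hexp ha1 (by omega), hexp hb1 (by omega)⟩
  have hbdd : ∀ B : ℕ, ∀ s ⊆ S, (∀ p ∈ s, p.2.2 ≤ B) → s.Finite := by
    intro B s hs h
    refine ((Set.finite_Iic (c * B)).prod ((Set.finite_Iic (c * B)).prod
      (Set.finite_Iic B))).subset ?_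
    intro p hp
    have h1 := hx p (hs hp)
    have h2 := Nat.mul_le_mul_left c (h p hp)
    exact ⟨h1.1.trans h2, h1.2.trans h2, h p hp⟩
  -- The cones are the fibres of `(x / z, y / z)` rounded down to multiples of `1 / T`; the factor
  -- `T = 8 * L` makes the contribution of `Z / T` to the gap inequality about half of `N * z`.
  refine Set.Finite.of_finite_fibers
    (fun p => (T * p.1 / p.2.2, T * p.2.1 / p.2.2)) ?_ ?_
  · refine ((Set.finite_Iic (T * c)).prod (Set.finite_Iic (T * c))).subset ?_
    rintro _ ⟨p, hp, rfl⟩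
    obtain ⟨h1, h2⟩ := hx p hp
    refine ⟨Nat.div_le_of_le_mul ?_, Nat.div_le_of_le_mul ?_⟩
    · calc T * p.1 ≤ T * (c * p.2.2) := Nat.mul_le_mul_left _ h1
        _ = _ := by ring
    · calc T * p.2.1 ≤ T * (c * p.2.2) := Nat.mul_le_mul_left _ h2
        _ = _ := by ring
  · rintro ⟨i, j⟩ hij
    by_cases hbig : ∃ p ∈ S ∩ (fun p => (T * p.1 / p.2.2, T * p.2.1 / p.2.2)) ⁻¹' {(i, j)},
        24 ≤ p.2.2
    swap
    · push Not at hbig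
      exact hbdd 24 _ Set.inter_subset_left fun p hp => (hbig p hp).le
    obtain ⟨⟨x, y, z⟩, ⟨hxS, hfib⟩, hz⟩ := hbig
    refine hbdd (z * (2 * (32 * L * c) + 9)) _ Set.inter_subset_left ?_
    rintro ⟨X, Y, Z⟩ ⟨hXS, hFib⟩
    simp only [Set.mem_preimage, Set.mem_singleton_iff, Prod.mk.injEq] at hfib hFib hz ⊢
    have hxz := hx _ hxS
    obtain ⟨-, -, hz0, h⟩ := hxS
    obtain ⟨-, -, hZ0, H⟩ := hXS
    simp only at hz0 h hZ0 H hxz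
    by_contra! hlarge
    -- `n` is the largest integer at most `Z / z` congruent to `3` modulo `4`, so that `N` is odd.
    obtain ⟨k, hk⟩ : ∃ k, k = (Z / z - 3) / 4 := ⟨_, rfl⟩
    obtain ⟨N, hN⟩ : ∃ N, N = 2 * k + 1 := ⟨_, rfl⟩
    obtain ⟨n, hn⟩ : ∃ n, n = 2 * N + 1 := ⟨_, rfl⟩
    obtain ⟨M, hM⟩ : ∃ M, M = 32 * L * c := ⟨_, rfl⟩
    rw [← hM] at hlarge
    have hq : 2 * M + 9 ≤ Z / z := by
      rw [Nat.le_div_iff_mul_le hz0, mul_comm]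
      exact hlarge.le
    have hnle : n ≤ Z / z := by omega
    have hnlt : Z / z < n + 4 := by omega
    have hNbig : M + 1 ≤ N := by omega
    rw [Nat.le_div_iff_mul_le hz0] at hnle
    rw [Nat.div_lt_iff_lt_mul hz0] at hnlt
    have c0 := close_directions hz0 hZ0 hnle hnlt hxz.1 hfib.1 hFib.1
    have c1 := close_directions hz0 hZ0 hnle hnlt hxz.2 hfib.2 hFib.2
    have hg := gap ha1 hb1 hc1 hac h H (N := N) ⟨k, hN⟩ hn rfl rfl hnle
    rw [← hL] at hg
    generalize (X - n * x) + (n * x - X) = d0 at *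
    generalize (Y - n * y) + (n * y - Y) = d1 at *
    have hTM : 4 * T * c * z = M * z := by rw [hT, hM]; ring
    rw [hTM, hT] at c0 c1
    have h8 : 8 * (z * (N + 1)) ≤ 2 * (M * z + Z) + 48 * N := by linarith
    have hz24 : 24 * N ≤ z * N := Nat.mul_le_mul_right _ hz
    have hMN : (M + 1) * z ≤ N * z := Nat.mul_le_mul_right _ hNbig
    rw [hn] at hnlt
    linarith
end

section
/- Let a, b, c be coprime positive integers with min{a,b,c} > 1 and c odd. Then every solution (x,y,z) in positive integers of a^x + b^y = c^z satisfies z < (1/2)·a·b. -/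
/-!
Write `a ^ x * b ^ y = E * W ^ 2`, where `E` is `1`, `a`, `b` or `a * b` according to the parities of
`x` and `y`. In `ℤ[√-E]` the element `Γ = a ^ x - b ^ y + 2 W √-E` has norm `c ^ (2 * z)`, and its
coordinates are coprime to `c`. Choosing `s` with `Γ.re ≡ s * Γ.im` modulo `c ^ (2 * z)`, the
elements of norm `c ^ i` congruent to zero under `√-E ↦ -s` modulo `c ^ i` are the generators of the
`i`-th powers of one ideal of norm `c`. If `n` is the order of its class and `γ` generates the
`n`-th power, then `2 * z = n * k` and `Γ = ± γ ^ k` (`exists_pow_eq`). It remains to bound `n`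
and `k`.

The order `n` is at most the number of reduced forms of determinant `E`, because the first `n`
powers of the ideal reduce to distinct forms (`order_le_redCount`). Counting the admissible middle
coefficients for each leading coefficient gives `4 n < 3 E`, and `18 n < 5 E` when `E ≡ 3`
modulo `9` and `E ≥ 12` (`order_bounds`).

The exponent `k` is bounded by an elementary form of the primitive divisor theorem. Since
`a ^ x + b ^ y < a ^ x * b ^ y`, the imaginary part of `γ ^ k` is so large that it cannot be built
from the primes dividing `E` or an earlier imaginary part `(γ ^ j).im` (`step_contra`). The only
exception is `q = 3`, `E ≡ 3` modulo `9`, which costs a factor `3`. All primes dividing `2 * W` but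
not `E` divide `(γ ^ t).im` for `t` equal to twice the product of the numbers
`(p ± 1) / 2` over the odd ones (`exists_rank`), whence `k ≤ t` or `k ≤ 3 * t` (`index_bound`).

Multiplying the two bounds gives `2 * z < a * b`; exactly one of `a`, `b` is even, which supplies
the factor `2`. Only `a = 3`, `b = 2` escapes, and there `no_cube` excludes the single exponent
`z = 3` left over.
-/

/-! ### Elements of norm a power of `c` over a fixed root -/

/-- The elements `ξ` of `ℤ[√-E]` lying in the kernel of the reduction `√-E ↦ -s` modulo `c ^ i`.
When `s ^ 2 ≡ -E` modulo `c ^ i`, this kernel is the `i`-th power of the ideal of norm `c`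
attached to the root `s`. -/
def InKer {E : ℕ} (c : ℕ) (s : ℤ) (i : ℕ) (ξ : ℤ√(-(E : ℤ))) : Prop :=
  (c : ℤ) ^ i ∣ ξ.re - s * ξ.im

theorem norm_comp {E : ℕ} (ξ : ℤ√(-(E : ℤ))) : ξ.norm = ξ.re ^ 2 + E * ξ.im ^ 2 := by
  rw [Zsqrtd.norm_def]; ring

/-- Division in the chain of ideals cut out by `InKer`: an element of norm `c ^ m` over the root `s`
is divisible by any element of norm `c ^ n`, `n ≤ m`, over the same root. Both are generators of
powers of one ideal, which need not be prime. -/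
theorem div_step {E c : ℕ} (hc : 0 < c) {s : ℤ} {n m : ℕ}
    (hnm : n ≤ m) (hs : (c : ℤ) ^ m ∣ s ^ 2 + E) {Γ γ : ℤ√(-(E : ℤ))}
    (hΓN : Γ.norm = (c : ℤ) ^ m) (hΓ : InKer c s m Γ)
    (hγN : γ.norm = (c : ℤ) ^ n) (hγ : InKer c s n γ) :
    ∃ Γ' : ℤ√(-(E : ℤ)), Γ = γ * Γ' ∧ Γ'.norm = (c : ℤ) ^ (m - n) ∧
      InKer c s (m - n) Γ' := by
  have hc0 : (c : ℤ) ≠ 0 := by exact_mod_cast hc.ne'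
  have hcn0 : (c : ℤ) ^ n ≠ 0 := pow_ne_zero _ hc0
  unfold InKer at *
  have hdn : (c : ℤ) ^ n ∣ (c : ℤ) ^ m := pow_dvd_pow _ hnm
  -- `Γ * conj γ` is divisible by `c ^ n`
  have h1 : (c : ℤ) ^ n ∣ Γ.re * γ.re + E * Γ.im * γ.im := by
    have e : Γ.re * γ.re + E * Γ.im * γ.im = Γ.re * (γ.re - s * γ.im)
      + s * γ.im * (Γ.re - s * Γ.im) + (s ^ 2 + E) * (Γ.im * γ.im) := by ring
    rw [e]
    exact dvd_add (dvd_add (hγ.mul_left _) ((hdn.trans hΓ).mul_left _)) ((hdn.trans hs).mul_right _)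
  have h2 : (c : ℤ) ^ n ∣ Γ.im * γ.re - Γ.re * γ.im := by
    have e : Γ.im * γ.re - Γ.re * γ.im = Γ.im * (γ.re - s * γ.im)
      - γ.im * (Γ.re - s * Γ.im) := by ring
    rw [e]
    exact dvd_sub (hγ.mul_left _) ((hdn.trans hΓ).mul_left _)
  obtain ⟨p, hp⟩ := h1
  obtain ⟨q, hq⟩ := h2
  rw [norm_comp] at hΓN hγN
  have hre : Γ.re = γ.re * p - E * γ.im * q := by
    apply mul_left_cancel₀ hcn0
    linear_combination (-Γ.re) * hγN + γ.re * hp - E * γ.im * hq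
  have him : Γ.im = γ.re * q + γ.im * p := by
    apply mul_left_cancel₀ hcn0
    linear_combination (-Γ.im) * hγN + γ.re * hq + γ.im * hp
  have hmul : Γ = γ * ⟨p, q⟩ := by
    ext
    · rw [hre, Zsqrtd.re_mul]; ring
    · rw [him, Zsqrtd.im_mul]
  have hm : (c : ℤ) ^ m = (c : ℤ) ^ n * (c : ℤ) ^ (m - n) := by
    rw [← pow_add]; congr 1; omega
  refine ⟨⟨p, q⟩, hmul, ?_, ?_⟩
  · rw [norm_comp]
    apply mul_left_cancel₀ hcn0
    rw [← hm, ← hΓN, hre, him, ← hγN]; ring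
  · rw [← mul_dvd_mul_iff_left hcn0, ← hm]
    have e : (c : ℤ) ^ n * (p - s * q) = (γ.re + s * γ.im) * (Γ.re - s * Γ.im)
       + (s ^ 2 + E) * (γ.im * (γ.im * (p - s * q) + q * (γ.re + s * γ.im))) := by
      rw [← hγN, hre, him]; ring
    exact e ▸ dvd_add (hΓ.mul_left _) (hs.mul_right _)

/-- An element `γ` of least positive level `n` generates all others: every `Γ` of norm `c ^ m` over the
root `s` is a power of `γ` up to an element of norm one. So `n` is the order of the class of the
ideal of norm `c` attached to `s`. -/
theorem exists_pow_eq {E c : ℕ} (hc : 0 < c) {s : ℤ} {n : ℕ} {γ : ℤ√(-(E : ℤ))} (hn : 0 < n)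
    (hγN : γ.norm = (c : ℤ) ^ n) (hγ : InKer c s n γ)
    (hmin : ∀ i, 0 < i → i < n → ∀ ξ : ℤ√(-(E : ℤ)), ξ.norm = (c : ℤ) ^ i → ¬ InKer c s i ξ)
    (m : ℕ) : (c : ℤ) ^ m ∣ s ^ 2 + E → ∀ Γ : ℤ√(-(E : ℤ)), Γ.norm = (c : ℤ) ^ m →
      InKer c s m Γ → ∃ (k : ℕ) (ε : ℤ√(-(E : ℤ))), m = n * k ∧ ε.norm = 1 ∧ Γ = ε * γ ^ k := by
  induction m using Nat.strong_induction_on with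
  | _ m ih =>
    intro hs Γ hΓN hΓ
    rcases Nat.eq_zero_or_pos m with rfl | hm
    · exact ⟨0, Γ, by simp, by simpa using hΓN, by simp⟩
    have hnm : n ≤ m := by
      by_contra h
      exact hmin m hm (by omega) Γ hΓN hΓ
    obtain ⟨Γ', h1, h2, h3⟩ := div_step hc hnm hs hΓN hΓ hγN hγ
    obtain ⟨k, ε, hk, hε, hΓ'⟩ := ih (m - n) (by omega)
      ((pow_dvd_pow _ (by omega)).trans hs) Γ' h2 h3
    refine ⟨k + 1, ε, ?_, hε, ?_⟩
    · rw [mul_add, ← hk]; omega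
    · rw [h1, hΓ', pow_succ]; ring

/-! ### Gauss reduction of the associated lattices -/

/-- Reduction of the quadratic form `ξ ↦ N(ξ) / c ^ i` on the lattice `InKer c s i`: there is a
basis `l, m` with `α * m = (β + √-E) * l`, in which this form is `α X² + 2 β X Y + δ Y²`. -/
structure RedBasis (E c : ℕ) (s : ℤ) (i : ℕ) (α β δ : ℤ) (l m : ℤ√(-(E : ℤ))) : Prop where
  pos : 0 < α
  disc : α * δ = β ^ 2 + E
  norm : l.norm = α * (c : ℤ) ^ i
  /-- `α * m = (β + √-E) * l` -/
  re : α * m.re = β * l.re - E * l.im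
  im : α * m.im = β * l.im + l.re
  span : ∀ ξ : ℤ√(-(E : ℤ)), InKer c s i ξ ↔
    ∃ x y : ℤ, ξ.re = x * l.re + y * m.re ∧ ξ.im = x * l.im + y * m.im

/-- The substitution `X ↦ X - k Y`, which translates `β` by `k * α`. -/
theorem RedBasis.shift {E c : ℕ} {s : ℤ} {i : ℕ} {α β δ : ℤ} {l m : ℤ√(-(E : ℤ))}
    (h : RedBasis E c s i α β δ l m) (k : ℤ) :
    RedBasis E c s i α (β + k * α) (δ + 2 * k * β + k ^ 2 * α) l ⟨m.re + k * l.re, m.im + k * l.im⟩ where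
  pos := h.pos
  disc := by linear_combination h.disc
  norm := h.norm
  re := by linear_combination h.re
  im := by linear_combination h.im
  span ξ := by
    rw [h.span]
    constructor
    · rintro ⟨x, y, h1, h2⟩
      exact ⟨x - k * y, y, by rw [h1]; ring, by rw [h2]; ring⟩
    · rintro ⟨x, y, h1, h2⟩
      exact ⟨x + k * y, y, by rw [h1]; ring, by rw [h2]; ring⟩

/-- The substitution exchanging the outer coefficients of the form. -/
theorem RedBasis.swap {E c : ℕ} (hE : 0 < E) {s : ℤ} {i : ℕ} {α β δ : ℤ} {l m : ℤ√(-(E : ℤ))}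
    (h : RedBasis E c s i α β δ l m) :
    RedBasis E c s i δ (-β) α m (-l) := by
  have hα := h.pos.ne'
  have hE' : (0 : ℤ) < E := by exact_mod_cast hE
  have hl := h.norm
  rw [norm_comp] at hl
  refine ⟨?_, ?_, ?_, ?_, ?_, ?_⟩
  · have h1 := h.pos
    have h2 := h.disc
    by_contra hcon
    push Not at hcon
    nlinarith [sq_nonneg β]
  · linear_combination h.disc
  · rw [norm_comp]
    apply mul_left_cancel₀ (mul_ne_zero hα hα)
    linear_combination (α * m.re + β * l.re - E * l.im) * h.re
      + E * (α * m.im + β * l.im + l.re) * h.im + (β ^ 2 + E) * hl - α * c ^ i * h.disc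
  · apply mul_left_cancel₀ hα
    simp only [Zsqrtd.re_neg]
    linear_combination β * h.re - E * h.im * (-1) * (1) - l.re * h.disc
  · apply mul_left_cancel₀ hα
    simp only [Zsqrtd.im_neg]
    linear_combination β * h.im - h.re - l.im * h.disc
  · intro ξ
    rw [h.span]
    constructor
    · rintro ⟨x, y, h1, h2⟩
      exact ⟨y, -x, by rw [h1]; simp; ring, by rw [h2]; simp; ring⟩
    · rintro ⟨x, y, h1, h2⟩
      exact ⟨-y, x, by rw [h1]; simp; ring, by rw [h2]; simp; ring⟩

/-- Gauss reduction, by descent on the leading coefficient. -/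
theorem RedBasis.exists_reduced {E c : ℕ} (hE : 0 < E) {s : ℤ} {i : ℕ} (N : ℕ) :
    ∀ {α β δ : ℤ} {l m : ℤ√(-(E : ℤ))}, α.toNat = N → RedBasis E c s i α β δ l m →
    ∃ (α β δ : ℤ) (l m : ℤ√(-(E : ℤ))), RedBasis E c s i α β δ l m ∧ -α < 2 * β ∧ 2 * β ≤ α ∧
      α ≤ δ := by
  induction N using Nat.strong_induction_on with
  | _ N ih =>
    intro α β δ l m hN h
    have hα := h.pos
    -- choose the representative of `β` modulo `α` in `(-α/2, α/2]`
    obtain ⟨k, hk1, hk2⟩ : ∃ k : ℤ, -α < 2 * (β + k * α) ∧ 2 * (β + k * α) ≤ α := by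
      refine ⟨-((2 * β + α - 1) / (2 * α)), ?_⟩
      have e1 := Int.emod_add_mul_ediv (2 * β + α - 1) (2 * α)
      have e2 := Int.emod_nonneg (2 * β + α - 1) (b := 2 * α) (by omega)
      have e3 := Int.emod_lt_of_pos (2 * β + α - 1) (b := 2 * α) (by omega)
      constructor <;> nlinarith
    have h' := h.shift k
    by_cases hle : α ≤ δ + 2 * k * β + k ^ 2 * α
    · exact ⟨_, _, _, _, _, h', hk1, hk2, hle⟩
    · have h'' := h'.swap hE
      exact ih _ (by have := h''.pos; omega) rfl h''

theorem exists_redBasis {E c : ℕ} (hE : 0 < E) (hc : 0 < c) {s : ℤ} {i : ℕ}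
    (hs : (c : ℤ) ^ i ∣ s ^ 2 + E) :
    ∃ (α β δ : ℤ) (l m : ℤ√(-(E : ℤ))), RedBasis E c s i α β δ l m ∧ -α < 2 * β ∧ 2 * β ≤ α ∧
      α ≤ δ := by
  obtain ⟨δ, hδ⟩ := hs
  refine RedBasis.exists_reduced hE _ rfl (α := (c : ℤ) ^ i) (β := s) (δ := δ)
    (l := ⟨(c : ℤ) ^ i, 0⟩) (m := ⟨s, 1⟩) ⟨by positivity, hδ.symm, ?_, ?_, ?_, ?_⟩
  · rw [norm_comp]; simp; ring
  · simp; ring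
  · simp
  · intro ξ
    constructor
    · rintro ⟨t, ht⟩
      exact ⟨t, ξ.im, by linear_combination ht, by simp⟩
    · rintro ⟨x, y, h1, h2⟩
      refine ⟨x, ?_⟩
      simp at h1 h2
      rw [h1, h2]; ring

/-- The form `α X² + 2 β X Y + δ Y²` represents the odd number `c ^ i`, so its outer coefficients are
not both even. -/
theorem RedBasis.odd {E c : ℕ} (hc : Odd c) {s : ℤ} {i : ℕ} {α β δ : ℤ} {l m : ℤ√(-(E : ℤ))}
    (hE : 0 < E)
    (h : RedBasis E c s i α β δ l m) : ¬ (2 ∣ α ∧ 2 ∣ δ) := by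
  rintro ⟨h1, h2⟩
  have hodd : Odd ((c : ℤ) ^ i) := by
    have : Odd (c : ℤ) := by exact_mod_cast hc
    exact this.pow
  obtain ⟨x, y, e1, e2⟩ := (h.span ⟨(c : ℤ) ^ i, 0⟩).1 (by simp [InKer])
  have hl := h.norm
  have hm := (h.swap hE).norm
  rw [norm_comp] at hl hm
  simp at e1 e2
  have hcc : ((c : ℤ) ^ i) ^ 2 = x ^ 2 * (α * c ^ i) + y ^ 2 * (δ * c ^ i)
      + 2 * (x * y * (l.re * m.re + E * l.im * m.im)) := by
    rw [← hl, ← hm, e1]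
    linear_combination  (E * (x * l.im + y * m.im)) * e2
  have : (2 : ℤ) ∣ ((c : ℤ) ^ i) ^ 2 := by
    rw [hcc]
    exact dvd_add (dvd_add ((h1.mul_right _).mul_left _) ((h2.mul_right _).mul_left _)) ⟨_, rfl⟩
  have h3 : Odd (((c : ℤ) ^ i) ^ 2) := hodd.pow
  rw [← Int.not_even_iff_odd] at h3
  exact h3 (even_iff_two_dvd.2 this)

theorem int_cancel {d : ℤ} {n : ℤ} (hn : n ≠ 0) {a b : ℤ√d} (h : (n : ℤ√d) * a = n * b) :
    a = b := by
  have h1 := congrArg Zsqrtd.re h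
  have h2 := congrArg Zsqrtd.im h
  simp at h1 h2
  ext
  · exact h1.resolve_right hn
  · exact h2.resolve_right hn

theorem cancel_of_norm {d : ℤ} {l a b : ℤ√d} (hl : l.norm ≠ 0) (h : l * a = l * b) : a = b := by
  apply int_cancel hl
  rw [Zsqrtd.norm_eq_mul_conj]
  linear_combination (star l) * h

/-- If the lattices of levels `i ≤ j` give the same reduced form, then multiplication by `l' / l` maps
the first onto the second, and the quotient of the two ideals, of level `j - i`, is principal. -/
theorem RedBasis.quot {E c : ℕ} (hc : Odd c) {s : ℤ} (hsc : IsCoprime s (c : ℤ)) {i j : ℕ}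
    (hij : i ≤ j)
    {α β δ δ' : ℤ} {l m l' m' : ℤ√(-(E : ℤ))}
    (h : RedBasis E c s i α β δ l m) (h' : RedBasis E c s j α β δ' l' m') :
    ∃ ξ : ℤ√(-(E : ℤ)), ξ.norm = (c : ℤ) ^ (j - i) ∧ InKer c s (j - i) ξ := by
  have hα := h.pos.ne'
  have hc0 : (c : ℤ) ≠ 0 := by
    have := hc.pos
    exact_mod_cast this.ne'
  have hci : (c : ℤ) ^ i ≠ 0 := pow_ne_zero _ hc0
  have hln : l.norm ≠ 0 := by rw [h.norm]; exact mul_ne_zero hα hci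
  have hm : (α : ℤ√(-(E : ℤ))) * m = ⟨β, 1⟩ * l := by
    ext
    · simp; linear_combination h.re
    · simp; linear_combination h.im
  have hm' : (α : ℤ√(-(E : ℤ))) * m' = ⟨β, 1⟩ * l' := by
    ext
    · simp; linear_combination h'.re
    · simp; linear_combination h'.im
  -- multiplication by `l' / l` maps the lattice of index `i` onto that of index `j`
  have key : ∀ η : ℤ√(-(E : ℤ)), InKer c s i η → ∃ θ : ℤ√(-(E : ℤ)), InKer c s j θ ∧
      l * θ = η * l' := by
    intro η hη
    obtain ⟨x, y, e1, e2⟩ := (h.span η).1 hη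
    have hη' : η = x * l + y * m := by
      ext
      · simp [e1]
      · simp [e2]
    refine ⟨x * l' + y * m', (h'.span _).2 ⟨x, y, by simp, by simp⟩, int_cancel hα ?_⟩
    rw [hη']
    linear_combination y * l * hm' - y * l' * hm
  obtain ⟨C, hC⟩ : ∃ C : ℤ, (c : ℤ) ^ i = C := ⟨_, rfl⟩
  obtain ⟨θ, hθ, eθ⟩ := key (C : ℤ√(-(E : ℤ))) (by simp [InKer, hC])
  obtain ⟨φ, hφ, eφ⟩ := key ⟨s, 1⟩ (by simp [InKer])
  have e3 : (⟨s, 1⟩ : ℤ√(-(E : ℤ))) * θ = (C : ℤ√(-(E : ℤ))) * φ := by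
    apply cancel_of_norm hln
    linear_combination (⟨s, 1⟩ : ℤ√(-(E : ℤ))) * eθ - (C : ℤ√(-(E : ℤ))) * eφ
  have r3 := congrArg Zsqrtd.re e3
  have i3 := congrArg Zsqrtd.im e3
  simp at r3 i3
  unfold InKer at hθ ⊢
  have hij' : C ∣ (c : ℤ) ^ j := hC ▸ pow_dvd_pow _ hij
  have hcop : IsCoprime C (2 * s) := by
    rw [← hC]
    apply IsCoprime.pow_left
    apply IsCoprime.mul_right
    · rw [show (2 : ℤ) = ((2 : ℕ) : ℤ) by rfl, Nat.isCoprime_iff_coprime]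
      exact hc.coprime_two_right
    · exact hsc.symm
  have hq : C ∣ θ.im := by
    refine hcop.dvd_of_dvd_mul_left ?_
    have e : 2 * s * θ.im = C * φ.im - (θ.re - s * θ.im) := by linear_combination i3
    rw [e]
    exact dvd_sub (Dvd.intro _ rfl) (hij'.trans hθ)
  have hp : C ∣ θ.re := by
    have := dvd_add (hij'.trans hθ) (hq.mul_left s)
    simpa using this
  obtain ⟨q, hq⟩ := hq
  obtain ⟨p, hp⟩ := hp
  have hCi : C ≠ 0 := hC ▸ hci
  have hcj : (c : ℤ) ^ j = C * (c : ℤ) ^ (j - i) := by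
    rw [← hC, ← pow_add]; congr 1; omega
  refine ⟨⟨p, q⟩, ?_, ?_⟩
  · have hn := congrArg Zsqrtd.norm eθ
    rw [Zsqrtd.norm_mul, Zsqrtd.norm_mul, h.norm, h'.norm, hC, Zsqrtd.norm_intCast, norm_comp, hp, hq,
      hcj] at hn
    rw [norm_comp]
    apply mul_left_cancel₀ (mul_ne_zero hα (pow_ne_zero 3 hCi))
    linear_combination hn
  · rw [← mul_dvd_mul_iff_left hCi, ← hcj]
    rw [hp, hq, show C * p - s * (C * q) = C * (p - s * q) by ring] at hθ
    exact hθ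

/-! ### Counting reduced forms -/

/-- The condition that `α X² + 2 β X Y + δ Y²`, with `β = t - (α - 1) / 2` and
`α * δ = β ^ 2 + E`, has integral coefficients with `α ≤ δ` and `α`, `δ` not both even. For
`t < α` the shift makes `β` run over the integers with `-α < 2 * β ≤ α`. Among two opposite
truncated differences in `ℕ` one is zero, so their sum is `|β|`. -/
def IsRed (E α t : ℕ) : Prop :=
  (((t - (α - 1) / 2) + ((α - 1) / 2 - t)) ^ 2 + E) % α = 0 ∧
  α * α ≤ ((t - (α - 1) / 2) + ((α - 1) / 2 - t)) ^ 2 + E ∧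
  ¬ (α % 2 = 0 ∧ ((((t - (α - 1) / 2) + ((α - 1) / 2 - t)) ^ 2 + E) / α) % 2 = 0)

instance (E α t : ℕ) : Decidable (IsRed E α t) := by unfold IsRed; infer_instance

/-- The number of reduced forms of determinant `E`, in the sense of `IsRed`, with first coefficient at most `M`. -/
def redCount (E M : ℕ) : ℕ :=
  ∑ α ∈ Finset.range (M + 1), ((Finset.range α).filter (IsRed E α)).card

/-- The lattices of levels `0, …, n - 1` have distinct reduced forms, since a coincidence would produce
an element of positive level less than `n`. A reduced form satisfies `3 α² ≤ 4 E`. -/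
theorem order_le_redCount {E c : ℕ} (hE : 0 < E) (hc : Odd c) {s : ℤ} (hsc : IsCoprime s (c : ℤ))
    {n M : ℕ} (hs : (c : ℤ) ^ n ∣ s ^ 2 + E) (hM : ∀ α : ℕ, 3 * (α * α) ≤ 4 * E → α ≤ M)
    (hmin : ∀ i, 0 < i → i < n → ∀ ξ : ℤ√(-(E : ℤ)), ξ.norm = (c : ℤ) ^ i → ¬ InKer c s i ξ) :
    n ≤ redCount E M := by
  have hex : ∀ i, ∃ (α β δ : ℤ) (l m : ℤ√(-(E : ℤ))), i < n → RedBasis E c s i α β δ l m ∧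
      -α < 2 * β ∧ 2 * β ≤ α ∧ α ≤ δ := by
    intro i
    by_cases hi : i < n
    · obtain ⟨α, β, δ, l, m, h⟩ := exists_redBasis hE hc.pos ((pow_dvd_pow (c : ℤ) hi.le).trans hs)
      exact ⟨α, β, δ, l, m, fun _ => h⟩
    · exact ⟨0, 0, 0, 0, 0, fun h => absurd h hi⟩
  choose α β δ l m h using hex
  have hcard : redCount E M = ((Finset.range (M + 1)).sigma
      (fun α => (Finset.range α).filter (IsRed E α))).card := by
    rw [Finset.card_sigma]; rfl
  have hn : n = (Finset.range n).card := by simp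
  rw [hcard, hn]
  apply Finset.card_le_card_of_injOn
    (fun i => (⟨(α i).toNat, (β i + (((α i).toNat - 1) / 2 : ℕ)).toNat⟩ : Σ _ : ℕ, ℕ))
  · intro i hi
    obtain ⟨hB, h1, h2, h3⟩ := h i (by simpa using hi)
    have hpos := hB.pos
    have hdisc := hB.disc
    obtain ⟨a, ha⟩ : ∃ a : ℕ, α i = a := ⟨(α i).toNat, by omega⟩
    obtain ⟨d, hd⟩ : ∃ d : ℕ, δ i = d := ⟨(δ i).toNat, by omega⟩
    obtain ⟨t, ht⟩ : ∃ t : ℕ, β i + ((a - 1) / 2 : ℕ) = t :=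
      ⟨(β i + ((a - 1) / 2 : ℕ)).toNat, by omega⟩
    have hodd := hB.odd hc hE
    simp only [Finset.coe_sigma, Set.mem_sigma_iff, Finset.mem_coe, Finset.mem_range,
      Finset.mem_filter]
    rw [ha, Int.toNat_natCast, ht, Int.toNat_natCast]
    rw [ha] at h1 h2 h3 hdisc hpos
    rw [ha, hd] at hodd
    rw [hd] at h3 hdisc
    have habs : (t - (a - 1) / 2) + ((a - 1) / 2 - t) = (β i).natAbs := by omega
    have hdn : a * d = (β i).natAbs ^ 2 + E := by
      zify
      rw [sq_abs]
      exact hdisc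
    have had : a ≤ d := by exact_mod_cast h3
    have ha0 : 0 < a := by exact_mod_cast hpos
    refine ⟨?_, by omega, ?_⟩
    · suffices a ≤ M by omega
      apply hM
      have hb : 2 * (β i).natAbs ≤ a := by omega
      nlinarith
    · unfold IsRed
      rw [habs, ← hdn]
      refine ⟨by simp, Nat.mul_le_mul_left _ had, ?_⟩
      rw [Nat.mul_div_cancel_left _ ha0]
      rintro ⟨k1, k2⟩
      exact hodd ⟨by omega, by omega⟩
  · -- equal reduced forms at `i < j` would contradict the minimality of `n`
    have main : ∀ i j, i < j → j < n → α i = α j → β i = β j → False := by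
      intro i j hij hj e1 e2
      obtain ⟨hi', -⟩ := h i (hij.trans hj)
      obtain ⟨hj', -⟩ := h j hj
      rw [← e1, ← e2] at hj'
      obtain ⟨ξ, hξ, hξ'⟩ := hi'.quot hc hsc hij.le hj'
      exact hmin (j - i) (by omega) (by omega) ξ hξ hξ'
    intro i hi j hj hij
    simp only [Sigma.mk.injEq, heq_eq_eq] at hij
    simp only [Finset.coe_range, Set.mem_Iio] at hi hj
    obtain ⟨hBi, hi1, hi2, -⟩ := h i hi
    obtain ⟨hBj, hj1, hj2, -⟩ := h j hj
    have p1 := hBi.pos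
    have p2 := hBj.pos
    have e1 : α i = α j := by omega
    have e2 : β i = β j := by
      have := hij.2
      rw [e1] at this hi1 hi2
      omega
    rcases lt_trichotomy i j with hlt | heq | hlt
    · exact (main i j hlt hj e1 e2).elim
    · exact heq
    · exact (main j i hlt hi e1.symm e2.symm).elim

/-- A set of natural numbers below `N` without two consecutive elements has at most `(N + 1) / 2`
elements. -/
theorem card_le_of_sparse (N : ℕ) (P : ℕ → Prop) [DecidablePred P]
    (h : ∀ t, t + 1 < N → P t → ¬ P (t + 1)) :
    ((Finset.range N).filter P).card ≤ (N + 1) / 2 := by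
  have : (Finset.range ((N + 1) / 2)).card = (N + 1) / 2 := by simp
  rw [← this]
  apply Finset.card_le_card_of_injOn (fun t => t / 2)
  · intro t ht
    simp at ht ⊢
    omega
  · intro t ht u hu htu
    simp at ht hu htu
    by_contra hne
    rcases Nat.lt_or_gt_of_ne hne with hlt | hlt
    · have : u = t + 1 := by omega
      subst this
      exact h t hu.1 ht.2 hu.2
    · have : t = u + 1 := by omega
      subst this
      exact h u ht.1 hu.2 ht.2

theorem IsRed.dvd {E α t : ℕ} (h : IsRed E α t) :
    (α : ℤ) ∣ ((t : ℤ) - ((α - 1) / 2 : ℕ)) ^ 2 + E := by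
  have h1 := Nat.dvd_of_mod_eq_zero h.1
  have e : (((t - (α - 1) / 2) + ((α - 1) / 2 - t) : ℕ) : ℤ) ^ 2
      = ((t : ℤ) - ((α - 1) / 2 : ℕ)) ^ 2 := by
    rcases le_total t ((α - 1) / 2) with h | h
    · rw [Nat.sub_eq_zero_of_le h, Nat.cast_add, Nat.cast_sub h]; push_cast; ring
    · rw [Nat.sub_eq_zero_of_le h, Nat.cast_add, Nat.cast_sub h]; push_cast; ring
  have h2 := Int.natCast_dvd_natCast.2 h1
  rw [Nat.cast_add, Nat.cast_pow, e] at h2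
  exact h2

/-- The squares of consecutive `β` differ by an odd number smaller than `2 α`, never by a multiple of
`α` in the range at hand, so the admissible `β` are not consecutive. -/
theorem card_isRed_le (E α : ℕ) :
    ((Finset.range α).filter (IsRed E α)).card ≤ (α + 1) / 2 := by
  apply card_le_of_sparse
  intro t ht h1 h2
  have d := dvd_sub h2.dvd h1.dvd
  have e : (((t + 1 : ℕ) : ℤ) - ((α - 1) / 2 : ℕ)) ^ 2 + E
      - (((t : ℤ) - ((α - 1) / 2 : ℕ)) ^ 2 + E) = 2 * (t - ((α - 1) / 2 : ℕ)) + 1 := by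
    push_cast; ring
  rw [e] at d
  have := Int.eq_zero_of_abs_lt_dvd d (by rw [abs_lt]; constructor <;> omega)
  omega

/-- When `E ≡ 3` modulo `9` and `3 ∣ α`, only multiples of `3` can occur as `β`, no two of them
consecutive, and none if `9 ∣ α`. -/
theorem card_isRed_le_three {E α : ℕ} (hE : E % 9 = 3) (hα : α % 3 = 0) :
    ((Finset.range α).filter (IsRed E α)).card ≤ if α % 9 = 0 then 0 else (α / 3 + 1) / 2 := by
  have h3 : ∀ t, IsRed E α t → (3 : ℤ) ∣ (t : ℤ) - ((α - 1) / 2 : ℕ) := by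
    intro t ht
    have h := ht.dvd
    have h3α : (3 : ℤ) ∣ α := by omega
    have h3E : (3 : ℤ) ∣ E := by omega
    have := (Int.dvd_add_left h3E).1 (h3α.trans h)
    exact Int.prime_three.dvd_of_dvd_pow this
  obtain ⟨a, rfl⟩ : ∃ a, α = 3 * a := ⟨α / 3, by omega⟩
  split_ifs with h9
  · rw [Nat.le_zero, Finset.card_eq_zero, Finset.filter_eq_empty_iff]
    intro t _ ht
    obtain ⟨w, hw⟩ := h3 t ht
    have h := ht.dvd
    rw [hw] at h
    have h9' : (9 : ℤ) ∣ ((3 * a : ℕ) : ℤ) := by omega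
    have := h9'.trans h
    have e : (3 * w) ^ 2 + (E : ℤ) = 9 * w ^ 2 + E := by ring
    rw [e] at this
    generalize w ^ 2 = w2 at this
    omega
  · -- rescale the roots `β = 3 β'`
    obtain ⟨g, hg⟩ : ∃ g : ℕ, g = (3 * a - 1) / 2 % 3 := ⟨_, rfl⟩
    have ha : 3 * a / 3 = a := by omega
    rw [ha]
    refine le_trans ?_ (card_le_of_sparse a (fun u => IsRed E (3 * a) (3 * u + g)) ?_)
    · apply Finset.card_le_card_of_injOn (fun t => t / 3)
      · intro t ht
        simp only [Finset.coe_filter, Finset.mem_range, Set.mem_ofPred_eq] at ht ⊢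
        have := h3 t ht.2
        have e : 3 * (t / 3) + g = t := by omega
        rw [e]
        exact ⟨by omega, ht.2⟩
      · intro t ht u hu htu
        simp only [Finset.coe_filter, Finset.mem_range, Set.mem_ofPred_eq] at ht hu htu
        have := h3 t ht.2
        have := h3 u hu.2
        omega
    · intro u hu h1 h2
      have d := dvd_sub h2.dvd h1.dvd
      obtain ⟨w, hw⟩ := h3 _ h1
      have hw' : ((3 * (u + 1) + g : ℕ) : ℤ) - ((3 * a - 1) / 2 : ℕ) = 3 * (w + 1) := by
        push_cast at hw ⊢
        linarith
      rw [hw, hw'] at d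
      have e : (3 * (w + 1)) ^ 2 + (E : ℤ) - ((3 * w) ^ 2 + E) = 3 * (3 * (2 * w + 1)) := by ring
      rw [e, Nat.cast_mul, Nat.cast_ofNat, mul_dvd_mul_iff_left (by norm_num)] at d
      have hco : IsCoprime (a : ℤ) 3 := by
        rw [show (3 : ℤ) = ((3 : ℕ) : ℤ) by rfl, Nat.isCoprime_iff_coprime, Nat.coprime_comm,
          Nat.Prime.coprime_iff_not_dvd Nat.prime_three]
        omega
      have d' := hco.dvd_of_dvd_mul_left d
      have := Int.eq_zero_of_abs_lt_dvd d' (by rw [abs_lt]; constructor <;> omega)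
      omega

theorem four_redCount_le (E M : ℕ) : 4 * redCount E M + (M + 1) % 2 ≤ (M + 1) ^ 2 := by
  unfold redCount
  induction M with
  | zero => simp
  | succ M ih =>
    rw [Finset.sum_range_succ]
    have := card_isRed_le E (M + 1)
    have h2 : 4 * ((M + 1 + 1) / 2) + (M + 1 + 1) % 2 ≤ 2 * M + 3 + (M + 1) % 2 := by omega
    nlinarith

/-- Bound for twice the number of reduced forms with first coefficient `α` when `E ≡ 3`
modulo `9`. -/
def rootBound (α : ℕ) : ℕ := if α % 9 = 0 then 0 else if α % 3 = 0 then α / 3 + 1 else α + 1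

theorem redCount_le_half {E : ℕ} (hE : E % 9 = 3) (M : ℕ) :
    redCount E M ≤ ∑ α ∈ Finset.range (M + 1), rootBound α / 2 := by
  unfold redCount
  apply Finset.sum_le_sum
  intro α _
  unfold rootBound
  have h1 := card_isRed_le E α
  by_cases h3 : α % 3 = 0
  · have h2 := card_isRed_le_three hE h3
    split_ifs with h9
    · rw [if_pos h9] at h2; omega
    · rw [if_neg h9] at h2; omega
  · rw [if_neg (by omega), if_neg h3]; omega

theorem redCount_le_rootBound {E : ℕ} (hE : E % 9 = 3) (M : ℕ) :
    2 * redCount E M ≤ ∑ α ∈ Finset.range (M + 1), rootBound α := by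
  refine (Nat.mul_le_mul_left 2 (redCount_le_half hE M)).trans ?_
  rw [Finset.mul_sum]
  exact Finset.sum_le_sum fun α _ => Nat.mul_div_le _ _

theorem rootBound_eval (K : ℕ) : rootBound (9 * K) = 0 ∧ rootBound (9 * K + 1) = 9 * K + 2 ∧
    rootBound (9 * K + 2) = 9 * K + 3 ∧ rootBound (9 * K + 3) = 3 * K + 2 ∧ rootBound (9 * K + 4) = 9 * K + 5 ∧
    rootBound (9 * K + 5) = 9 * K + 6 ∧ rootBound (9 * K + 6) = 3 * K + 3 ∧ rootBound (9 * K + 7) = 9 * K + 8 ∧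
    rootBound (9 * K + 8) = 9 * K + 9 := by
  unfold rootBound
  refine ⟨?_, ?_, ?_, ?_, ?_, ?_, ?_, ?_, ?_⟩ <;> split_ifs <;> omega

theorem sum_rootBound_block (K : ℕ) : ∑ α ∈ Finset.range (9 * K), rootBound α ≤ 30 * K ^ 2 + 8 * K := by
  induction K with
  | zero => simp
  | succ K ih =>
    obtain ⟨h0, h1, h2, h3, h4, h5, h6, h7, h8⟩ := rootBound_eval K
    rw [show 9 * (K + 1) = 9 * K + 1 + 1 + 1 + 1 + 1 + 1 + 1 + 1 + 1 by ring]
    simp only [Finset.sum_range_succ, add_assoc, Nat.reduceAdd, h0, h1, h2, h3, h4, h5, h6, h7, h8]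
    nlinarith

theorem sum_rootBound_lt {M : ℕ} (hM : 36 ≤ M) : 12 * ∑ α ∈ Finset.range (M + 1), rootBound α < 5 * M ^ 2 := by
  obtain ⟨K, r, hr, rfl⟩ : ∃ K r, r < 9 ∧ M = 9 * K + r := ⟨M / 9, M % 9, by omega, by omega⟩
  have hK : 4 ≤ K := by omega
  have hb := sum_rootBound_block K
  obtain ⟨h0, h1, h2, h3, h4, h5, h6, h7, h8⟩ := rootBound_eval K
  interval_cases r <;>
  simp only [Finset.sum_range_succ, add_assoc, Nat.reduceAdd, h0, h1, h2, h3, h4, h5, h6, h7, h8,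
    add_zero] <;> nlinarith

set_option maxRecDepth 100000 in
/-- The values of `E ≡ 3` modulo `9` out of reach of the estimate `sum_rootBound_lt`, with
`E = 12 + 9 K` and `M` the integer part of `√(4 E / 3)`. The actual count is needed only where the
sum of the bounds `rootBound α / 2` does not suffice. -/
theorem redCount_small : ∀ M < 36, ∀ K < 107, 3 * (M * M) ≤ 4 * (12 + 9 * K) →
    4 * (12 + 9 * K) < 3 * ((M + 1) * (M + 1)) →
    18 * ∑ α ∈ Finset.range (M + 1), rootBound α / 2 < 5 * (12 + 9 * K) ∨
      18 * redCount (12 + 9 * K) M < 5 * (12 + 9 * K) := by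
  decide +kernel

theorem redCount_three {E M : ℕ} (hE : E % 9 = 3) (hE12 : 12 ≤ E) (hM : 3 * (M * M) ≤ 4 * E)
    (hM' : 4 * E < 3 * ((M + 1) * (M + 1))) : 18 * redCount E M < 5 * E := by
  by_cases h36 : 36 ≤ M
  · have h1 := redCount_le_rootBound hE M
    have h2 := sum_rootBound_lt h36
    nlinarith
  · have hM35 : (M + 1) * (M + 1) ≤ 36 * 36 := Nat.mul_le_mul (by omega) (by omega)
    have h := redCount_small M (by omega) ((E - 12) / 9) (by omega)
    rw [show 12 + 9 * ((E - 12) / 9) = E by omega] at h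
    rcases h hM hM' with h | h
    · have := redCount_le_half hE M
      omega
    · exact h

theorem redCount_one_one : redCount 1 1 = 1 := by decide +kernel

theorem redCount_three_two : redCount 3 2 = 1 := by decide +kernel

/-- Bounds for the order `n` of the class of the ideal of norm `c`, obtained by counting reduced
forms of determinant `E`. -/
theorem order_bounds {E c : ℕ} (hE : 0 < E) (hc : Odd c) {s : ℤ} (hsc : IsCoprime s (c : ℤ))
    {n : ℕ} (hs : (c : ℤ) ^ n ∣ s ^ 2 + E)
    (hmin : ∀ i, 0 < i → i < n → ∀ ξ : ℤ√(-(E : ℤ)), ξ.norm = (c : ℤ) ^ i → ¬ InKer c s i ξ) :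
    (E = 1 → n ≤ 1) ∧ (E = 3 → n ≤ 1) ∧ (2 ≤ E → 4 * n < 3 * E) ∧
      (E % 9 = 3 → 12 ≤ E → 18 * n < 5 * E) := by
  have hb := fun M hM => order_le_redCount (M := M) hE hc hsc hs hM hmin
  have hsq : ∀ α : ℕ, 3 * (α * α) ≤ 4 * E ↔ α ≤ Nat.sqrt (4 * E / 3) := by
    intro α
    rw [Nat.le_sqrt]
    omega
  have hb' := hb _ (fun α h => (hsq α).1 h)
  have hM := (hsq (Nat.sqrt (4 * E / 3))).2 le_rfl
  have hM' : ¬ 3 * ((Nat.sqrt (4 * E / 3) + 1) * (Nat.sqrt (4 * E / 3) + 1)) ≤ 4 * E := by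
    rw [hsq]; omega
  generalize Nat.sqrt (4 * E / 3) = M at hb' hM hM'
  refine ⟨?_, ?_, ?_, ?_⟩
  · rintro rfl
    rw [← redCount_one_one]
    exact hb 1 (fun α h => by nlinarith)
  · rintro rfl
    rw [← redCount_three_two]
    exact hb 2 (fun α h => by nlinarith)
  · intro h2
    have h4 := (Nat.le_add_right _ _).trans (four_redCount_le E M)
    rcases Nat.lt_or_ge M 3 with h | h
    · interval_cases M <;> omega
    · have key : 4 * (M + 1) ^ 2 < 9 * (M * M) := by nlinarith
      linarith
  · intro h9 h12
    have := redCount_three h9 h12 hM (by omega)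
    omega

/-! ### Prime divisors of imaginary parts of powers -/

theorem zsqrtd_norm_pow {E : ℕ} (γ : ℤ√(-(E : ℤ))) (j : ℕ) :
    (γ ^ j).re ^ 2 + E * (γ ^ j).im ^ 2 = γ.norm ^ j := by
  rw [← norm_comp]
  exact map_pow (Zsqrtd.normMonoidHom (d := -(E : ℤ))) γ j

theorem im_dvd_im_pow {E : ℕ} (g : ℤ√(-(E : ℤ))) (q : ℕ) : g.im ∣ (g ^ q).im := by
  induction q with
  | zero => simp
  | succ q ih =>
    rw [pow_succ, Zsqrtd.im_mul]
    exact dvd_add (Dvd.intro_left _ rfl) (ih.mul_right _)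

theorem prime_not_dvd_re {E : ℕ} {γ : ℤ√(-(E : ℤ))} {p : ℕ} (hp : p.Prime)
    (hpN : ¬ (p : ℤ) ∣ γ.norm) {j : ℕ} (h : (p : ℤ) ∣ E * (γ ^ j).im) :
    ¬ (p : ℤ) ∣ (γ ^ j).re := by
  intro hu
  apply hpN
  apply (Nat.prime_iff_prime_int.1 hp).dvd_of_dvd_pow (n := j)
  rw [← zsqrtd_norm_pow, pow_two, pow_two, ← mul_assoc]
  exact dvd_add (hu.mul_right _) (h.mul_right _)

/-- For a prime `p` not dividing the norm, the exponents `j` with `p ∣ (γ ^ j).im` are closed under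
greatest common divisors. -/
theorem prime_dvd_im_gcd {E : ℕ} {γ : ℤ√(-(E : ℤ))} {p : ℕ} (hp : p.Prime)
    (hpN : ¬ (p : ℤ) ∣ γ.norm) (a b : ℕ) :
    (p : ℤ) ∣ (γ ^ a).im → (p : ℤ) ∣ (γ ^ b).im → (p : ℤ) ∣ (γ ^ (Nat.gcd a b)).im := by
  induction a, b using Nat.gcd.induction with
  | H0 n => intro _ h; simpa using h
  | H1 m n hm ih =>
    intro h1 h2
    rw [Nat.gcd_rec]
    refine ih ?_ h1
    have h3 : (p : ℤ) ∣ (γ ^ (m * (n / m))).im := by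
      rw [pow_mul]
      exact h1.trans (im_dvd_im_pow _ _)
    have h4 : (γ ^ n).im = (γ ^ (m * (n / m))).re * (γ ^ (n % m)).im
        + (γ ^ (m * (n / m))).im * (γ ^ (n % m)).re := by
      rw [← Zsqrtd.im_mul, ← pow_add, Nat.div_add_mod]
    rw [h4] at h2
    have h5 := (Int.dvd_add_left (h3.mul_right _)).1 h2
    exact ((Nat.prime_iff_prime_int.1 hp).dvd_or_dvd h5).resolve_left
      (prime_not_dvd_re hp hpN (h3.mul_left _))

/-- Binomial expansion of the components of a power, to second order in `E * g.im ^ 2`. -/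
theorem pow_expand {E : ℕ} (g : ℤ√(-(E : ℤ))) (n : ℕ) : ∃ e f : ℤ,
    (g ^ (n + 3)).im = g.im * ((n + 3 : ℕ) * g.re ^ (n + 2)
      - (n + 3).choose 3 * g.re ^ n * (E * g.im ^ 2) + (E * g.im ^ 2) ^ 2 * e) ∧
    (g ^ (n + 3)).re = g.re ^ (n + 3) - (n + 3).choose 2 * g.re ^ (n + 1) * (E * g.im ^ 2)
      + (E * g.im ^ 2) ^ 2 * f := by
  induction n with
  | zero =>
    refine ⟨0, 0, ?_, ?_⟩
    · simp [pow_succ]; ring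
    · simp [pow_succ, Nat.choose]; ring
  | succ n ih =>
    obtain ⟨e, f, h1, h2⟩ := ih
    refine ⟨f + g.re * e, g.re * f + (n + 3).choose 3 * g.re ^ n - (E * g.im ^ 2) * e, ?_, ?_⟩
    · rw [show n + 1 + 3 = (n + 3) + 1 by ring, pow_succ, Zsqrtd.im_mul, h1, h2,
        Nat.choose_succ_succ' (n + 3) 2]
      push_cast; ring
    · rw [show n + 1 + 3 = (n + 3) + 1 by ring, pow_succ, Zsqrtd.re_mul, h1, h2,
        Nat.choose_succ_succ' (n + 3) 1, Nat.choose_one_right]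
      push_cast; ring

/-- Rank of apparition: an odd prime `p` not dividing the norm or the discriminant divides the
imaginary part of `γ ^ (p - 1)` or of `γ ^ (p + 1)`. -/
theorem exists_rank {E : ℕ} {γ : ℤ√(-(E : ℤ))} {p : ℕ} (hp : p.Prime) (hp2 : p ≠ 2)
    (hpE : ¬ p ∣ E) (hpN : ¬ (p : ℤ) ∣ γ.norm) :
    ∃ τ, 0 < τ ∧ τ ≤ (p + 1) / 2 ∧ (p : ℤ) ∣ (γ ^ (2 * τ)).im := by
  have : Fact p.Prime := ⟨hp⟩
  have hodd : p % 2 = 1 := hp.eq_two_or_odd.resolve_left hp2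
  have hp3 : 3 ≤ p := by have := hp.two_le; omega
  obtain ⟨r, hr⟩ := exists_add_pow_prime_eq hp (γ.re : ℤ√(-(E : ℤ)))
    ((γ.im : ℤ√(-(E : ℤ))) * Zsqrtd.sqrtd)
  have hγ : (γ.re : ℤ√(-(E : ℤ))) + (γ.im : ℤ√(-(E : ℤ))) * Zsqrtd.sqrtd = γ := by
    ext <;> simp
  obtain ⟨r', hr'⟩ : ∃ r' : ℤ√(-(E : ℤ)), r' =
    (γ.re : ℤ√(-(E : ℤ))) * ((γ.im : ℤ√(-(E : ℤ))) * Zsqrtd.sqrtd) * r := ⟨_, rfl⟩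
  have hω : ((γ.im : ℤ√(-(E : ℤ))) * Zsqrtd.sqrtd) ^ p
      = ((γ.im ^ p * (-(E : ℤ)) ^ (p / 2) : ℤ) : ℤ√(-(E : ℤ))) * Zsqrtd.sqrtd := by
    have e : p = 2 * (p / 2) + 1 := by omega
    have e2 : (Zsqrtd.sqrtd : ℤ√(-(E : ℤ))) ^ p
        = (((-(E : ℤ)) ^ (p / 2) : ℤ) : ℤ√(-(E : ℤ))) * Zsqrtd.sqrtd := by
      conv_lhs => rw [e, pow_succ, pow_mul, pow_two, Zsqrtd.dmuld]
      push_cast; rfl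
    rw [mul_pow, e2]
    push_cast; ring
  rw [hγ, hω, mul_assoc, mul_assoc, ← mul_assoc (γ.re : ℤ√(-(E : ℤ))), ← hr'] at hr
  have hre := congrArg Zsqrtd.re hr
  have him := congrArg Zsqrtd.im hr
  rw [← Int.cast_pow, ← Int.cast_natCast (R := ℤ√(-(E : ℤ)))] at hre him
  simp only [Zsqrtd.re_add, Zsqrtd.im_add, Zsqrtd.re_intCast, Zsqrtd.im_intCast, Zsqrtd.re_mul,
    Zsqrtd.im_mul, Zsqrtd.re_sqrtd, Zsqrtd.im_sqrtd] at hre him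
  have fermat : ∀ x : ℤ, ((x ^ p : ℤ) : ZMod p) = x := by
    intro x; push_cast; exact ZMod.pow_card _
  have hre' : (((γ ^ p).re : ℤ) : ZMod p) = γ.re := by
    rw [hre, ← fermat γ.re]; push_cast; simp
  have him' : (((γ ^ p).im : ℤ) : ZMod p) = γ.im * (-(E : ℤ) : ZMod p) ^ (p / 2) := by
    rw [him, ← fermat γ.im]; push_cast; simp
  have hE0 : (-(E : ℤ) : ZMod p) ≠ 0 := by
    intro h
    apply hpE
    rw [neg_eq_zero] at h
    rw [← ZMod.natCast_eq_zero_iff]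
    exact_mod_cast h
  rcases ZMod.pow_div_two_eq_neg_one_or_one p hE0 with h1 | h1
  · -- `-E` is a square modulo `p`
    refine ⟨(p - 1) / 2, by omega, by omega, ?_⟩
    rw [show 2 * ((p - 1) / 2) = p - 1 by omega]
    have h2 : (p : ℤ) ∣ γ.norm * (γ ^ (p - 1)).im := by
      have e : γ ^ p = γ ^ (p - 1) * γ := by rw [← pow_succ]; congr 1; omega
      have e2 : γ.norm * (γ ^ (p - 1)).im = (γ ^ p).im * γ.re - (γ ^ p).re * γ.im := by
        rw [e, norm_comp, Zsqrtd.re_mul, Zsqrtd.im_mul]; ring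
      rw [e2, ← ZMod.intCast_zmod_eq_zero_iff_dvd]
      push_cast
      rw [hre', him', h1]; ring
    exact ((Nat.prime_iff_prime_int.1 hp).dvd_or_dvd h2).resolve_left hpN
  · refine ⟨(p + 1) / 2, by omega, by omega, ?_⟩
    rw [show 2 * ((p + 1) / 2) = p + 1 by omega]
    rw [pow_succ, Zsqrtd.im_mul, ← ZMod.intCast_zmod_eq_zero_iff_dvd]
    push_cast
    rw [hre', him', h1]; ring

theorem eq_one_of_no_prime {a : ℕ} (h : ∀ p : ℕ, p.Prime → ¬ p ∣ a) : a = 1 := by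
  by_contra hne
  obtain ⟨p, hp, hpa⟩ := Nat.exists_prime_and_dvd hne
  exact h p hp hpa

/-- Excludes the case in which the cofactor `(g ^ q).im / g.im` equals `q` up to sign; here
`N = E * W ^ 2` and `X = E * g.im ^ 2`. -/
theorem size_contra {q N X S : ℕ} (hq : 3 ≤ q) (hN : q ^ 3 ≤ N) (h1 : q ^ 2 * X = 4 * N)
    (h2 : X ^ q ≤ S ^ 2) (h3 : S < N) : False := by
  have h4 : (4 * N) ^ q < q ^ (2 * q) * N ^ 2 := by
    rw [← h1, mul_pow, ← pow_mul]
    have : S ^ 2 < N ^ 2 := Nat.pow_lt_pow_left h3 (by norm_num)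
    exact Nat.mul_lt_mul_of_pos_left (by omega) (by positivity)
  obtain ⟨r, rfl⟩ : ∃ r, q = r + 2 := ⟨q - 2, by omega⟩
  generalize hQ : r + 2 = q at *
  have hq6 : q ^ 6 ≤ 4 ^ q * q ^ q := by
    rcases Nat.lt_or_ge q 6 with h | h
    · interval_cases q <;> norm_num
    · calc q ^ 6 ≤ q ^ q := Nat.pow_le_pow_right (by omega) h
        _ ≤ 4 ^ q * q ^ q := Nat.le_mul_of_pos_left _ (by positivity)
  have h5 : (q ^ 3) ^ r ≤ N ^ r := Nat.pow_le_pow_left hN r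
  have h6 : (4 * N) ^ q = 4 ^ q * N ^ r * N ^ 2 := by
    rw [mul_pow, mul_assoc, ← pow_add, hQ]
  rw [h6] at h4
  have h7 : 4 ^ q * N ^ r < q ^ (2 * q) := Nat.lt_of_mul_lt_mul_right h4
  have h8 : 4 ^ q * (q ^ 3) ^ r < q ^ (2 * q) :=
    lt_of_le_of_lt (Nat.mul_le_mul_left _ h5) h7
  have h9 : q ^ (2 * q) * q ^ 6 ≤ 4 ^ q * (q ^ 3) ^ r * q ^ 6 := by
    calc q ^ (2 * q) * q ^ 6 ≤ q ^ (2 * q) * (4 ^ q * q ^ q) := Nat.mul_le_mul_left _ hq6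
      _ = 4 ^ q * q ^ (2 * q + q) := by ring
      _ = 4 ^ q * q ^ (3 * r + 6) := by congr 2; omega
      _ = 4 ^ q * (q ^ 3) ^ r * q ^ 6 := by ring
  have hpos : 0 < q ^ 6 := by positivity
  have := Nat.le_of_mul_le_mul_right h9 hpos
  omega

/-- Suppose that `k = j * q` with `q` prime and that `(γ ^ k).im` has no prime factor beyond those of
`E` and of `(γ ^ j).im`. Every prime factor of the cofactor `(γ ^ k).im / (γ ^ j).im` is then `q`,
which occurs at most once unless `q = 3` and `E ≡ 3` modulo `9`. So the cofactor is small, while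
`S < E * W ^ 2` says that the imaginary part of `γ ^ k` dominates its real part. -/
theorem step_contra {E c n k q j W S : ℕ} {γ : ℤ√(-(E : ℤ))} (hE : 0 < E)
    (hγ : γ.norm = (c : ℤ) ^ n)
    (hc : ∀ p : ℕ, p.Prime → (p : ℤ) ∣ E * (γ ^ k).im → ¬ p ∣ c)
    (hW : (γ ^ k).im.natAbs = 2 * W) (hW0 : 0 < W) (hS : (c ^ n) ^ k = S ^ 2)
    (hSN : S < E * W ^ 2) (hq : q.Prime) (hk : k = j * q)
    (hj : ∀ p : ℕ, p.Prime → (p : ℤ) ∣ (γ ^ k).im → ¬ p ∣ E → (p : ℤ) ∣ (γ ^ j).im) :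
    q = 3 ∧ E % 9 = 3 ∧ ¬ (3 : ℤ) ∣ (γ ^ j).im := by
  have hpN : ∀ p : ℕ, p.Prime → (p : ℤ) ∣ E * (γ ^ k).im → ¬ (p : ℤ) ∣ γ.norm := by
    intro p hp h h2
    rw [hγ] at h2
    have := (Nat.prime_iff_prime_int.1 hp).dvd_of_dvd_pow h2
    exact hc p hp h (by exact_mod_cast this)
  have hkj : γ ^ k = (γ ^ j) ^ q := by rw [hk, pow_mul]
  have hnorm := zsqrtd_norm_pow γ j
  rw [hγ] at hnorm
  have hre : ∀ p : ℕ, p.Prime → (p : ℤ) ∣ (γ ^ k).im → ¬ (p : ℤ) ∣ (γ ^ j).re := by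
    intro p hp h
    refine prime_not_dvd_re hp (hpN p hp (h.mul_left _)) ?_
    by_cases hpE : p ∣ E
    · exact (Int.natCast_dvd_natCast.2 hpE).mul_right _
    · exact (hj p hp h hpE).mul_left _
  have hEv : ∀ p : ℕ, p.Prime → (p : ℤ) ∣ (γ ^ k).im → (p : ℤ) ∣ E * (γ ^ j).im ^ 2 := by
    intro p hp h
    by_cases hpE : p ∣ E
    · exact (Int.natCast_dvd_natCast.2 hpE).mul_right _
    · exact (dvd_pow (hj p hp h hpE) two_ne_zero).mul_left _
  have hSk : ((c ^ n) ^ j) ^ q = S ^ 2 := by rw [← pow_mul, ← hk, hS]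
  generalize hg : γ ^ j = g at *
  rw [hkj] at hW hj hre hEv
  have hnormN : g.re.natAbs ^ 2 + E * g.im.natAbs ^ 2 = (c ^ n) ^ j := by
    zify
    rw [sq_abs, sq_abs]
    exact hnorm
  rcases Nat.lt_or_ge q 3 with hq2 | hq3
  · -- `q = 2`: the real part is a unit
    have hq2 : q = 2 := by have := hq.two_le; omega
    subst hq2
    exfalso
    have e : (g ^ 2).im = 2 * g.re * g.im := by rw [pow_two, Zsqrtd.im_mul]; ring
    have hu : g.re.natAbs = 1 := by
      apply eq_one_of_no_prime
      intro p hp hpu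
      have hpu' : (p : ℤ) ∣ g.re := Int.natCast_dvd.2 hpu
      exact hre p hp (by rw [e]; exact (hpu'.mul_left _).mul_right _) hpu'
    have hv : g.im.natAbs = W := by
      rw [e, Int.natAbs_mul, Int.natAbs_mul, hu] at hW
      simp at hW
      exact hW
    rw [hu, hv] at hnormN
    have : S = (c ^ n) ^ j := (Nat.pow_left_injective (n := 2) (by norm_num) hSk).symm
    omega
  · obtain ⟨r, rfl⟩ : ∃ r, q = r + 3 := ⟨q - 3, by omega⟩
    obtain ⟨e, -, he, -⟩ := pow_expand g r
    have hqodd : (r + 3) % 2 = 1 := hq.eq_two_or_odd.resolve_left (by omega)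
    generalize hw : ((r + 3 : ℕ) : ℤ) * g.re ^ (r + 2) - (r + 3).choose 3 * g.re ^ r *
      (E * g.im ^ 2) + (E * g.im ^ 2) ^ 2 * e = w at he
    generalize hQ : r + 3 = q at *
    have hXS : (E * g.im.natAbs ^ 2) ^ q ≤ S ^ 2 := by
      rw [← hSk]
      exact Nat.pow_le_pow_left (by omega) _
    have hVW : g.im.natAbs * w.natAbs = 2 * W := by rw [← hW, he, Int.natAbs_mul]
    have hwX : w.natAbs ^ 2 * (E * g.im.natAbs ^ 2) = 4 * (E * W ^ 2) := by
      calc _ = E * (g.im.natAbs * w.natAbs) ^ 2 := by ring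
        _ = _ := by rw [hVW]; ring
    -- the cofactor `w` has no prime factor but `q`
    have hpw : ∀ p : ℕ, p.Prime → p ∣ w.natAbs → p = q := by
      intro p hp hpw
      have hpw' : (p : ℤ) ∣ w := Int.natCast_dvd.2 hpw
      have hpk : (p : ℤ) ∣ (g ^ q).im := by rw [he]; exact hpw'.mul_left _
      have h1 := hEv p hp hpk
      have h2 : (p : ℤ) ∣ (q : ℤ) * g.re ^ (r + 2) := by
        have e1 : (q : ℤ) * g.re ^ (r + 2) = w + (E * g.im ^ 2) *
          (q.choose 3 * g.re ^ r - (E * g.im ^ 2) * e) := by rw [← hw]; ring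
        rw [e1]
        exact dvd_add hpw' (h1.mul_right _)
      rcases (Nat.prime_iff_prime_int.1 hp).dvd_or_dvd h2 with h | h
      · exact (Nat.prime_dvd_prime_iff_eq hp hq).1 (by exact_mod_cast h)
      · exact absurd ((Nat.prime_iff_prime_int.1 hp).dvd_of_dvd_pow h) (hre p hp hpk)
    by_cases hqw : q ∣ w.natAbs
    · have hqw' : (q : ℤ) ∣ w := Int.natCast_dvd.2 hqw
      have hqk : (q : ℤ) ∣ (g ^ q).im := by rw [he]; exact hqw'.mul_left _
      have h1 := hEv q hq hqk
      have hqre := hre q hq hqk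
      have hqP := Nat.prime_iff_prime_int.1 hq
      by_cases hsq : q ^ 2 ∣ w.natAbs
      · -- only possible for `q = 3` and `E ≡ 3` modulo `9`
        have hsq' : (q : ℤ) ^ 2 ∣ w := by exact_mod_cast Int.natCast_dvd.2 hsq
        have h2 : ¬ (q : ℤ) ^ 2 ∣ q.choose 3 * g.re ^ r * (E * g.im ^ 2) := by
          intro h3
          have h4 : (q : ℤ) ^ 2 ∣ (q : ℤ) * g.re ^ (r + 2) := by
            have e1 : (q : ℤ) * g.re ^ (r + 2) = w + q.choose 3 * g.re ^ r * (E * g.im ^ 2)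
              - (E * g.im ^ 2) ^ 2 * e := by rw [← hw]; ring
            rw [e1]
            exact dvd_sub (dvd_add hsq' h3) ((pow_dvd_pow_of_dvd h1 2).mul_right _)
          rw [pow_two, mul_dvd_mul_iff_left hqP.ne_zero] at h4
          exact hqre (hqP.dvd_of_dvd_pow h4)
        have hq3' : q = 3 := by
          by_contra hne
          apply h2
          have h5 : (q : ℤ) ∣ q.choose 3 := by
            exact_mod_cast hq.dvd_choose_self (by norm_num) (by omega)
          rw [pow_two]
          exact mul_dvd_mul (h5.mul_right _) h1
        subst hq3'
        obtain rfl : r = 0 := by omega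
        have h9 : ¬ (9 : ℤ) ∣ E * g.im ^ 2 := by
          intro h; apply h2; simpa using h
        have h3v : ¬ (3 : ℤ) ∣ g.im := by
          intro h
          apply h9
          have := (pow_dvd_pow_of_dvd h 2).mul_left (E : ℤ)
          norm_num at this
          exact this
        have h3E : (3 : ℤ) ∣ E := by
          rcases hqP.dvd_or_dvd h1 with h | h
          · exact h
          · exact absurd (hqP.dvd_of_dvd_pow h) h3v
        refine ⟨rfl, ?_, h3v⟩
        have h9E : ¬ (9 : ℤ) ∣ E := fun h => h9 (h.mul_right _)
        by_contra hne
        have h6 : E % 9 = 6 := by omega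
        have h3u : ¬ (3 : ℤ) ∣ g.re := hqre
        have h7 : (9 : ℤ) ∣ 3 * g.re ^ 2 - E * g.im ^ 2 := by
          have e1 : 3 * g.re ^ 2 - E * g.im ^ 2 = w - (E * g.im ^ 2) ^ 2 * e := by
            rw [← hw]; simp
          rw [e1]
          exact dvd_sub hsq' ((pow_dvd_pow_of_dvd h1 2).mul_right _)
        have sqmod : ∀ x : ℤ, ¬ (3 : ℤ) ∣ x → ∃ y, x ^ 2 = 3 * y + 1 := by
          intro x hx
          have : x % 3 = 1 ∨ x % 3 = 2 := by omega
          rcases this with h | h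
          · refine ⟨3 * (x / 3) ^ 2 + 2 * (x / 3), ?_⟩
            have : x = 3 * (x / 3) + 1 := by omega
            generalize x / 3 = z at *
            subst this; ring
          · refine ⟨3 * (x / 3) ^ 2 + 4 * (x / 3) + 1, ?_⟩
            have : x = 3 * (x / 3) + 2 := by omega
            generalize x / 3 = z at *
            subst this; ring
        obtain ⟨y1, hy1⟩ := sqmod _ h3u
        obtain ⟨y2, hy2⟩ := sqmod _ h3v
        obtain ⟨E', hE'⟩ : ∃ E' : ℤ, (E : ℤ) = 9 * E' + 6 := ⟨E / 9, by omega⟩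
        rw [hy1, hy2, hE'] at h7
        ring_nf at h7
        omega
      · exfalso
        obtain ⟨b, hb⟩ := hqw
        have hb1 : b = 1 := by
          apply eq_one_of_no_prime
          intro p hp hpb
          have : p = q := hpw p hp (by rw [hb]; exact hpb.mul_left _)
          subst this
          exact hsq (by rw [hb, pow_two]; exact Nat.mul_dvd_mul_left _ hpb)
        rw [hb1, mul_one] at hb
        rw [hb] at hwX hVW
        have hcop2 : Nat.Coprime q 2 := Nat.coprime_two_right.2 (Nat.odd_iff.2 hqodd)
        refine size_contra (N := E * W ^ 2) hq3 ?_ hwX hXS hSN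
        have hqW : q ∣ W := hcop2.dvd_of_dvd_mul_left ⟨g.im.natAbs, by rw [← hVW]; ring⟩
        by_cases hqE : q ∣ E
        · have e1 := Nat.le_of_dvd hE hqE
          have e2 := Nat.pow_le_pow_left (Nat.le_of_dvd hW0 hqW) 2
          calc q ^ 3 = q * q ^ 2 := by ring
            _ ≤ E * W ^ 2 := Nat.mul_le_mul e1 e2
        · obtain ⟨v', hv'⟩ := Int.natCast_dvd.1 (hj q hq hqk hqE)
          have h22 : q ^ 2 ∣ W := by
            refine (hcop2.pow_left 2).dvd_of_dvd_mul_left ⟨v', ?_⟩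
            rw [← hVW, hv']; ring
          have e1 := Nat.le_of_dvd hW0 h22
          have e2 := Nat.pow_le_pow_left e1 2
          calc q ^ 3 ≤ (q ^ 2) ^ 2 := by
                rw [← pow_mul]; exact Nat.pow_le_pow_right hq.pos (by norm_num)
            _ ≤ W ^ 2 := e2
            _ ≤ E * W ^ 2 := Nat.le_mul_of_pos_left _ hE
    · exfalso
      have hw1 : w.natAbs = 1 := by
        apply eq_one_of_no_prime
        intro p hp hpd
        exact hqw (hpw p hp hpd ▸ hpd)
      rw [hw1] at hwX
      simp only [one_pow, one_mul] at hwX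
      rw [hwX] at hXS
      have hN0 : 0 < E * W ^ 2 := by positivity
      have e1 : (4 * (E * W ^ 2)) ^ 2 ≤ (4 * (E * W ^ 2)) ^ q :=
        Nat.pow_le_pow_right (by omega) (by omega)
      nlinarith

/-- If every prime factor of `(γ ^ k).im` outside `E` already divides `(γ ^ t).im`, then `k` divides
`t`, or `k / gcd k t = 3` and `E ≡ 3` modulo `9`. -/
theorem index_bound {E c n k t W S : ℕ} {γ : ℤ√(-(E : ℤ))} (hE : 0 < E)
    (hγ : γ.norm = (c : ℤ) ^ n)
    (hc : ∀ p : ℕ, p.Prime → (p : ℤ) ∣ E * (γ ^ k).im → ¬ p ∣ c)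
    (hW : (γ ^ k).im.natAbs = 2 * W) (hW0 : 0 < W) (hS : (c ^ n) ^ k = S ^ 2)
    (hSN : S < E * W ^ 2) (ht : 0 < t)
    (hT : ∀ p : ℕ, p.Prime → (p : ℤ) ∣ (γ ^ k).im → ¬ p ∣ E → (p : ℤ) ∣ (γ ^ t).im) :
    k ≤ t ∨ (E % 9 = 3 ∧ k ≤ 3 * t) := by
  have hdt : Nat.gcd k t ≤ t := Nat.gcd_le_right _ ht
  obtain ⟨r, hr⟩ := Nat.gcd_dvd_left k t
  have hd : ∀ p : ℕ, p.Prime → (p : ℤ) ∣ (γ ^ k).im → ¬ p ∣ E →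
      (p : ℤ) ∣ (γ ^ (Nat.gcd k t)).im := by
    intro p hp h1 h2
    refine prime_dvd_im_gcd hp ?_ k t h1 (hT p hp h1 h2)
    intro h3
    rw [hγ] at h3
    have := (Nat.prime_iff_prime_int.1 hp).dvd_of_dvd_pow h3
    exact hc p hp (h1.mul_left _) (by exact_mod_cast this)
  generalize Nat.gcd k t = d at *
  have key : ∀ q s : ℕ, q.Prime → r = q * s →
      q = 3 ∧ E % 9 = 3 ∧ ¬ (3 : ℤ) ∣ (γ ^ (d * s)).im := by
    intro q s hq hs
    refine step_contra hE hγ hc hW hW0 hS hSN hq (by rw [hr, hs]; ring) ?_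
    intro p hp h1 h2
    rw [pow_mul]
    exact (hd p hp h1 h2).trans (im_dvd_im_pow _ _)
  by_cases hr1 : r = 1
  · left; rw [hr, hr1]; omega
  · right
    obtain ⟨q, hq, s, hs⟩ := Nat.exists_prime_and_dvd hr1
    obtain ⟨rfl, hE9, h3⟩ := key q s hq hs
    refine ⟨hE9, ?_⟩
    have hs1 : s = 1 := by
      apply eq_one_of_no_prime
      rintro p hp ⟨s', rfl⟩
      obtain ⟨rfl, -, -⟩ := key p (3 * s') hp (by rw [hs]; ring)
      apply h3
      rw [show d * (3 * s') = (d * s') * 3 by ring, pow_mul]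
      generalize γ ^ (d * s') = g
      have e : (g ^ 3).im = 3 * (g.re ^ 2 * g.im) - E * g.im ^ 3 := by
        simp [pow_succ]; ring
      rw [e]
      have h3E : (3 : ℤ) ∣ E := by omega
      exact dvd_sub (Dvd.intro _ rfl) (h3E.mul_right _)
    rw [hr, hs, hs1]; omega

/-! ### Order and exponent attached to a solution -/

/-- For `P + Q = c ^ z` with `P * Q = E * W ^ 2`, the element `P - Q + 2 W √-E` has norm
`c ^ (2 * z)` and is, up to sign, a power `γ ^ k` of an element of norm `c ^ n` with `n` bounded by
`order_bounds`. The exponent `k` is bounded by any common rank of apparition `t` of the primes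
dividing `2 * W` but not `E`, up to a factor `3` when `E ≡ 3` modulo `9`. -/
theorem core {P Q c z E W : ℕ} (hP : 2 ≤ P) (hQ : 2 ≤ Q) (hPQ : P.Coprime Q)
    (h : P + Q = c ^ z) (hc : Odd c) (hz : 0 < z) (hEW : E * W ^ 2 = P * Q) :
    ∃ (n k : ℕ) (γ : ℤ√(-(E : ℤ))), 0 < n ∧ 2 * z = n * k ∧
      ((E = 1 → n ≤ 1) ∧ (E = 3 → n ≤ 1) ∧ (2 ≤ E → 4 * n < 3 * E) ∧
        (E % 9 = 3 → 12 ≤ E → 18 * n < 5 * E)) ∧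
      (∀ p : ℕ, p.Prime → p ∣ 2 * W → ¬ (p : ℤ) ∣ γ.norm) ∧
      (∀ t : ℕ, 0 < t → (∀ p : ℕ, p.Prime → p ∣ 2 * W → ¬ p ∣ E → (p : ℤ) ∣ (γ ^ t).im) →
        k ≤ t ∨ (E % 9 = 3 ∧ k ≤ 3 * t)) := by
  have hc0 : 0 < c := hc.pos
  have hN0 : 0 < E * W ^ 2 := by rw [hEW]; positivity
  have hE : 0 < E := Nat.pos_of_mul_pos_right hN0
  have hW0 : 0 < W := by
    rcases Nat.eq_zero_or_pos W with rfl | h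
    · simp at hN0
    · exact h
  have hSN : c ^ z < E * W ^ 2 := by
    rw [hEW, ← h]
    obtain ⟨P', rfl⟩ := Nat.exists_eq_add_of_le hP
    obtain ⟨Q', rfl⟩ := Nat.exists_eq_add_of_le hQ
    rcases Nat.eq_zero_or_pos P' with rfl | h1
    · rcases Nat.eq_zero_or_pos Q' with rfl | h2
      · norm_num at hPQ
      · nlinarith
    · nlinarith
  have hcz : Nat.Coprime (P * Q) c := by
    have h1 : Nat.Coprime (P * Q) (c ^ z) := by
      rw [← h]
      refine Nat.Coprime.mul_left ?_ ?_
      · simpa using hPQ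
      · simpa using hPQ.symm
    exact (Nat.coprime_pow_right_iff hz _ _).1 h1
  have hEWc : Nat.Coprime (E * W ^ 2) c := hEW ▸ hcz
  have hEc : Nat.Coprime E c := hEWc.coprime_mul_right
  have hWc : Nat.Coprime (2 * W) c :=
    Nat.Coprime.mul_left (Nat.coprime_two_left.2 hc)
      ((Nat.coprime_pow_left_iff two_pos _ _).1 hEWc.coprime_mul_left)
  have hEci : IsCoprime (E : ℤ) (c : ℤ) := Nat.isCoprime_iff_coprime.2 hEc
  have hWci : IsCoprime ((2 * W : ℕ) : ℤ) ((c : ℤ) ^ (2 * z)) :=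
    (Nat.isCoprime_iff_coprime.2 hWc).pow_right
  have hPQz : ((P : ℤ) + Q) = (c : ℤ) ^ z := by exact_mod_cast h
  have hEWz : (E : ℤ) * W ^ 2 = P * Q := by exact_mod_cast hEW
  obtain ⟨Γ, hΓ⟩ : ∃ Γ : ℤ√(-(E : ℤ)), Γ = ⟨(P : ℤ) - Q, ((2 * W : ℕ) : ℤ)⟩ := ⟨_, rfl⟩
  have hΓre : Γ.re = (P : ℤ) - Q := by rw [hΓ]
  have hΓim : Γ.im = ((2 * W : ℕ) : ℤ) := by rw [hΓ]
  have hΓn : Γ.norm = (c : ℤ) ^ (2 * z) := by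
    rw [norm_comp, hΓre, hΓim, mul_comm 2 z, pow_mul, ← hPQz]
    push_cast
    linear_combination 4 * hEWz
  -- the root `s` of `-E` attached to the ideal generated by `Γ`
  obtain ⟨s, hs⟩ : ∃ s : ℤ, (c : ℤ) ^ (2 * z) ∣ Γ.re - s * Γ.im := by
    obtain ⟨u, v, huv⟩ := hWci
    refine ⟨Γ.re * u, Γ.re * v, ?_⟩
    rw [hΓim]
    linear_combination (-Γ.re) * huv
  have hsE : (c : ℤ) ^ (2 * z) ∣ s ^ 2 + E := by
    have h1 : (c : ℤ) ^ (2 * z) ∣ ((2 * W : ℕ) : ℤ) ^ 2 * (s ^ 2 + E) := by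
      have e : ((2 * W : ℕ) : ℤ) ^ 2 * (s ^ 2 + E) = (c : ℤ) ^ (2 * z)
          - (Γ.re - s * Γ.im) * (Γ.re + s * Γ.im) := by
        rw [← hΓn, norm_comp, hΓim]; ring
      rw [e]
      exact dvd_sub dvd_rfl (hs.mul_right _)
    exact (hWci.symm.pow_right).dvd_of_dvd_mul_left h1
  have hsc : IsCoprime s (c : ℤ) := by
    obtain ⟨m, hm⟩ := (dvd_pow_self (c : ℤ) (by omega : 2 * z ≠ 0)).trans hsE
    have h1 : IsCoprime (s ^ 2) (c : ℤ) := by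
      have e : s ^ 2 = -(E : ℤ) + c * m := by linear_combination hm
      rw [e]
      exact hEci.neg_left.add_mul_left_left m
    exact (IsCoprime.pow_left_iff two_pos).1 h1
  have hex : ∃ i, 0 < i ∧ ∃ ξ : ℤ√(-(E : ℤ)), ξ.norm = (c : ℤ) ^ i ∧ InKer c s i ξ :=
    ⟨2 * z, by omega, Γ, hΓn, hs⟩
  classical
  obtain ⟨hn0, γ, hγN, hγ⟩ := Nat.find_spec hex
  have hnle : Nat.find hex ≤ 2 * z := Nat.find_min' hex ⟨by omega, Γ, hΓn, hs⟩
  have hmin : ∀ i, 0 < i → i < Nat.find hex → ∀ ξ : ℤ√(-(E : ℤ)), ξ.norm = (c : ℤ) ^ i →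
      ¬ InKer c s i ξ := fun i h0 hi ξ h1 h2 => Nat.find_min hex hi ⟨h0, ξ, h1, h2⟩
  generalize Nat.find hex = n at *
  have hob := order_bounds hE hc hsc ((pow_dvd_pow _ hnle).trans hsE) hmin
  obtain ⟨k, ε, hk, hε, hΓγ⟩ := exists_pow_eq hc0 hn0 hγN hγ hmin (2 * z) hsE Γ hΓn hs
  have hWk : (γ ^ k).im.natAbs = 2 * W := by
    -- for `E = 1` the units `± √-1` are excluded by parity, as `k` is even and `P - Q` odd
    have main : ε.im = 0 ∧ (ε.re = 1 ∨ ε.re = -1) := by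
      rw [norm_comp] at hε
      have him : ε.im = 0 := by
        by_contra hne
        have h1 : 1 ≤ ε.im ^ 2 := by
          have := sq_pos_of_ne_zero hne
          omega
        have hE1 : E = 1 := by
          have : (E : ℤ) ≤ 1 := by nlinarith [sq_nonneg ε.re]
          omega
        have hn1 : n = 1 := by have := hob.1 hE1; omega
        have hre0 : ε.re = 0 := by
          have : ε.re ^ 2 ≤ 0 := by
            have : (E : ℤ) = 1 := by exact_mod_cast hE1
            nlinarith
          exact pow_eq_zero_iff two_ne_zero |>.1 (le_antisymm this (sq_nonneg _))
        have e1 := congrArg Zsqrtd.re hΓγ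
        rw [Zsqrtd.re_mul, hre0, hΓre] at e1
        have e2 : (γ ^ k).im = 2 * ((γ ^ z).re * (γ ^ z).im) := by
          rw [← one_mul k, ← hn1, ← hk, mul_comm 2 z, pow_mul, pow_two, Zsqrtd.im_mul]; ring
        rw [e2] at e1
        have hodd : (P + Q) % 2 = 1 := by rw [h]; exact Nat.odd_iff.1 (hc.pow)
        have e3 : (P : ℤ) - Q = 2 * (-(E : ℤ) * ε.im * ((γ ^ z).re * (γ ^ z).im)) := by
          linear_combination e1
        omega
      refine ⟨him, ?_⟩
      rw [him] at hε
      have : (ε.re - 1) * (ε.re + 1) = 0 := by linear_combination hε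
      rcases mul_eq_zero.1 this with h1 | h1
      · left; omega
      · right; omega
    have e1 := congrArg Zsqrtd.im hΓγ
    rw [Zsqrtd.im_mul, main.1, hΓim] at e1
    rcases main.2 with h1 | h1 <;> rw [h1] at e1 <;> omega
  have hdvd : ∀ p : ℕ, (p : ℤ) ∣ (γ ^ k).im ↔ p ∣ 2 * W := by
    intro p; rw [Int.natCast_dvd, hWk]
  refine ⟨n, k, γ, hn0, hk, hob, ?_, ?_⟩
  · intro p hp hpW hpN
    rw [hγN] at hpN
    have h1 : p ∣ c := by exact_mod_cast (Nat.prime_iff_prime_int.1 hp).dvd_of_dvd_pow hpN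
    exact hp.one_lt.ne' (Nat.dvd_one.1 (hWc ▸ Nat.dvd_gcd hpW h1))
  · intro t ht hT
    refine index_bound hE hγN ?_ hWk hW0 (S := c ^ z) ?_ hSN ht ?_
    · intro p hp h1 h2
      rcases (Nat.prime_iff_prime_int.1 hp).dvd_or_dvd h1 with h3 | h3
      · exact hp.one_lt.ne' (Nat.dvd_one.1
          (hEc ▸ Nat.dvd_gcd (Int.natCast_dvd_natCast.1 h3) h2))
      · exact hp.one_lt.ne' (Nat.dvd_one.1 (hWc ▸ Nat.dvd_gcd ((hdvd p).1 h3) h2))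
    · rw [← pow_mul, ← hk, mul_comm 2 z, pow_mul]
    · intro p hp h1 h2
      exact hT p hp ((hdvd p).1 h1) h2

/-! ### Products of ranks of apparition -/

/-- The product of `(p + 1) / 2` over the odd primes `p` dividing `m`. -/
def halfProd (m : ℕ) : ℕ := ∏ p ∈ m.primeFactors.erase 2, (p + 1) / 2

theorem three_le_of_mem {m p : ℕ} (h : p ∈ m.primeFactors.erase 2) : 3 ≤ p := by
  have h1 := Finset.ne_of_mem_erase h
  have h2 := (Nat.prime_of_mem_primeFactors (Finset.mem_of_mem_erase h)).two_le
  omega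

/-- The product of the ranks of apparition given by `exists_rank` serves all odd prime factors of `m`. -/
theorem exists_common_rank {E m : ℕ} (hm : m ≠ 0) {γ : ℤ√(-(E : ℤ))}
    (h : ∀ p : ℕ, p.Prime → p ≠ 2 → p ∣ m → ¬ p ∣ E ∧ ¬ (p : ℤ) ∣ γ.norm) :
    ∃ τ, 0 < τ ∧ τ ≤ halfProd m ∧
      ∀ p : ℕ, p.Prime → p ≠ 2 → p ∣ m → (p : ℤ) ∣ (γ ^ (2 * τ)).im := by
  have h1 : ∀ p : ℕ, ∃ τ, p ∈ m.primeFactors.erase 2 →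
      0 < τ ∧ τ ≤ (p + 1) / 2 ∧ (p : ℤ) ∣ (γ ^ (2 * τ)).im := by
    intro p
    by_cases hp : p ∈ m.primeFactors.erase 2
    · have hpp := Nat.prime_of_mem_primeFactors (Finset.mem_of_mem_erase hp)
      have hp2 := Finset.ne_of_mem_erase hp
      obtain ⟨hE, hN⟩ := h p hpp hp2 (Nat.dvd_of_mem_primeFactors (Finset.mem_of_mem_erase hp))
      obtain ⟨τ, hτ⟩ := exists_rank hpp hp2 hE hN
      exact ⟨τ, fun _ => hτ⟩
    · exact ⟨0, fun h => absurd h hp⟩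
  choose τ hτ using h1
  refine ⟨∏ p ∈ m.primeFactors.erase 2, τ p, Finset.prod_pos fun p hp => (hτ p hp).1,
    Finset.prod_le_prod' fun p hp => (hτ p hp).2.1, ?_⟩
  intro p hpp hp2 hpm
  have hp : p ∈ m.primeFactors.erase 2 :=
    Finset.mem_erase.2 ⟨hp2, Nat.mem_primeFactors.2 ⟨hpp, hpm, hm⟩⟩
  obtain ⟨r, hr⟩ := Finset.dvd_prod_of_mem τ hp
  rw [hr, ← mul_assoc, pow_mul]
  exact (hτ p hp).2.2.trans (im_dvd_im_pow _ _)

theorem halfProd_pos (m : ℕ) : 0 < halfProd m :=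
  Finset.prod_pos fun p hp => by have := three_le_of_mem hp; omega

theorem halfProd_le (m : ℕ) : halfProd m ≤ ∏ p ∈ m.primeFactors.erase 2, p :=
  Finset.prod_le_prod' fun p hp => by have := three_le_of_mem hp; omega

/-- Each factor `(q + 1) / 2` is at most `q`; a better ratio `e / d` at one prime `p` carries over to the
whole product. -/
theorem halfProd_ratio {m p d e : ℕ} (hp : p ∈ m.primeFactors.erase 2)
    (h : d * ((p + 1) / 2) ≤ e * p) :
    d * halfProd m ≤ e * ∏ p ∈ m.primeFactors.erase 2, p := by
  unfold halfProd
  rw [← Finset.mul_prod_erase _ _ hp, ← Finset.mul_prod_erase _ (fun p => p) hp, ← mul_assoc,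
    ← mul_assoc]
  exact Nat.mul_le_mul h (Finset.prod_le_prod' fun q hq => by
    have := three_le_of_mem (Finset.mem_of_mem_erase hq); omega)

theorem prod_odd_le_of_odd {m : ℕ} (hm : m ≠ 0) : ∏ p ∈ m.primeFactors.erase 2, p ≤ m :=
  Nat.le_of_dvd (Nat.pos_of_ne_zero hm)
    ((Finset.prod_dvd_prod_of_subset _ _ _ (Finset.erase_subset _ _)).trans
      (Nat.prod_primeFactors_dvd m))

theorem two_mul_prod_le {m : ℕ} (hm : m ≠ 0) (h2 : 2 ∣ m) :
    2 * ∏ p ∈ m.primeFactors.erase 2, p ≤ m := by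
  refine Nat.le_of_dvd (Nat.pos_of_ne_zero hm) ?_
  have h : 2 ∈ m.primeFactors := Nat.mem_primeFactors.2 ⟨Nat.prime_two, h2, hm⟩
  rw [Finset.mul_prod_erase m.primeFactors (fun p => p) h]
  exact Nat.prod_primeFactors_dvd m

theorem halfProd_odd {m : ℕ} (hm : 2 ≤ m) (h2 : m % 2 = 1) :
    3 * halfProd m ≤ 2 * m ∧ (¬ 3 ∣ m → 5 * halfProd m ≤ 3 * m) := by
  obtain ⟨p, hp, hpm⟩ := Nat.exists_prime_and_dvd (show m ≠ 1 by omega)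
  have hp2 : p ≠ 2 := by rintro rfl; omega
  have hmem : p ∈ m.primeFactors.erase 2 :=
    Finset.mem_erase.2 ⟨hp2, Nat.mem_primeFactors.2 ⟨hp, hpm, by omega⟩⟩
  have hp3 := three_le_of_mem hmem
  have hle := prod_odd_le_of_odd (show m ≠ 0 by omega)
  constructor
  · exact (halfProd_ratio (d := 3) (e := 2) hmem (by omega)).trans (Nat.mul_le_mul_left _ hle)
  · intro h3
    have hp3' : p ≠ 3 := by rintro rfl; exact h3 hpm
    have hp4 : p ≠ 4 := by rintro rfl; norm_num at hp
    exact (halfProd_ratio (d := 5) (e := 3) hmem (by omega)).trans (Nat.mul_le_mul_left _ hle)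

theorem halfProd_even {m : ℕ} (hm : 2 < m) (h2 : m % 2 = 0) : 2 * halfProd m < m := by
  have hle := two_mul_prod_le (show m ≠ 0 by omega) (by omega)
  rcases (m.primeFactors.erase 2).eq_empty_or_nonempty with h | ⟨p, hp⟩
  · unfold halfProd
    rw [h, Finset.prod_empty]
    omega
  · have hp3 := three_le_of_mem hp
    have h1 := halfProd_ratio (d := 3) (e := 2) hp (by omega)
    have h3 := halfProd_pos m
    omega

theorem halfProd_two : halfProd 2 = 1 := by
  unfold halfProd
  rw [Nat.prime_two.primeFactors]
  simp

theorem even_im_pow {E : ℕ} (γ : ℤ√(-(E : ℤ))) (τ : ℕ) : (2 : ℤ) ∣ (γ ^ (2 * τ)).im := by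
  refine ⟨(γ ^ τ).re * (γ ^ τ).im, ?_⟩
  rw [mul_comm 2 τ, pow_mul, pow_two, Zsqrtd.im_mul]
  ring

/-! ### The parity cases -/

/-- For `x ≥ 2`, reduction modulo `9` makes `4 ^ j` a cube, and `3 ^ x` as a difference of two cubes
is impossible since `c ^ 2 + c * d + d ^ 2` is not divisible by `9`; for `x = 1`, use `9` and
`7`. -/
theorem no_cube {x j c : ℕ} (hj : 0 < j) (hx : 0 < x) : 3 ^ x + 4 ^ j ≠ c ^ 3 := by
  intro h
  have hc9 : c ^ 3 % 9 = 0 ∨ c ^ 3 % 9 = 1 ∨ c ^ 3 % 9 = 8 := by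
    have : c % 9 < 9 := Nat.mod_lt _ (by norm_num)
    rw [Nat.pow_mod]
    interval_cases c % 9 <;> norm_num
  have hc7 : c ^ 3 % 7 = 0 ∨ c ^ 3 % 7 = 1 ∨ c ^ 3 % 7 = 6 := by
    have : c % 7 < 7 := Nat.mod_lt _ (by norm_num)
    rw [Nat.pow_mod]
    interval_cases c % 7 <;> norm_num
  obtain ⟨i, r, hr, rfl⟩ : ∃ i r, r < 3 ∧ j = 3 * i + r :=
    ⟨j / 3, j % 3, Nat.mod_lt _ (by norm_num), (Nat.div_add_mod j 3).symm⟩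
  -- `4 ^ 3 = 64` is `1` modulo `63 = 7 * 9`
  have h63 : 4 ^ (3 * i + r) % 63 = 4 ^ r := by
    rw [pow_add, pow_mul, Nat.mul_mod, Nat.pow_mod]
    interval_cases r <;> norm_num
  rcases Nat.lt_or_ge x 2 with hx2 | hx2
  · obtain rfl : x = 1 := by omega
    generalize 4 ^ (3 * i + r) = F at *
    interval_cases r <;> norm_num at h63 <;> omega
  · obtain ⟨x', rfl⟩ := Nat.exists_eq_add_of_le hx2
    have h9 : (3 ^ (2 + x')) % 9 = 0 := by rw [pow_add]; omega
    have hr0 : r = 0 := by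
      generalize 4 ^ (3 * i + r) = F at *
      interval_cases r <;> norm_num at h63 <;> omega
    subst hr0
    have hi : 1 ≤ i := by omega
    rw [add_zero, mul_comm 3 i, pow_mul] at h
    have hd3 : 4 ^ i % 3 = 1 := by rw [Nat.pow_mod]; norm_num
    have hd4 : 4 ≤ 4 ^ i := by
      calc 4 = 4 ^ 1 := by norm_num
        _ ≤ 4 ^ i := Nat.pow_le_pow_right (by norm_num) hi
    generalize 4 ^ i = d at *
    have hdc : d ≤ c := by
      by_contra hlt
      have := Nat.pow_le_pow_left (show c ≤ d by omega) 3
      have : 0 < 3 ^ (2 + x') := by positivity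
      omega
    obtain ⟨f, rfl⟩ := Nat.exists_eq_add_of_le hdc
    have h1 : 3 * d ^ 2 + 3 * d * f + f ^ 2 ∣ 3 ^ (2 + x') :=
      ⟨f, by nlinarith⟩
    obtain ⟨m, -, hm⟩ := (Nat.dvd_prime_pow Nat.prime_three).1 h1
    have hm2 : 2 ≤ m := by
      by_contra hlt
      have : 3 ^ m ≤ 3 ^ 1 := Nat.pow_le_pow_right (by norm_num) (by omega)
      nlinarith
    have h2 : (3 * d ^ 2 + 3 * d * f + f ^ 2) % 9 = 0 := by
      obtain ⟨m', rfl⟩ := Nat.exists_eq_add_of_le hm2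
      rw [hm, pow_add]; omega
    obtain ⟨d', rfl⟩ : ∃ d', d = 3 * d' + 1 := ⟨d / 3, by omega⟩
    obtain ⟨f', s, hs, rfl⟩ : ∃ f' s, s < 3 ∧ f = 3 * f' + s :=
      ⟨f / 3, f % 3, Nat.mod_lt _ (by norm_num), (Nat.div_add_mod f 3).symm⟩
    ring_nf at h2
    interval_cases s <;> omega

/-- The case of one odd and one even exponent, with `E = a`: the primes dividing `2 * W` but not `E` are
`2` and those of `b`. -/
theorem one_odd {a b c x y z : ℕ} (ha : 2 ≤ a) (hb : 2 ≤ b) (hab : a.Coprime b) (hc : Odd c)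
    (hz : 0 < z) (h : a ^ (2 * x + 1) + b ^ (2 * y + 2) = c ^ z) : 2 * z < a * b := by
  have hpar : (a % 2 = 1 ∧ b % 2 = 0) ∨ (a % 2 = 0 ∧ b % 2 = 1) := by
    have h1 : (a ^ (2 * x + 1) + b ^ (2 * y + 2)) % 2 = 1 := by
      rw [h]; exact Nat.odd_iff.1 hc.pow
    rcases Nat.mod_two_eq_zero_or_one a with h2 | h2 <;>
      rcases Nat.mod_two_eq_zero_or_one b with h3 | h3 <;>
      simp [Nat.add_mod, Nat.pow_mod, h2, h3] at h1 ⊢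
  obtain ⟨n, k, γ, hn, hk, ⟨-, hob3, hob, hob9⟩, hN, ht⟩ := core
    (P := a ^ (2 * x + 1)) (Q := b ^ (2 * y + 2)) (E := a) (W := a ^ x * b ^ (y + 1))
    (ha.trans (Nat.le_self_pow (by omega) a)) (hb.trans (Nat.le_self_pow (by omega) b))
    (hab.pow _ _) h hc hz (by ring)
  have hob := hob ha
  have hpb : ∀ p : ℕ, p.Prime → p ∣ b → ¬ p ∣ a := fun p hp h1 h2 =>
    hp.one_lt.ne' (Nat.dvd_one.1 (hab ▸ Nat.dvd_gcd h2 h1))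
  obtain ⟨τ, hτ0, hτH, hτ⟩ := exists_common_rank (m := b) (γ := γ) (by omega) (by
    intro p hp hp2 hpd
    refine ⟨hpb p hp hpd, hN p hp ?_⟩
    exact ((hpd.trans (dvd_pow_self b (by omega))).mul_left _).mul_left _)
  have hk2 := ht (2 * τ) (by omega) (by
    intro p hp hpd hpa
    by_cases hp2 : p = 2
    · subst hp2; exact_mod_cast even_im_pow γ τ
    · refine hτ p hp hp2 ?_
      rcases (hp.dvd_mul).1 hpd with h1 | h1
      · exact absurd ((Nat.prime_dvd_prime_iff_eq hp Nat.prime_two).1 h1) hp2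
      · rcases (hp.dvd_mul).1 h1 with h1 | h1
        · exact absurd (hp.dvd_of_dvd_pow h1) hpa
        · exact hp.dvd_of_dvd_pow h1)
  have hH0 := halfProd_pos b
  have hzH : z ≤ n * halfProd b ∨ (a % 9 = 3 ∧ z ≤ n * (3 * halfProd b)) := by
    rcases hk2 with h1 | ⟨h0, h1⟩
    · left
      have : n * k ≤ n * (2 * halfProd b) := Nat.mul_le_mul_left n (by omega)
      have e : n * (2 * halfProd b) = 2 * (n * halfProd b) := by ring
      omega
    · right
      refine ⟨h0, ?_⟩
      have : n * k ≤ n * (6 * halfProd b) := Nat.mul_le_mul_left n (by omega)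
      have e : n * (6 * halfProd b) = 2 * (n * (3 * halfProd b)) := by ring
      omega
  rcases hpar with ⟨ha2, hb2⟩ | ⟨ha2, hb2⟩
  · have hHb : 2 * halfProd b ≤ b ∧ (2 < b → 2 * halfProd b < b) := by
      refine ⟨?_, fun h => halfProd_even h hb2⟩
      rcases hb.eq_or_lt with rfl | hb
      · rw [halfProd_two]
      · exact (halfProd_even hb hb2).le
    rcases hzH with h1 | ⟨h9, h1⟩
    · have : n * (2 * halfProd b) ≤ n * b := Nat.mul_le_mul_left _ hHb.1
      have : n * b < a * b := Nat.mul_lt_mul_of_pos_right (by omega) (by omega)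
      linarith
    · rcases Nat.lt_or_ge a 12 with hlt | hge
      · obtain rfl : a = 3 := by omega
        obtain rfl : n = 1 := by have := hob3 rfl; omega
        rcases hb.eq_or_lt with rfl | hb
        -- for `a = 3`, `b = 2` the general bound only gives `z ≤ 3`
        · rw [halfProd_two] at h1
          have : z ≠ 3 := by
            rintro rfl
            refine no_cube (x := 2 * x + 1) (j := y + 1) (c := c) (by omega) (by omega) ?_
            rw [← h, show 2 * y + 2 = 2 * (y + 1) by ring, pow_mul 2]; norm_num
          omega
        · have := hHb.2 hb
          omega
      · have h2 := hob9 h9 hge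
        have : n * (2 * halfProd b) ≤ n * b := Nat.mul_le_mul_left _ hHb.1
        have : 3 * n * b < a * b := Nat.mul_lt_mul_of_pos_right (by omega) (by omega)
        linarith
  · have hHb := halfProd_odd hb hb2
    rcases hzH with h1 | ⟨h9, h1⟩
    · have h2 : 4 * n * (3 * halfProd b) ≤ 4 * n * (2 * b) := Nat.mul_le_mul_left _ hHb.1
      have h3 : 4 * n * b < 3 * a * b := Nat.mul_lt_mul_of_pos_right (by omega) (by omega)
      linarith
    · have h2 := hob9 h9 (by omega)
      have h3b : ¬ 3 ∣ b := fun h3 => hpb 3 Nat.prime_three h3 (by omega)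
      have h3 : 18 * n * (5 * halfProd b) ≤ 18 * n * (3 * b) :=
        Nat.mul_le_mul_left _ (hHb.2 h3b)
      have h4 : 18 * n * b < 5 * a * b := Nat.mul_lt_mul_of_pos_right (by omega) (by omega)
      linarith

/-- The case of two odd exponents, with `E = a * b`: every prime dividing `2 * W` divides `E`. -/
theorem both_odd {a b c x y z : ℕ} (ha : 2 ≤ a) (hb : 2 ≤ b) (hab : a.Coprime b) (hc : Odd c)
    (hz : 0 < z) (h2 : (a * b) % 2 = 0) (h : a ^ (2 * x + 1) + b ^ (2 * y + 1) = c ^ z) :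
    2 * z < a * b := by
  obtain ⟨n, k, γ, hn, hk, ⟨-, -, hob, hob9⟩, -, ht⟩ := core
    (P := a ^ (2 * x + 1)) (Q := b ^ (2 * y + 1)) (E := a * b) (W := a ^ x * b ^ y)
    (ha.trans (Nat.le_self_pow (by omega) a)) (hb.trans (Nat.le_self_pow (by omega) b))
    (hab.pow _ _) h hc hz (by ring)
  have h4 : 4 ≤ a * b := Nat.mul_le_mul ha hb
  have hob := hob (by omega)
  rcases ht 1 one_pos (by
    intro p hp hpd hpa
    exfalso
    apply hpa
    rcases (hp.dvd_mul).1 hpd with h1 | h1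
    · exact h1.trans (by omega)
    · rcases (hp.dvd_mul).1 h1 with h1 | h1
      · exact (hp.dvd_of_dvd_pow h1).mul_right _
      · exact (hp.dvd_of_dvd_pow h1).mul_left _) with h1 | ⟨h9, h1⟩
  · have := Nat.mul_le_mul_left n h1
    omega
  · have := Nat.mul_le_mul_left n h1
    have := hob9 h9 (by omega)
    omega

/-- The case of two even exponents, in the Gaussian integers `E = 1`, where every ideal is principal. -/
theorem both_even {a b c x y z : ℕ} (ha : 2 ≤ a) (hb : 2 ≤ b) (hab : a.Coprime b) (hc : Odd c)
    (hz : 0 < z) (h2 : (a * b) % 2 = 0) (h : a ^ (2 * x + 2) + b ^ (2 * y + 2) = c ^ z) :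
    2 * z < a * b := by
  obtain ⟨n, k, γ, hn, hk, ⟨hob, -⟩, hN, ht⟩ := core
    (P := a ^ (2 * x + 2)) (Q := b ^ (2 * y + 2)) (E := 1) (W := a ^ (x + 1) * b ^ (y + 1))
    (ha.trans (Nat.le_self_pow (by omega) a)) (hb.trans (Nat.le_self_pow (by omega) b))
    (hab.pow _ _) h hc hz (by ring)
  obtain rfl : n = 1 := by have := hob rfl; omega
  have h4 : 4 ≤ a * b := Nat.mul_le_mul ha hb
  obtain ⟨τ, hτ0, hτH, hτ⟩ := exists_common_rank (m := a * b) (γ := γ) (by omega) (by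
    intro p hp hp2 hpd
    refine ⟨hp.not_dvd_one, hN p hp ?_⟩
    refine (hpd.trans ?_).mul_left _
    exact mul_dvd_mul (dvd_pow_self a (by omega)) (dvd_pow_self b (by omega)))
  have hH := halfProd_even (show 2 < a * b by omega) h2
  rcases ht (2 * τ) (by omega) (by
    intro p hp hpd _
    by_cases hp2 : p = 2
    · subst hp2; exact_mod_cast even_im_pow γ τ
    · refine hτ p hp hp2 ?_
      rcases (hp.dvd_mul).1 hpd with h1 | h1
      · exact absurd ((Nat.prime_dvd_prime_iff_eq hp Nat.prime_two).1 h1) hp2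
      · rcases (hp.dvd_mul).1 h1 with h1 | h1
        · exact (hp.dvd_of_dvd_pow h1).mul_right _
        · exact (hp.dvd_of_dvd_pow h1).mul_left _) with h1 | ⟨h9, -⟩
  · omega
  · omega

theorem stmt_1 (a b c : ℕ) (ha : 0 < a) (hb : 0 < b) (hc : 0 < c)
    (hab : Nat.Coprime a b) (hac : Nat.Coprime a c) (hbc : Nat.Coprime b c)
    (hmin : 1 < min a (min b c)) (hodd : Odd c)
    (x y z : ℕ) (hx : 0 < x) (hy : 0 < y) (hz : 0 < z)
    (heq : a ^ x + b ^ y = c ^ z) :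
    (z : ℝ) < (1 / 2) * a * b := by
  have ha2 : 2 ≤ a := by simp only [lt_min_iff] at hmin; omega
  have hb2 : 2 ≤ b := by simp only [lt_min_iff] at hmin; omega
  have hab2 : (a * b) % 2 = 0 := by
    have h1 : (a ^ x + b ^ y) % 2 = 1 := by rw [heq]; exact Nat.odd_iff.1 hodd.pow
    rcases Nat.mod_two_eq_zero_or_one a with h2 | h2
    · simp [Nat.mul_mod, h2]
    · rcases Nat.mod_two_eq_zero_or_one b with h3 | h3
      · simp [Nat.mul_mod, h3]
      · simp [Nat.add_mod, Nat.pow_mod, h2, h3] at h1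
  have main : 2 * z < a * b := by
    obtain ⟨x', rfl | rfl⟩ : ∃ x', x = 2 * x' + 1 ∨ x = 2 * x' + 2 := ⟨(x - 1) / 2, by omega⟩ <;>
      obtain ⟨y', rfl | rfl⟩ : ∃ y', y = 2 * y' + 1 ∨ y = 2 * y' + 2 := ⟨(y - 1) / 2, by omega⟩
    · exact both_odd ha2 hb2 hab hodd hz hab2 heq
    · exact one_odd ha2 hb2 hab hodd hz heq
    · rw [mul_comm a b]
      exact one_odd hb2 ha2 hab.symm hodd hz (by rw [add_comm]; exact heq)
    · exact both_even ha2 hb2 hab hodd hz hab2 heq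
  have h : (2 : ℝ) * z < a * b := by exact_mod_cast main
  linarith
end

section
/- Let a, b, c be coprime positive integers with min{a,b,c} > 1 and c odd. Then every solution (x,y,z) in positive integers of a^x + b^y = c^z satisfies z < (2/π)·a·b·log(2·e·a·b), where log is the natural logarithm and e is Euler's number. -/
/-!
Write `a ^ x = A X²` and `b ^ y = B Y²` with `A = a ^ x₀`, `B = b ^ y₀`, `x₀, y₀ ∈ {1, 2}`, and put
`D = A B`. Then `D = d f²` with `d f = a b`. The element `(√A X + √-B Y)²` of `ℤ[√-D]` has norm
`c ^ (2z)`, and since `c` is odd and prime to `D` it lies in the `2z`-th power of an ideal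
`(c, r + √-D)` of norm `c`.

*A principal power.* Among the powers `0, …, T` of the ideal `(c, r₀ + √-d)` of `ℤ[√-d]`, two have the
same reduced shape and the same position relative to the order `ℤ[f √-d]`, where `T = classBound d f`
counts the reduced shapes (at most `d`) times the points of the projective line over `ℤ/f`. Their
quotient is a principal power of exponent `n ≤ T ≤ a b (1 + log (a b))`; this is `exists_generator`.
No class group is needed, only Gauss reduction of lattice bases and the pigeonhole principle.

*The root.* For the least such `n`, `2z = n q`. Here `q` is odd, as otherwise `A X²` and `B Y²`
would be `u²` and `D v²` in some order, against coprimality. Hence `n = 2m` and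
`√A X + √-B Y = ± (√A X₁ + √-B Y₁) ^ q` with `A X₁² + B Y₁² = c ^ m`; this is `exists_root`.

*The exponent `q`.* If `q > 1`, split off a prime factor `p` of `q` and write
`(√U + √-V) ^ p = R √U + S √-V`. As `R`, `S` divide powers of `a`, `b`, all primes dividing `R` divide
`U` and all primes dividing `S` divide `V`, which forces `R` and `S` to be powers of `p` up to sign
(`cofactor_bound`). They are then too small for `U R² + V S² = (U + V) ^ p`, except possibly when
`p = 3` and `U + V ≤ 13` (`prime_step`), and this gives `z ≤ 6`. If `q = 1`, then `2z = n ≤ T`.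
In both cases `z` is below the stated bound because `1 / 2 < 2 / π` and `6 ≤ a b`.
-/

/-! ### Pigeonhole on reduced bases -/

/-- Elements of nonzero norm are cancellable in `ℤ√D` (which has no domain instance for `D < 0`). -/
lemma zsqrtd_cancel {D : ℤ} {k x y : ℤ√D} (hk : k.norm ≠ 0) (h : k * x = k * y) : x = y := by
  apply Zsqrtd.eq_of_smul_eq_smul_left hk
  rw [Zsqrtd.norm_eq_mul_conj]
  linear_combination (star k) * h

/-- `(l, μ)` is a `ℤ`-basis of the lattice `{u + v√-d : q ∣ u - r v}`, with `μ / l = (b + √-d) / m`,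
norm of `l` equal to `m q`, and `m m' = b² + d`. In other words the norm form of the lattice, divided
by `q`, is `(m, 2b, m')`. Generation is recorded only for the two generators `q` and `r + √-d`. -/
structure LatticeBasis (d : ℕ) (q r : ℤ) (l μ : ℤ√(-(d : ℤ))) (m b m' : ℤ) : Prop where
  m_pos : 0 < m
  disc : m * m' = b ^ 2 + d
  norm_l : l.norm = m * q
  ratio : (m : ℤ√(-(d : ℤ))) * μ = l * ⟨b, 1⟩
  mem_l : q ∣ l.re - r * l.im
  mem_μ : q ∣ μ.re - r * μ.im
  gen_q : ∃ s t : ℤ, (s : ℤ√(-(d : ℤ))) * l + t * μ = (q : ℤ√(-(d : ℤ)))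
  gen_r : ∃ s t : ℤ, (s : ℤ√(-(d : ℤ))) * l + t * μ = ⟨r, 1⟩

lemma LatticeBasis.shift {d : ℕ} {q r : ℤ} {l μ : ℤ√(-(d : ℤ))} {m b m' : ℤ}
    (h : LatticeBasis d q r l μ m b m') (k : ℤ) :
    LatticeBasis d q r l (μ + k * l) m (b + k * m) (m' + 2 * k * b + k ^ 2 * m) := by
  refine ⟨h.m_pos, ?_, h.norm_l, ?_, h.mem_l, ?_, ?_, ?_⟩
  · linear_combination h.disc
  · have e : (⟨b + k * m, 1⟩ : ℤ√(-(d : ℤ))) = ⟨b, 1⟩ + k * m := by ext <;> simp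
    rw [e]
    linear_combination h.ratio
  · have e : (μ + k * l).re - r * (μ + k * l).im
        = (μ.re - r * μ.im) + k * (l.re - r * l.im) := by simp; ring
    rw [e]
    exact dvd_add h.mem_μ (Dvd.dvd.mul_left h.mem_l k)
  · obtain ⟨s, t, e⟩ := h.gen_q
    exact ⟨s - t * k, t, by push_cast; linear_combination e⟩
  · obtain ⟨s, t, e⟩ := h.gen_r
    exact ⟨s - t * k, t, by push_cast; linear_combination e⟩

lemma LatticeBasis.swap {d : ℕ} (hd : 0 < d) {q r : ℤ} {l μ : ℤ√(-(d : ℤ))} {m b m' : ℤ}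
    (h : LatticeBasis d q r l μ m b m') :
    LatticeBasis d q r μ (-l) m' (-b) m := by
  have hm := h.m_pos
  have hm' : 0 < m' := by
    have h1 := h.disc
    have h2 : 0 < m * m' := by rw [h1]; positivity
    exact pos_of_mul_pos_right h2 hm.le
  refine ⟨hm', ?_, ?_, ?_, h.mem_μ, ?_, ?_, ?_⟩
  · linear_combination h.disc
  · have h1 := congrArg Zsqrtd.norm h.ratio
    rw [Zsqrtd.norm_mul, Zsqrtd.norm_mul, Zsqrtd.norm_intCast, h.norm_l] at h1
    have h2 : (⟨b, 1⟩ : ℤ√(-(d : ℤ))).norm = m * m' := by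
      rw [Zsqrtd.norm_def, h.disc]; ring
    rw [h2] at h1
    have h3 : (m * m) * μ.norm = (m * m) * (m' * q) := by linear_combination h1
    exact mul_left_cancel₀ (by positivity) h3
  · have h1 : ((m * m' : ℤ) : ℤ√(-(d : ℤ))) = -(⟨b, 1⟩ * ⟨-b, 1⟩) := by
      rw [h.disc]; ext <;> simp [-Int.cast_pow, -Int.cast_add, -Int.cast_mul]
      ring
    apply Zsqrtd.eq_of_smul_eq_smul_left hm.ne'
    push_cast at h1
    linear_combination (-l) * h1 - (⟨-b, 1⟩ : ℤ√(-(d : ℤ))) * h.ratio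
  · have e : (-l).re - r * (-l).im = -(l.re - r * l.im) := by simp; ring
    rw [e]
    exact (dvd_neg).2 h.mem_l
  · obtain ⟨s, t, e⟩ := h.gen_q
    exact ⟨t, -s, by push_cast; linear_combination e⟩
  · obtain ⟨s, t, e⟩ := h.gen_r
    exact ⟨t, -s, by push_cast; linear_combination e⟩

/-- Gauss reduction: every lattice basis can be improved until `3 m² ≤ 4 d`. -/
lemma LatticeBasis.reduce {d : ℕ} (hd : 0 < d) {q r : ℤ} :
    ∀ (n : ℕ) {l μ : ℤ√(-(d : ℤ))} {m b m' : ℤ}, LatticeBasis d q r l μ m b m' → m.toNat ≤ n →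
    ∃ (l μ : ℤ√(-(d : ℤ))) (m b m' : ℤ), LatticeBasis d q r l μ m b m' ∧ 3 * m ^ 2 ≤ 4 * d := by
  intro n
  induction n with
  | zero =>
    intro l μ m b m' h hn
    have := h.m_pos
    omega
  | succ n ih =>
    intro l μ m b m' h hn
    have hm := h.m_pos
    -- translate so that `|2b| ≤ m`
    obtain ⟨k, hk1, hk2⟩ : ∃ k : ℤ, -m ≤ 2 * (b + k * m) ∧ 2 * (b + k * m) ≤ m := by
      refine ⟨-((2 * b + m) / (2 * m)), ?_, ?_⟩
      · have := Int.mul_ediv_self_le (x := 2 * b + m) (k := 2 * m) (by omega)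
        linarith
      · have := Int.lt_mul_ediv_self_add (x := 2 * b + m) (k := 2 * m) (by omega)
        linarith
    have h2 := h.shift k
    set B := b + k * m
    set M := m' + 2 * k * b + k ^ 2 * m
    by_cases hlt : M < m
    · have h3 := h2.swap hd
      have := h3.m_pos
      exact ih h3 (by omega)
    · refine ⟨_, _, _, _, _, h2, ?_⟩
      have := h2.disc
      nlinarith [mul_le_mul_of_nonneg_left (not_lt.1 hlt) hm.le]

lemma exists_reduced {d : ℕ} (hd : 0 < d) {q r : ℤ} (hq : 0 < q) (hr : q ∣ r ^ 2 + d) :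
    ∃ (l μ : ℤ√(-(d : ℤ))) (m b m' : ℤ), LatticeBasis d q r l μ m b m' ∧ 3 * m ^ 2 ≤ 4 * d ∧
      0 ≤ b ∧ b < m := by
  obtain ⟨m0, hm0⟩ := hr
  have h0 : LatticeBasis d q r (q : ℤ√(-(d : ℤ))) ⟨r, 1⟩ q r m0 := by
    refine ⟨hq, hm0.symm, ?_, rfl, ?_, ?_, ⟨1, 0, by simp⟩, ⟨0, 1, by simp⟩⟩
    · rw [Zsqrtd.norm_intCast]
    · simp
    · simp
  obtain ⟨l, μ, m, b, m', h, h3⟩ := h0.reduce hd _ le_rfl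
  have hm := h.m_pos
  refine ⟨l, _, m, _, _, h.shift (-(b / m)), h3, ?_, ?_⟩
  · have := Int.mul_ediv_self_le (x := b) (k := m) hm.ne'
    linarith
  · have := Int.lt_mul_ediv_self_add (x := b) (k := m) hm
    linarith

/-- The solutions `(s, t)` of `s p + t q ≡ 0 (mod f)`, for `p, q, f` without common factor, depend only
on `g = gcd(p, f)` and on a residue `κ` modulo `f / g`: this encodes the point `(p : q)` of the
projective line over `ℤ/f`. -/
lemma exists_slope {f : ℕ} (hf : 0 < f) {p q : ℤ} (hpq : ∃ s t : ℤ, s * p + t * q = 1) :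
    ∃ g κ : ℕ, 1 ≤ g ∧ g ≤ f ∧ κ < f / g ∧ g ∣ f ∧
      ∀ s t : ℤ, (f : ℤ) ∣ s * p + t * q ↔
        ∃ t1 : ℤ, t = g * t1 ∧ ((f / g : ℕ) : ℤ) ∣ s + t1 * κ := by
  obtain ⟨s0, t0, h0⟩ := hpq
  set g := Int.gcd p f with hg
  have hgf : g ∣ f := Int.natCast_dvd_natCast.1 (Int.gcd_dvd_right p f)
  have hg0 : 0 < g := Nat.pos_of_dvd_of_pos hgf hf
  obtain ⟨e, he⟩ := hgf
  obtain ⟨p', hp'⟩ : (g : ℤ) ∣ p := Int.gcd_dvd_left p f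
  have he0 : 0 < e := by
    rcases Nat.eq_zero_or_pos e with h | h
    · subst h; omega
    · exact h
  have hfe : f / g = e := by rw [he]; exact Nat.mul_div_cancel_left e hg0
  -- Bezout for `gcd(p, f) = g` makes `p' = p / g` invertible modulo `e = f / g`
  have hbez := Int.gcd_eq_gcd_ab p f
  rw [← hg] at hbez
  set i := Int.gcdA p f
  set j := Int.gcdB p f
  have hg0' : (g : ℤ) ≠ 0 := by positivity
  have hfz : (f : ℤ) = g * e := by exact_mod_cast he
  have hinv : p' * i + e * j = 1 := by
    apply mul_left_cancel₀ hg0'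
    rw [hfz] at hbez
    linear_combination -hbez - i * hp'
  have heZ : (0 : ℤ) < e := by exact_mod_cast he0
  refine ⟨g, ((q * i) % e).toNat, hg0, Nat.le_of_dvd hf ⟨e, he⟩, ?_, ⟨e, he⟩, ?_⟩
  · rw [hfe]
    have := Int.emod_lt_of_pos (q * i) heZ
    have := Int.emod_nonneg (q * i) heZ.ne'
    omega
  · intro s t
    rw [hfe, Int.toNat_of_nonneg (Int.emod_nonneg _ heZ.ne')]
    have hmod : (e : ℤ) ∣ (q * i) % e - q * i := by
      rw [Int.emod_def]; exact ⟨-(q * i / e), by ring⟩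
    have key : ∀ t1 : ℤ, (e : ℤ) ∣ s + t1 * ((q * i) % e) ↔ (e : ℤ) ∣ s * p' + t1 * q := by
      intro t1
      have e1 : s + t1 * ((q * i) % e) = (s + t1 * (q * i)) + t1 * ((q * i) % e - q * i) := by ring
      rw [e1, dvd_add_left (Dvd.dvd.mul_left hmod t1)]
      constructor
      · rintro ⟨w, hw⟩
        exact ⟨w * p' + t1 * q * j, by linear_combination p' * hw - t1 * q * hinv⟩
      · rintro ⟨w, hw⟩
        exact ⟨w * i + s * j, by linear_combination i * hw - s * hinv⟩
    constructor
    · rintro ⟨w, hw⟩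
      have hgt : (g : ℤ) ∣ t := by
        refine ⟨t * s0 * p' + t0 * (e * w - s * p'), ?_⟩
        rw [hfz] at hw
        linear_combination (-t) * h0 + t0 * hw + (t * s0 - t0 * s) * hp'
      obtain ⟨t1, ht1⟩ := hgt
      refine ⟨t1, ht1, (key t1).2 ⟨w, ?_⟩⟩
      apply mul_left_cancel₀ hg0'
      rw [hfz] at hw
      linear_combination hw - s * hp' - q * ht1
    · rintro ⟨t1, ht1, hdv⟩
      obtain ⟨w, hw⟩ := (key t1).1 hdv
      refine ⟨w, ?_⟩
      rw [hfz]
      linear_combination g * hw + s * hp' + q * ht1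

/-- The number of pigeonholes: `d` bounds the number of reduced pairs `(m, b)` and the sum bounds the
number of points of the projective line over `ℤ/f`. -/
def classBound (d f : ℕ) : ℕ := d * ∑ g ∈ Finset.Icc 1 f, f / g

lemma classBound_le (d f : ℕ) : (classBound d f : ℝ) ≤ d * f * (1 + Real.log f) := by
  unfold classBound
  have h1 : ((∑ g ∈ Finset.Icc 1 f, f / g : ℕ) : ℝ) ≤ f * (harmonic f : ℝ) := by
    rw [harmonic_eq_sum_Icc]
    push_cast
    rw [Finset.mul_sum]
    apply Finset.sum_le_sum
    intro g _
    rw [← div_eq_mul_inv]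
    exact Nat.cast_div_le
  have h2 := harmonic_le_one_add_log f
  push_cast at h1 ⊢
  rw [mul_assoc]
  gcongr
  exact h1.trans (by gcongr)

lemma card_reduced_le {d : ℕ} (hd : 0 < d) :
    ((Finset.Icc 1 (Nat.sqrt (4 * d / 3))).sigma (fun m => Finset.range m)).card ≤ d := by
  rw [Finset.card_sigma]
  simp only [Finset.card_range]
  set M := Nat.sqrt (4 * d / 3)
  have hM : 3 * (M * M) ≤ 4 * d := by
    have : M * M ≤ 4 * d / 3 := Nat.sqrt_le _
    omega
  have hs : ∀ M : ℕ, 2 * ∑ m ∈ Finset.Icc 1 M, m = M * (M + 1) := by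
    intro M
    induction M with
    | zero => simp
    | succ k ih => rw [Finset.sum_Icc_succ_top (by omega), mul_add, ih]; ring
  have h2 := hs M
  rcases Nat.lt_or_ge M 2 with h | h
  · interval_cases M <;> omega
  · nlinarith

/-- If the lattices attached to `c ^ i` and `c ^ j` have the same reduced shape, their quotient is
principal. -/
lemma quotient_principal {d : ℕ} {c r : ℤ} (hc : 0 < c) {i j : ℕ} (hij : i ≤ j)
    (hr : c ^ j ∣ r ^ 2 + d) (hcd : IsCoprime c (2 * d))
    {l μ l' μ' : ℤ√(-(d : ℤ))} {m b m1 m2 : ℤ}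
    (h : LatticeBasis d (c ^ i) r l μ m b m1) (h' : LatticeBasis d (c ^ j) r l' μ' m b m2)
    {f : ℤ} (hcf : IsCoprime c f)
    (hpt : ∀ s t : ℤ, f ∣ s * l.im + t * μ.im → f ∣ s * l'.im + t * μ'.im) :
    ∃ β : ℤ√(-(d : ℤ)), β.norm = c ^ (j - i) ∧ c ^ (j - i) ∣ β.re - r * β.im ∧ f ∣ β.im := by
  have hm := h.m_pos
  obtain ⟨s, t, e1⟩ := h.gen_q
  obtain ⟨s', t', e2⟩ := h.gen_r
  have hx : l' * μ = l * μ' := by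
    apply Zsqrtd.eq_of_smul_eq_smul_left hm.ne'
    linear_combination l' * h.ratio - l * h'.ratio
  set ξ := (s : ℤ√(-(d : ℤ))) * l' + t * μ' with hξ
  set ζ := (s' : ℤ√(-(d : ℤ))) * l' + t' * μ' with hζ
  have hξρ : ξ * ⟨r, 1⟩ = ((c ^ i : ℤ) : ℤ√(-(d : ℤ))) * ζ := by
    rw [← e1, ← e2, hξ, hζ]
    linear_combination (s * t' - t * s') * hx
  have hξl : ξ * l = ((c ^ i : ℤ) : ℤ√(-(d : ℤ))) * l' := by
    rw [← e1, hξ]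
    linear_combination (-t : ℤ√(-(d : ℤ))) * hx
  have hmem : c ^ j ∣ ξ.re - r * ξ.im := by
    have e : ξ.re - r * ξ.im = s * (l'.re - r * l'.im) + t * (μ'.re - r * μ'.im) := by
      simp [hξ]; ring
    rw [e]
    exact dvd_add (Dvd.dvd.mul_left h'.mem_l _) (Dvd.dvd.mul_left h'.mem_μ _)
  have hci : c ^ i ∣ c ^ j := pow_dvd_pow c hij
  -- `c ^ i` divides both `ξ (r + √-d)` and `ξ (r - √-d)`, hence `2 d ξ`, hence `ξ`
  have hdiv : c ^ i ∣ ξ.re ∧ c ^ i ∣ ξ.im := by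
    have hre := congrArg Zsqrtd.re hξρ
    have him := congrArg Zsqrtd.im hξρ
    simp only [Zsqrtd.re_mul, Zsqrtd.im_mul, Zsqrtd.re_intCast, Zsqrtd.im_intCast] at hre him
    obtain ⟨w, hw⟩ := hci.trans hmem
    have cop : IsCoprime (c ^ i) (2 * d : ℤ) := hcd.pow_left
    have h1 : c ^ i ∣ 2 * d * ξ.re := by
      exact ⟨d * (ζ.im + w), by linear_combination d * him + d * hw⟩
    have h2 : c ^ i ∣ 2 * d * ξ.im := by
      obtain ⟨v, hv⟩ := hci.trans hr
      exact ⟨2 * ξ.im * v - r * (ζ.im - w),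
        by linear_combination 2 * ξ.im * hv - r * him + r * hw⟩
    exact ⟨cop.dvd_of_dvd_mul_left h1, cop.dvd_of_dvd_mul_left h2⟩
  obtain ⟨β, hβ⟩ := (Zsqrtd.intCast_dvd (c ^ i) ξ).2 hdiv
  have hci0 : (c ^ i) ≠ 0 := by positivity
  have hji : c ^ j = c ^ i * c ^ (j - i) := by rw [← pow_add]; congr 1; omega
  refine ⟨β, ?_, ?_, ?_⟩
  · have e3 : β * l = l' := by
      apply Zsqrtd.eq_of_smul_eq_smul_left hci0
      rw [← hξl, hβ]; ring
    have e4 := congrArg Zsqrtd.norm e3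
    rw [Zsqrtd.norm_mul, h.norm_l, h'.norm_l, hji] at e4
    have : (m * c ^ i) ≠ 0 := by positivity
    apply mul_right_cancel₀ this
    linear_combination e4
  · rw [hβ, hji] at hmem
    simp only [Zsqrtd.re_mul, Zsqrtd.im_mul, Zsqrtd.re_intCast, Zsqrtd.im_intCast] at hmem
    obtain ⟨w, hw⟩ := hmem
    exact ⟨w, mul_left_cancel₀ hci0 (by linear_combination hw)⟩
  · have h1 : f ∣ ξ.im := by
      have := hpt s t (by
        have := congrArg Zsqrtd.im e1
        simp only [Zsqrtd.im_mul, Zsqrtd.im_add, Zsqrtd.re_intCast, Zsqrtd.im_intCast] at this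
        rw [show s * l.im + t * μ.im = 0 by linarith]
        exact dvd_zero f)
      convert this using 1
      simp [hξ]
    rw [hβ] at h1
    have h2 : f ∣ c ^ i * β.im := by
      simpa only [Zsqrtd.im_mul, Zsqrtd.re_intCast, Zsqrtd.im_intCast, zero_mul, add_zero] using h1
    exact (hcf.symm.pow_right).dvd_of_dvd_mul_left h2

/-- If `r² ≡ -d (mod c ^ N)` and `N` is at least the number of pigeonholes, then some power of the
ideal `(c, r + √-d)` has a generator with imaginary part divisible by `f`. -/
lemma exists_generator {d f N : ℕ} {c r : ℤ} (hd : 0 < d) (hf : 0 < f) (hc : 0 < c)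
    (hcd : IsCoprime c (2 * d)) (hcf : IsCoprime c (f : ℤ))
    (hr : c ^ N ∣ r ^ 2 + d) (hN : classBound d f ≤ N) :
    ∃ (n : ℕ) (β : ℤ√(-(d : ℤ))), 0 < n ∧ n ≤ classBound d f ∧ β.norm = c ^ n ∧
      c ^ n ∣ β.re - r * β.im ∧ (f : ℤ) ∣ β.im := by
  have hrj : ∀ j : ℕ, j ≤ N → c ^ j ∣ r ^ 2 + d := fun j hj => (pow_dvd_pow c hj).trans hr
  have hex : ∀ j : Fin (classBound d f + 1),
      ∃ (l μ : ℤ√(-(d : ℤ))) (m b m' : ℤ) (g κ : ℕ), LatticeBasis d (c ^ (j : ℕ)) r l μ m b m' ∧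
        3 * m ^ 2 ≤ 4 * d ∧ 0 ≤ b ∧ b < m ∧ 1 ≤ g ∧ g ≤ f ∧ κ < f / g ∧ g ∣ f ∧
        ∀ s t : ℤ, (f : ℤ) ∣ s * l.im + t * μ.im ↔
          ∃ t1 : ℤ, t = g * t1 ∧ ((f / g : ℕ) : ℤ) ∣ s + t1 * κ := by
    intro j
    obtain ⟨l, μ, m, b, m', h, h3, h4, h5⟩ :=
      exists_reduced hd (q := c ^ (j : ℕ)) (r := r) (by positivity) (hrj j (by omega))
    obtain ⟨g, κ, h6⟩ := exists_slope hf (p := l.im) (q := μ.im) (by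
      obtain ⟨s, t, e⟩ := h.gen_r
      exact ⟨s, t, by simpa using congrArg Zsqrtd.im e⟩)
    exact ⟨l, μ, m, b, m', g, κ, h, h3, h4, h5, h6⟩
  choose l μ m b m' g κ hB hm hb0 hbm hg1 hgf hκ hgd hpt using hex
  let S := ((Finset.Icc 1 (Nat.sqrt (4 * d / 3))).sigma (fun m => Finset.range m)) ×ˢ
    ((Finset.Icc 1 f).sigma (fun g => Finset.range (f / g)))
  have hS : S.card ≤ classBound d f := by
    rw [Finset.card_product, classBound]
    refine Nat.mul_le_mul (card_reduced_le hd) ?_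
    rw [Finset.card_sigma]
    simp
  let F : Fin (classBound d f + 1) → (Σ _ : ℕ, ℕ) × (Σ _ : ℕ, ℕ) := fun j =>
    (⟨(m j).toNat, (b j).toNat⟩, ⟨g j, κ j⟩)
  have hF : ∀ j ∈ (Finset.univ : Finset (Fin (classBound d f + 1))), F j ∈ S := by
    intro j _
    have h1 := (hB j).m_pos
    have h2 := hm j
    have h3 := hb0 j
    have h4 := hbm j
    simp only [S, F, Finset.mem_product, Finset.mem_sigma, Finset.mem_Icc, Finset.mem_range]
    refine ⟨⟨⟨by omega, ?_⟩, by omega⟩, ⟨hg1 j, hgf j⟩, hκ j⟩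
    rw [Nat.le_sqrt, Nat.le_div_iff_mul_le (by norm_num)]
    zify
    rw [Int.toNat_of_nonneg h1.le]
    linarith
  obtain ⟨i, -, j, -, hij, hFij⟩ := Finset.exists_ne_map_eq_of_card_lt_of_maps_to
    (by simpa using Nat.lt_succ_of_le hS) hF
  wlog hlt : i < j generalizing i j
  · exact this j i hij.symm hFij.symm (lt_of_le_of_ne (not_lt.1 hlt) hij.symm)
  have e1 : (m i).toNat = (m j).toNat := congrArg (fun x => x.1.1) hFij
  have e2 : (b i).toNat = (b j).toNat := congrArg (fun x => x.1.2) hFij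
  have e3 : g i = g j := congrArg (fun x => x.2.1) hFij
  have e4 : κ i = κ j := congrArg (fun x => x.2.2) hFij
  have em : m i = m j := by
    have := (hB i).m_pos; have := (hB j).m_pos; omega
  have eb : b i = b j := by
    have := hb0 i; have := hb0 j; omega
  have hlt' : (i : ℕ) < j := hlt
  have hjN : (j : ℕ) ≤ N := by omega
  have hBi := hB i
  rw [em, eb] at hBi
  obtain ⟨β, h1, h2, h3⟩ := quotient_principal hc hlt'.le (hrj j hjN) hcd hBi (hB j) hcf
    (fun s t h => by rw [hpt i] at h; rw [hpt j, ← e3, ← e4]; exact h)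
  exact ⟨j - i, β, by omega, by omega, h1, h2, h3⟩

/-! ### Powers of a prime ideal of norm `c` -/

/-- Membership of `w` in the `j`-th power of the ideal `(c, r + √-D)`, when `c ^ j ∣ r² + D`. -/
def InLat {D : ℕ} (c r : ℤ) (j : ℕ) (w : ℤ√(-(D : ℤ))) : Prop := c ^ j ∣ w.re - r * w.im

section Lat

variable {D N : ℕ} {c r : ℤ}

lemma InLat.mul_star {j : ℕ} (hr : c ^ j ∣ r ^ 2 + D) {v w : ℤ√(-(D : ℤ))}
    (hv : InLat c r j v) (hw : InLat c r j w) : ((c ^ j : ℤ) : ℤ√(-(D : ℤ))) ∣ w * star v := by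
  rw [Zsqrtd.intCast_dvd]
  obtain ⟨x, hx⟩ := hv
  obtain ⟨y, hy⟩ := hw
  obtain ⟨t, ht⟩ := hr
  simp only [Zsqrtd.re_mul, Zsqrtd.im_mul, Zsqrtd.re_star, Zsqrtd.im_star]
  constructor
  · exact ⟨y * v.re + r * w.im * x + t * w.im * v.im,
      by linear_combination v.re * hy + r * w.im * hx + w.im * v.im * ht⟩
  · exact ⟨w.im * x - v.im * y, by linear_combination w.im * hx - v.im * hy⟩

lemma InLat.mono {i j : ℕ} (h : i ≤ j) {w : ℤ√(-(D : ℤ))} (hw : InLat c r j w) : InLat c r i w :=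
  (pow_dvd_pow c h).trans hw

/-- A generator `β` of the `n`-th power divides every member of the `j`-th power, `n ≤ j`. -/
lemma InLat.exists_div (hc : 0 < c) (hr : c ^ N ∣ r ^ 2 + D) {n j : ℕ} (hnj : n ≤ j) (hj : j ≤ N)
    {β w : ℤ√(-(D : ℤ))} (hβ : InLat c r n β) (hβn : β.norm = c ^ n) (hw : InLat c r j w) :
    ∃ w', w = β * w' ∧ InLat c r (j - n) w' := by
  have hrj : ∀ i ≤ N, c ^ i ∣ r ^ 2 + D := fun i hi => (pow_dvd_pow c hi).trans hr
  have hcn : (c ^ n : ℤ) ≠ 0 := by positivity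
  have hnorm : ((c ^ n : ℤ) : ℤ√(-(D : ℤ))) = β * star β := by
    rw [← hβn, Zsqrtd.norm_eq_mul_conj]
  have div : ∀ v : ℤ√(-(D : ℤ)), InLat c r n v → ∃ v', v = β * v' := by
    intro v hv
    obtain ⟨v', hv'⟩ := InLat.mul_star (hrj n (by omega)) hβ hv
    refine ⟨v', Zsqrtd.eq_of_smul_eq_smul_left hcn ?_⟩
    linear_combination β * hv' + v * hnorm
  obtain ⟨w', hw'⟩ := div w (hw.mono hnj)
  refine ⟨w', hw', ?_⟩
  have hρj : InLat c r j (⟨r, 1⟩ : ℤ√(-(D : ℤ))) := by simp [InLat]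
  obtain ⟨ρ', hρ'⟩ := div ⟨r, 1⟩ (hρj.mono hnj)
  obtain ⟨η, hη⟩ := InLat.mul_star (hrj j hj) hρj hw
  have hji : ((c ^ j : ℤ) : ℤ√(-(D : ℤ))) = (c ^ n : ℤ) * (c ^ (j - n) : ℤ) := by
    rw [← Int.cast_mul, ← pow_add]; congr 2; omega
  have h1 : w' * star ρ' = ((c ^ (j - n) : ℤ) : ℤ√(-(D : ℤ))) * η := by
    apply Zsqrtd.eq_of_smul_eq_smul_left hcn
    rw [hρ', hw', star_mul, hji] at hη
    linear_combination hη + w' * star ρ' * hnorm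
  have h2 : w' * star (⟨r, 1⟩ : ℤ√(-(D : ℤ)))
      = ((c ^ (j - n) : ℤ) : ℤ√(-(D : ℤ))) * (η * star β) := by
    rw [hρ', star_mul]
    linear_combination star β * h1
  have h3 := ((Zsqrtd.intCast_dvd _ _).1 ⟨_, h2⟩).2
  simp only [Zsqrtd.im_mul, Zsqrtd.re_star, Zsqrtd.im_star] at h3
  have e : w'.re - r * w'.im = -(w'.re * -1 + w'.im * r) := by ring
  rw [InLat, e]
  exact dvd_neg.2 h3

lemma InLat.exists_div_pow (hc : 0 < c) (hr : c ^ N ∣ r ^ 2 + D) {n j : ℕ} (hj : j ≤ N)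
    {β w : ℤ√(-(D : ℤ))} (hβ : InLat c r n β) (hβn : β.norm = c ^ n) (hw : InLat c r j w) (q : ℕ)
    (hq : n * q ≤ j) : ∃ w', w = β ^ q * w' ∧ InLat c r (j - n * q) w' := by
  induction q with
  | zero => exact ⟨w, by simp, by simpa using hw⟩
  | succ q ih =>
    have hq' : n * q + n ≤ j := by simpa [Nat.mul_succ] using hq
    obtain ⟨w', h1, h2⟩ := ih (by omega)
    obtain ⟨w'', h3, h4⟩ := InLat.exists_div hc hr (n := n) (by omega) (by omega) hβ hβn h2
    refine ⟨w'', by rw [h1, h3]; ring, ?_⟩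
    have : j - n * (q + 1) = j - n * q - n := by rw [Nat.mul_succ]; omega
    rwa [this]

end Lat

lemma zsqrtd_norm_pow_s2 {D : ℤ} (w : ℤ√D) (k : ℕ) : (w ^ k).norm = w.norm ^ k :=
  map_pow Zsqrtd.normMonoidHom w k

lemma eq_one_or_neg_one_of_norm {D : ℕ} (hD : 1 < D) {w : ℤ√(-(D : ℤ))} (h : w.norm = 1) :
    w = 1 ∨ w = -1 := by
  rw [Zsqrtd.norm_def] at h
  have hD' : (1 : ℤ) < D := by exact_mod_cast hD
  have h0 : w.im = 0 := by
    by_contra h0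
    have : 0 < w.im ^ 2 := by positivity
    nlinarith [sq_nonneg w.re]
  rw [h0] at h
  have h1 : (w.re - 1) * (w.re + 1) = 0 := by linear_combination h
  rcases mul_eq_zero.1 h1 with h2 | h2
  · left; ext
    · simpa using sub_eq_zero.1 h2
    · simpa using h0
  · right; ext
    · simpa using eq_neg_of_add_eq_zero_left h2
    · simpa using h0

/-! ### The form `A X² + B Y²` -/

/-- The element `(√A X + √-B Y)² = (A X² - B Y²) + 2 X Y √-D`, where `D = A B`. -/
def sqElt (D : ℕ) (A B X Y : ℤ) : ℤ√(-(D : ℤ)) := ⟨A * X ^ 2 - B * Y ^ 2, 2 * X * Y⟩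

lemma sqElt_norm {D : ℕ} {A B : ℤ} (hD : (D : ℤ) = A * B) (X Y : ℤ) :
    (sqElt D A B X Y).norm = (A * X ^ 2 + B * Y ^ 2) ^ 2 := by
  rw [sqElt, Zsqrtd.norm_def, hD]; ring

lemma elt_sq {D : ℕ} {A B : ℤ} (hD : (D : ℤ) = A * B) (X Y : ℤ) :
    (⟨A * X, Y⟩ : ℤ√(-(D : ℤ))) ^ 2 = (A : ℤ√(-(D : ℤ))) * sqElt D A B X Y := by
  rw [pow_two]
  ext <;> simp [sqElt, hD] <;> ring

lemma elt_norm {D : ℕ} {A B : ℤ} (hD : (D : ℤ) = A * B) (X Y : ℤ) :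
    (⟨A * X, Y⟩ : ℤ√(-(D : ℤ))).norm = A * (A * X ^ 2 + B * Y ^ 2) := by
  rw [Zsqrtd.norm_def, hD]; ring

set_option maxHeartbeats 1000000 in
/-- A solution of `A X² + B Y² = c ^ z` with large `z` is an odd power of one with small exponent:
`√A X + √-B Y = ± (√A X₁ + √-B Y₁) ^ (2k+1)`. -/
lemma exists_root {A B X Y c : ℤ} {D d f z : ℕ} (hA : 1 < A) (hB : 1 < B)
    (hD : (D : ℤ) = A * B) (hd : 0 < d) (hf : 0 < f) (hdf : D = d * f ^ 2)
    (hc : 1 < c) (hAY : IsCoprime A Y) (hBX : IsCoprime B X)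
    (hcA : IsCoprime c A) (hcB : IsCoprime c B) (hcX : IsCoprime c X) (hcY : IsCoprime c Y)
    (hc2 : IsCoprime c 2) (hz : 0 < z) (heq : A * X ^ 2 + B * Y ^ 2 = c ^ z)
    (hT : classBound d f ≤ 2 * z) :
    ∃ (m k : ℕ) (X1 Y1 : ℤ), z = m * (2 * k + 1) ∧ 2 * m ≤ classBound d f ∧
      A * X1 ^ 2 + B * Y1 ^ 2 = c ^ m ∧
      ((⟨A * X, Y⟩ : ℤ√(-(D : ℤ))) = sqElt D A B X1 Y1 ^ k * ⟨A * X1, Y1⟩ ∨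
       (⟨A * X, Y⟩ : ℤ√(-(D : ℤ))) = -(sqElt D A B X1 Y1 ^ k * ⟨A * X1, Y1⟩)) := by
  have hc0 : 0 < c := by linarith
  have hD1 : 1 < D := by zify; rw [hD]; nlinarith
  have hcD : IsCoprime c (d * f ^ 2 : ℤ) := by
    have : (d * f ^ 2 : ℤ) = A * B := by rw [← hD, hdf]; push_cast; ring
    rw [this]; exact hcA.mul_right hcB
  have hcd : IsCoprime c (d : ℤ) := hcD.of_mul_right_left
  have hcf : IsCoprime c (f : ℤ) := by
    have := hcD.of_mul_right_right
    rw [pow_two] at this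
    exact this.of_mul_right_left
  -- the residue `r₀` of `-√-d` modulo the `2z`-th power of the ideal, `r = f r₀` that of `-√-D`
  obtain ⟨u, v, huv⟩ : IsCoprime (c ^ (2 * z)) (f * (2 * X * Y)) :=
    (hcf.mul_right ((hc2.mul_right hcX).mul_right hcY)).pow_left
  set g := A * X ^ 2 - B * Y ^ 2 with hg
  have hgn : g ^ 2 + D * (2 * X * Y) ^ 2 = c ^ (2 * z) := by
    rw [mul_comm 2 z, pow_mul, ← heq, hD]; ring
  set r0 := v * g with hr0
  have hDf : (D : ℤ) = d * f ^ 2 := by rw [hdf]; push_cast; ring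
  have hr0d : c ^ (2 * z) ∣ r0 ^ 2 + d := by
    have h1 : c ^ (2 * z) ∣ (f * (2 * X * Y)) ^ 2 * (r0 ^ 2 + d) := by
      refine ⟨1 + g ^ 2 * (-2 * u + u ^ 2 * c ^ (2 * z)), ?_⟩
      rw [hDf] at hgn
      have e : v * (f * (2 * X * Y)) = 1 - u * c ^ (2 * z) := by linear_combination huv
      have e2 : (f * (2 * X * Y)) ^ 2 * (r0 ^ 2 + d)
        = (v * (f * (2 * X * Y))) ^ 2 * g ^ 2 + d * f ^ 2 * (2 * X * Y) ^ 2 := by rw [hr0]; ring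
      rw [e2, e]
      linear_combination hgn
    have h2 : IsCoprime (c ^ (2 * z)) ((f * (2 * X * Y)) ^ 2) :=
      (hcf.mul_right ((hc2.mul_right hcX).mul_right hcY)).pow
    exact h2.dvd_of_dvd_mul_left h1
  set r := f * r0 with hr
  have hrD : c ^ (2 * z) ∣ r ^ 2 + D := by
    rw [hDf]
    obtain ⟨t, ht⟩ := hr0d
    exact ⟨f ^ 2 * t, by rw [hr]; linear_combination (f : ℤ) ^ 2 * ht⟩
  have hG : InLat c r (2 * z) (sqElt D A B X Y) := by
    refine ⟨u * g, ?_⟩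
    simp only [sqElt, hr, hr0]
    rw [← hg]
    linear_combination (-g) * huv
  have hw : InLat c r z (⟨A * X, Y⟩ : ℤ√(-(D : ℤ))) := by
    have h1 : c ^ z ∣ (2 * X) * (A * X - r * Y) := by
      obtain ⟨t, ht⟩ := hG.mono (show z ≤ 2 * z by omega)
      simp only [sqElt] at ht
      exact ⟨t + 1, by linear_combination ht + heq⟩
    exact ((hc2.mul_right hcX).pow_left).dvd_of_dvd_mul_left h1
  -- a generator of some power of the ideal in `ℤ[√-D]`
  have hex : ∃ n, 0 < n ∧ n ≤ classBound d f ∧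
      ∃ β : ℤ√(-(D : ℤ)), β.norm = c ^ n ∧ InLat c r n β := by
    obtain ⟨n, β, h1, h2, h3, h4, w, hw⟩ :=
      exists_generator hd hf hc0 (hc2.mul_right hcd) hcf hr0d hT
    refine ⟨n, h1, h2, ⟨β.re, w⟩, ?_, ?_⟩
    · rw [← h3, Zsqrtd.norm_def, Zsqrtd.norm_def, hw, hDf]; ring
    · rw [InLat]
      convert h4 using 1
      rw [hw, hr]; ring
  classical
  obtain ⟨n, ⟨hn0, hnT, β, hβn, hβ⟩, hmin⟩ :
      ∃ n, (0 < n ∧ n ≤ classBound d f ∧ ∃ β : ℤ√(-(D : ℤ)), β.norm = c ^ n ∧ InLat c r n β) ∧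
        ∀ i < n, ¬ (0 < i ∧ i ≤ classBound d f ∧
          ∃ β : ℤ√(-(D : ℤ)), β.norm = c ^ i ∧ InLat c r i β) :=
    ⟨Nat.find hex, Nat.find_spec hex, fun i hi => Nat.find_min hex hi⟩
  have hcpow : ∀ i : ℕ, (c ^ i) ≠ 0 := fun i => by positivity
  set q := 2 * z / n with hq
  have hnq : n * q ≤ 2 * z := Nat.mul_div_le _ _
  have hrem : 2 * z - n * q < n := by
    have := Nat.lt_mul_div_succ (2 * z) hn0
    rw [← hq, Nat.mul_succ] at this
    omega
  obtain ⟨ε, hGε, hεlat⟩ := InLat.exists_div_pow hc0 hrD le_rfl hβ hβn hG q hnq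
  have hεn : ε.norm = c ^ (2 * z - n * q) := by
    have h1 := congrArg Zsqrtd.norm hGε
    rw [Zsqrtd.norm_mul, zsqrtd_norm_pow_s2, hβn, sqElt_norm hD, heq, ← pow_mul, ← pow_mul,
      show z * 2 = n * q + (2 * z - n * q) by omega, pow_add] at h1
    exact (mul_left_cancel₀ (hcpow _) h1).symm
  have hs : 2 * z - n * q = 0 := by
    by_contra h0
    exact hmin _ hrem ⟨by omega, by omega, ε, hεn, hεlat⟩
  rw [hs, pow_zero] at hεn
  have hε := eq_one_or_neg_one_of_norm hD1 hεn
  have hεz : ∃ e : ℤ, e ^ 2 = 1 ∧ ε = (e : ℤ√(-(D : ℤ))) ∧ (e = 1 ∨ e = -1) := by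
    rcases hε with h | h
    · exact ⟨1, by norm_num, by simp [h], Or.inl rfl⟩
    · exact ⟨-1, by norm_num, by simp [h], Or.inr rfl⟩
  obtain ⟨e, he2, hεe, he⟩ := hεz
  have hnq2 : n * q = 2 * z := by omega
  -- `q` is odd: otherwise `{A X², B Y²} = {u², D v²}`
  have hqodd : Odd q := by
    rw [← Nat.not_even_iff_odd]
    rintro ⟨k, hk⟩
    set γ := β ^ k with hγ
    have h1 : sqElt D A B X Y = γ ^ 2 * e := by
      rw [hGε, hεe, hγ, hk, ← pow_mul, mul_two]
    have hγn : γ.norm = c ^ z := by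
      rw [hγ, zsqrtd_norm_pow_s2, hβn, ← pow_mul]
      congr 1
      have : 2 * (n * k) = 2 * z := by rw [← hnq2, hk]; ring
      omega
    have hre := congrArg Zsqrtd.re h1
    rw [Zsqrtd.norm_def] at hγn
    simp only [sqElt, pow_two, Zsqrtd.re_mul, Zsqrtd.im_mul, Zsqrtd.re_intCast,
      Zsqrtd.im_intCast] at hre
    rcases he with rfl | rfl
    · have h2 : (2 * B) * Y ^ 2 = (2 * B) * (A * γ.im ^ 2) := by
        linear_combination heq - hre - hγn + 2 * γ.im ^ 2 * hD
      have h3 : Y ^ 2 = A * γ.im ^ 2 := mul_left_cancel₀ (by linarith) h2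
      have h4 : IsUnit A := (hAY.pow_right (n := 2)).isUnit_of_dvd' dvd_rfl ⟨_, h3⟩
      rcases Int.isUnit_iff.1 h4 with h | h <;> linarith
    · have h2 : (2 * A) * X ^ 2 = (2 * A) * (B * γ.im ^ 2) := by
        linear_combination heq + hre - hγn + 2 * γ.im ^ 2 * hD
      have h3 : X ^ 2 = B * γ.im ^ 2 := mul_left_cancel₀ (by linarith) h2
      have h4 : IsUnit B := (hBX.pow_right (n := 2)).isUnit_of_dvd' dvd_rfl ⟨_, h3⟩
      rcases Int.isUnit_iff.1 h4 with h | h <;> linarith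
  obtain ⟨k, hk⟩ := hqodd
  obtain ⟨m, hm⟩ : 2 ∣ n := by
    have h1 : 2 ∣ n * q := ⟨z, hnq2⟩
    rcases Nat.prime_two.dvd_mul.1 h1 with h | h
    · exact h
    · omega
  have hzm : z = m * (2 * k + 1) := by
    have : 2 * z = 2 * (m * (2 * k + 1)) := by rw [← hnq2, hm, hk]; ring
    omega
  have hnk : z - n * k = m ∧ n * k ≤ z := by
    have : n * k + m = z := by rw [hzm, hm]; ring
    omega
  obtain ⟨θ, hθ, -⟩ := InLat.exists_div_pow hc0 hrD (by omega) hβ hβn hw k hnk.2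
  have hβk : (β ^ k).norm = c ^ (n * k) := by rw [zsqrtd_norm_pow_s2, hβn, ← pow_mul]
  -- `A` divides the real part of `θ = w / β ^ k`
  have hAθ : A ∣ θ.re := by
    have h1 : ((c ^ (n * k) : ℤ) : ℤ√(-(D : ℤ))) * θ = star (β ^ k) * ⟨A * X, Y⟩ := by
      rw [hθ, ← hβk, Zsqrtd.norm_eq_mul_conj]; ring
    have h2 := congrArg Zsqrtd.re h1
    simp only [Zsqrtd.re_mul, Zsqrtd.re_intCast, Zsqrtd.im_intCast, hD] at h2
    have h3 : A ∣ c ^ (n * k) * θ.re :=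
      ⟨(star (β ^ k)).re * X - B * (star (β ^ k)).im * Y, by linear_combination h2⟩
    exact (hcA.symm.pow_right).dvd_of_dvd_mul_left h3
  obtain ⟨X1, hX1⟩ := hAθ
  set Y1 := θ.im with hY1
  have hθe : θ = ⟨A * X1, Y1⟩ := by
    ext
    · exact hX1
    · rfl
  have hnorm1 : A * X1 ^ 2 + B * Y1 ^ 2 = c ^ m := by
    have h1 := congrArg Zsqrtd.norm hθ
    rw [Zsqrtd.norm_mul, hβk, elt_norm hD, heq, hθe, elt_norm hD] at h1
    have h2 : c ^ z = c ^ (n * k) * c ^ m := by rw [← pow_add]; congr 1; omega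
    rw [h2] at h1
    have h3 : (A * c ^ (n * k)) * (A * X1 ^ 2 + B * Y1 ^ 2) = (A * c ^ (n * k)) * c ^ m := by
      linear_combination -h1
    exact mul_left_cancel₀ (mul_ne_zero (by linarith) (hcpow _)) h3
  -- `β = ± θ² / A`
  have hβE : β = (e : ℤ√(-(D : ℤ))) * sqElt D A B X1 Y1 := by
    have heD : (e : ℤ√(-(D : ℤ))) ^ 2 = 1 := by exact_mod_cast congrArg (Int.cast) he2
    have h1 : (β ^ (2 * k)) * (((A * e : ℤ) : ℤ√(-(D : ℤ))) * β)
        = (β ^ (2 * k)) * (((A * e : ℤ) : ℤ√(-(D : ℤ))) * (e * sqElt D A B X1 Y1)) := by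
      have h2 := elt_sq hD X Y
      have h3 := elt_sq hD X1 Y1
      rw [hθ, hGε, hεe, hk, hθe] at h2
      push_cast
      have h4 : (β ^ k * (⟨A * X1, Y1⟩ : ℤ√(-(D : ℤ)))) ^ 2
        = β ^ (2 * k) * (⟨A * X1, Y1⟩ : ℤ√(-(D : ℤ))) ^ 2 := by ring
      rw [h4, h3] at h2
      linear_combination -h2 - β ^ (2 * k) * A * sqElt D A B X1 Y1 * heD
    have h5 := zsqrtd_cancel (by rw [zsqrtd_norm_pow_s2, hβn, ← pow_mul]; exact hcpow _) h1
    refine Zsqrtd.eq_of_smul_eq_smul_left ?_ h5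
    rcases he with rfl | rfl <;> linarith
  refine ⟨m, k, X1, Y1, hzm, by omega, hnorm1, ?_⟩
  rw [hθ, hθe, hβE, mul_pow]
  rcases he with rfl | rfl
  · left; simp
  · rcases Nat.even_or_odd k with h | h
    · left; simp [h.neg_one_pow]
    · right; simp [h.neg_one_pow]

/-! ### The cofactors of an odd power -/

/-- The pair `(R, S)` with `(√U + √-V) ^ (2k+1) = R √U + S √-V`. -/
def cofactors (U V : ℤ) : ℕ → ℤ × ℤ
  | 0 => (1, 1)
  | k + 1 => ((U - V) * (cofactors U V k).1 - 2 * V * (cofactors U V k).2,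
      (U - V) * (cofactors U V k).2 + 2 * U * (cofactors U V k).1)

lemma sqElt_pow_mul {D : ℕ} {A B : ℤ} (hD : (D : ℤ) = A * B) (X Y : ℤ) (k : ℕ) :
    sqElt D A B X Y ^ k * ⟨A * X, Y⟩ =
      ⟨A * (X * (cofactors (A * X ^ 2) (B * Y ^ 2) k).1),
        Y * (cofactors (A * X ^ 2) (B * Y ^ 2) k).2⟩ := by
  induction k with
  | zero => simp [cofactors]
  | succ k ih =>
    rw [pow_succ', mul_assoc, ih]
    ext
    · simp [sqElt, cofactors, hD]; ring
    · simp [sqElt, cofactors]; ring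

lemma cofactors_swap (U V : ℤ) (k : ℕ) :
    cofactors V U k = ((-1) ^ k * (cofactors U V k).2, (-1) ^ k * (cofactors U V k).1) := by
  induction k with
  | zero => simp [cofactors]
  | succ k ih =>
    simp only [cofactors, ih, Prod.mk.injEq]
    constructor <;> ring

lemma cofactors_norm (U V : ℤ) (k : ℕ) :
    U * (cofactors U V k).1 ^ 2 + V * (cofactors U V k).2 ^ 2 = (U + V) ^ (2 * k + 1) := by
  induction k with
  | zero => simp [cofactors]
  | succ k ih =>
    rw [show 2 * (k + 1) + 1 = (2 * k + 1) + 2 by ring, pow_add, ← ih]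
    simp only [cofactors]; ring

/-- Binomial expansion of the cofactors modulo `U ^ 2`. -/
lemma cofactors_expand (U V : ℤ) (k : ℕ) : ∃ e e' : ℤ,
    (cofactors U V (k + 1)).1 = (2 * k + 3) * (-V) ^ (k + 1) +
      ((2 * k + 3).choose 3 : ℕ) * U * (-V) ^ k + U ^ 2 * e ∧
    (cofactors U V (k + 1)).2 = (-V) ^ (k + 1) +
      ((2 * k + 3).choose 2 : ℕ) * U * (-V) ^ k + U ^ 2 * e' := by
  induction k with
  | zero => exact ⟨0, 0, by simp [cofactors]; ring, by simp [cofactors, Nat.choose]; ring⟩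
  | succ k ih =>
    obtain ⟨e, e', h1, h2⟩ := ih
    have c3 : (2 * (k + 1) + 3).choose 3
        = (2 * k + 3).choose 3 + 2 * (2 * k + 3).choose 2 + (2 * k + 3) := by
      rw [show 2 * (k + 1) + 3 = (2 * k + 3) + 1 + 1 by ring, Nat.choose_succ_succ' _ 2,
        Nat.choose_succ_succ' _ 2, Nat.choose_succ_succ' _ 1, Nat.choose_one_right]
      ring
    have c2 : (2 * (k + 1) + 3).choose 2 = (2 * k + 3).choose 2 + 2 * (2 * k + 3) + 1 := by
      rw [show 2 * (k + 1) + 3 = (2 * k + 3) + 1 + 1 by ring, Nat.choose_succ_succ' _ 1,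
        Nat.choose_succ_succ' _ 1, Nat.choose_one_right, Nat.choose_one_right]
      ring
    rw [cofactors, h1, h2, c3, c2]
    push_cast
    generalize (((2 * k + 3).choose 3 : ℕ) : ℤ) = x
    generalize (((2 * k + 3).choose 2 : ℕ) : ℤ) = y
    refine ⟨(U - V) * e - 2 * V * e' + x * (-V) ^ k,
      (U - V) * e' + 2 * U * e + y * (-V) ^ k + 2 * x * (-V) ^ k, ?_, ?_⟩ <;> ring

/-- For an odd prime `p` the cofactor `R` is, up to sign, a power of `p` as soon as its prime factors
all divide `U`; it is `± 1` unless `p ∣ U`, and it divides `p` when `p ≥ 5`. -/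
lemma cofactor_bound {U V : ℤ} {p k : ℕ} (hp : p.Prime) (hpk : p = 2 * k + 1) (hUV : IsCoprime U V)
    (hR0 : (cofactors U V k).1 ≠ 0)
    (hR : ∀ l : ℕ, l.Prime → (l : ℤ) ∣ (cofactors U V k).1 → (l : ℤ) ∣ U) :
    (∃ j : ℕ, (cofactors U V k).1.natAbs = p ^ j) ∧
    (¬ (p : ℤ) ∣ U → (cofactors U V k).1.natAbs = 1) ∧
    (5 ≤ p → (cofactors U V k).1.natAbs ∣ p) := by
  obtain ⟨k, rfl⟩ : ∃ k', k = k' + 1 := ⟨k - 1, by have := hp.two_le; omega⟩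
  obtain ⟨e, -, hexp, -⟩ := cofactors_expand U V k
  set R := (cofactors U V (k + 1)).1
  have hp3 : p = 2 * k + 3 := by omega
  have hpZ : (p : ℤ) = 2 * k + 3 := by rw [hp3]; push_cast; ring
  rw [← hpZ, ← hp3] at hexp
  have hnV : ∀ l : ℕ, l.Prime → (l : ℤ) ∣ U → ∀ i, ¬ (l : ℤ) ∣ (-V) ^ i := by
    intro l hl hlU i hlV
    have hl' := Nat.prime_iff_prime_int.1 hl
    have h1 : (l : ℤ) ∣ V := (dvd_neg).1 (hl'.dvd_of_dvd_pow hlV)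
    exact hl'.not_isUnit (hUV.isUnit_of_dvd' hlU h1)
  have huniq : ∀ {l : ℕ}, l.Prime → l ∣ R.natAbs → l = p := by
    intro l hl hlR
    have hlR' : (l : ℤ) ∣ R := Int.natCast_dvd.2 hlR
    have hlU := hR l hl hlR'
    have h1 : (l : ℤ) ∣ p * (-V) ^ (k + 1) := by
      have e1 : p * (-V) ^ (k + 1) = R - U * ((p.choose 3 : ℕ) * (-V) ^ k + U * e) := by
        rw [hexp]; ring
      rw [e1]
      exact dvd_sub hlR' (Dvd.dvd.mul_right hlU _)
    rcases (Nat.prime_iff_prime_int.1 hl).dvd_mul.1 h1 with h | h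
    · exact (Nat.prime_dvd_prime_iff_eq hl hp).1 (Int.natCast_dvd_natCast.1 h)
    · exact absurd h (hnV l hl hlU _)
  have hpow := Nat.eq_prime_pow_of_unique_prime_dvd (Int.natAbs_ne_zero.2 hR0) huniq
  set j := R.natAbs.primeFactorsList.length
  refine ⟨⟨j, hpow⟩, ?_, ?_⟩
  · intro hpU
    rcases Nat.eq_zero_or_pos j with h | h
    · rw [hpow, h, pow_zero]
    · exact absurd (hR p hp (Int.natCast_dvd.2 (by rw [hpow]; exact dvd_pow_self p h.ne'))) hpU
  · intro hp5
    rw [hpow]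
    rcases Nat.lt_or_ge j 2 with h | h
    · exact (pow_dvd_pow p (show j ≤ 1 by omega)).trans (by simp)
    · exfalso
      -- `p ^ 2 ∣ R` is incompatible with `R ≡ p (-V) ^ k (mod p ^ 2)`
      have h2 : ((p ^ 2 : ℕ) : ℤ) ∣ R := Int.natCast_dvd.2 (by rw [hpow]; exact pow_dvd_pow p h)
      have hpU : (p : ℤ) ∣ U := hR p hp ((by push_cast; exact dvd_pow_self _ two_ne_zero :
        (p : ℤ) ∣ ((p ^ 2 : ℕ) : ℤ)).trans h2)
      obtain ⟨w, hw⟩ := h2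
      obtain ⟨u, hu⟩ := hpU
      obtain ⟨t, ht⟩ := hp.dvd_choose_self (k := 3) (by norm_num) (by omega)
      have htZ : ((p.choose 3 : ℕ) : ℤ) = p * t := by rw [ht]; push_cast; ring
      rw [hw, htZ] at hexp
      push_cast at hexp
      have hp0 : (p : ℤ) ≠ 0 := by exact_mod_cast hp.ne_zero
      refine hnV p hp ⟨u, hu⟩ (k + 1) ⟨w - t * u * (-V) ^ k - u ^ 2 * e, ?_⟩
      apply mul_left_cancel₀ hp0
      rw [hu] at hexp
      linear_combination -hexp

/-- The exceptional case of exponent `3`, in which `U + V` is tiny: e.g. `(3 + 10) ^ 3 = 3 ^ 7 + 10`. -/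
lemma exceptional {a x0 x1 j : ℕ} {X U V : ℤ} (ha : 1 < a) (hx0 : 1 ≤ x0) (hX : X ≠ 0)
    (hU : U = (a : ℤ) ^ x0 * X ^ 2) (hV : 0 < V) (h3 : (3 : ℤ) ∣ U)
    (hS : (3 * U - V).natAbs = 1) (hR : (U - 3 * V).natAbs = 3 ^ j)
    (hXa : a ^ x1 = X.natAbs * 3 ^ j) : U + V ≤ 13 := by
  have hUpos : 0 < U := by rw [hU]; positivity
  obtain ⟨ε, hε, hVε⟩ : ∃ ε : ℤ, (ε = 1 ∨ ε = -1) ∧ V = 3 * U - ε := ⟨3 * U - V, by omega, by ring⟩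
  have hpow : (3 : ℤ) ^ j = 8 * U - 3 * ε := by
    have : ((3 ^ j : ℕ) : ℤ) = 8 * U - 3 * ε := by
      rw [← hR]; omega
    exact_mod_cast this
  have hj : 3 ≤ j := by
    by_contra hlt
    have : j ≤ 2 := by omega
    interval_cases j <;> omega
  have h9 : ¬ (9 : ℤ) ∣ U := by
    intro h9
    have : (9 : ℤ) ∣ 3 ^ j := by
      have := pow_dvd_pow (3 : ℤ) (show 2 ≤ j by omega)
      norm_num at this; exact this
    rw [hpow] at this
    omega
  have hp3 : Prime (3 : ℤ) := Int.prime_three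
  have h3X : ¬ (3 : ℤ) ∣ X := by
    rintro ⟨w, hw⟩
    exact h9 ⟨(a : ℤ) ^ x0 * w ^ 2, by rw [hU, hw]; ring⟩
  have h3a : (3 : ℤ) ∣ a := by
    rw [hU] at h3
    rcases hp3.dvd_mul.1 h3 with h | h
    · exact hp3.dvd_of_dvd_pow h
    · exact absurd (hp3.dvd_of_dvd_pow h) h3X
  obtain ⟨a', rfl⟩ : 3 ∣ a := by exact_mod_cast h3a
  have h3X' : Nat.Coprime 3 X.natAbs := by
    rw [Nat.Prime.coprime_iff_not_dvd Nat.prime_three]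
    intro h
    exact h3X (Int.natCast_dvd.2 h)
  have h3a' : Nat.Coprime 3 a' := by
    rw [Nat.Prime.coprime_iff_not_dvd Nat.prime_three]
    rintro ⟨w, rfl⟩
    have : (9 : ℤ) ∣ ((3 * (3 * w) : ℕ) : ℤ) ^ x0 :=
      (Dvd.intro (w : ℤ) (by push_cast; ring)).trans (dvd_pow_self _ (by omega))
    exact h9 (by rw [hU]; exact Dvd.dvd.mul_right this _)
  rw [mul_pow] at hXa
  have hjx : j ≤ x1 := by
    have h1 : 3 ^ j ∣ 3 ^ x1 * a' ^ x1 := ⟨X.natAbs, by rw [hXa]; ring⟩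
    have h2 : 3 ^ j ∣ 3 ^ x1 := (Nat.Coprime.pow _ _ h3a').dvd_of_dvd_mul_right h1
    exact (Nat.pow_dvd_pow_iff_le_right (by norm_num)).1 h2
  have ha'X : a' ^ x1 ∣ X.natAbs := by
    have h1 : a' ^ x1 ∣ X.natAbs * 3 ^ j := ⟨3 ^ x1, by rw [← hXa]; ring⟩
    exact (Nat.Coprime.pow _ _ h3a'.symm).dvd_of_dvd_mul_right h1
  have hXpos : 0 < X.natAbs := Int.natAbs_pos.2 hX
  have hUge : (X.natAbs : ℤ) ^ 2 * (3 * a') ≤ U := by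
    rw [hU, Int.natAbs_sq, mul_comm]
    push_cast
    have : (3 * a' : ℤ) ≤ (3 * a') ^ x0 := by
      exact_mod_cast Nat.le_self_pow (by omega) (3 * a')
    gcongr
  rcases Nat.lt_or_ge a' 2 with ha2 | ha2
  · obtain rfl : a' = 1 := by omega
    have hXd : X.natAbs ∣ 3 ^ x1 := ⟨3 ^ j, by simpa using hXa⟩
    have hX1 : X.natAbs = 1 := (Nat.Coprime.pow_left x1 h3X').symm.eq_one_of_dvd hXd
    have hx01 : x0 = 1 := by
      by_contra h
      apply h9
      have : ((3 * 1 : ℕ) : ℤ) ^ 2 ∣ ((3 * 1 : ℕ) : ℤ) ^ x0 := pow_dvd_pow _ (by omega)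
      rw [hU]
      exact Dvd.dvd.mul_right (by norm_num at this ⊢; exact this) _
    have hX2 : X ^ 2 = 1 := by rw [← Int.natAbs_sq, hX1]; norm_num
    rw [hx01, hX2] at hU
    norm_num at hU
    omega
  · exfalso
    have h1 : 2 ^ j ≤ X.natAbs :=
      ((Nat.pow_le_pow_left ha2 j).trans (Nat.pow_le_pow_right (by omega) hjx)).trans
        (Nat.le_of_dvd hXpos ha'X)
    have h2 : (2 : ℤ) ^ j ≤ X.natAbs := by exact_mod_cast h1
    have h3 : (3 : ℤ) ^ j ≤ (2 ^ j) ^ 2 := by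
      rw [← pow_mul, mul_comm j 2, pow_mul]
      exact pow_le_pow_left₀ (by norm_num) (by norm_num) j
    have h4 : ((2 : ℤ) ^ j) ^ 2 ≤ (X.natAbs : ℤ) ^ 2 := by gcongr
    have h5 : (2 : ℤ) ≤ a' := by exact_mod_cast ha2
    have h6 : (X.natAbs : ℤ) ^ 2 * 6 ≤ (X.natAbs : ℤ) ^ 2 * (3 * a') :=
      mul_le_mul_of_nonneg_left (by linarith) (sq_nonneg _)
    have h7 : (1 : ℤ) ≤ (2 ^ j) ^ 2 := by
      have : (0 : ℤ) < (2 ^ j) ^ 2 := by positivity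
      linarith
    have h8 : -1 ≤ ε := by omega
    have h9 : ε ≤ 1 := by omega
    linarith

lemma sq_lt_three_pow {p : ℕ} (hp : 5 ≤ p) : p ^ 2 < 3 ^ (p - 1) := by
  induction p, hp using Nat.le_induction with
  | base => norm_num
  | succ n hn ih =>
    have : 3 ^ (n + 1 - 1) = 3 * 3 ^ (n - 1) := by
      rw [← pow_succ']; congr 1; omega
    rw [this]
    nlinarith

/-- If `a ^ x1 √A + b ^ y1 √-B`, with `A = a ^ x0` and `B = b ^ y0`, is up to signs the `p`-th power of
`√A X + √-B Y`, for `p` an odd prime, then `p = 3` and `A X² + B Y² ≤ 13`. -/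
lemma prime_step {a b x0 y0 x1 y1 p k : ℕ} {X Y : ℤ} (ha : 1 < a) (hb : 1 < b)
    (hab : Nat.Coprime a b) (hx0 : 1 ≤ x0) (hy0 : 1 ≤ y0) (hp : p.Prime) (hpk : p = 2 * k + 1)
    {U V : ℤ} (hU : U = (a : ℤ) ^ x0 * X ^ 2) (hV : V = (b : ℤ) ^ y0 * Y ^ 2)
    (hX : a ^ x1 = X.natAbs * (cofactors U V k).1.natAbs)
    (hY : b ^ y1 = Y.natAbs * (cofactors U V k).2.natAbs) :
    p = 3 ∧ U + V ≤ 13 := by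
  have hXd : X.natAbs ∣ a ^ x1 := ⟨_, hX⟩
  have hYd : Y.natAbs ∣ b ^ y1 := ⟨_, hY⟩
  have hX0 : X ≠ 0 := by
    rintro rfl
    have : 0 < a ^ x1 := by positivity
    simp at hX; omega
  have hY0 : Y ≠ 0 := by
    rintro rfl
    have : 0 < b ^ y1 := by positivity
    simp at hY; omega
  have hUpos : 0 < U := by rw [hU]; positivity
  have hVpos : 0 < V := by rw [hV]; positivity
  have hUV : IsCoprime U V := by
    have hX' : IsCoprime X (b : ℤ) := by
      rw [Int.isCoprime_iff_gcd_eq_one]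
      exact (Nat.Coprime.pow_left x1 hab).coprime_dvd_left hXd
    have hY' : IsCoprime (a : ℤ) Y := by
      rw [Int.isCoprime_iff_gcd_eq_one]
      exact (Nat.Coprime.pow_right y1 hab).coprime_dvd_right hYd
    have hXY : IsCoprime X Y := by
      rw [Int.isCoprime_iff_gcd_eq_one]
      exact ((Nat.Coprime.pow x1 y1 hab).coprime_dvd_left hXd).coprime_dvd_right hYd
    have hab' : IsCoprime (a : ℤ) b := Nat.isCoprime_iff_coprime.2 hab
    rw [hU, hV]
    exact ((hab'.pow).mul_right hY'.pow).mul_left ((hX'.pow).mul_right hXY.pow)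
  have hR0 : (cofactors U V k).1 ≠ 0 := by
    intro h
    have : 0 < a ^ x1 := by positivity
    rw [h] at hX; simp at hX; omega
  have hS0 : (cofactors U V k).2 ≠ 0 := by
    intro h
    have : 0 < b ^ y1 := by positivity
    rw [h] at hY; simp at hY; omega
  have hRl : ∀ l : ℕ, l.Prime → (l : ℤ) ∣ (cofactors U V k).1 → (l : ℤ) ∣ U := by
    intro l hl hlR
    have h1 : l ∣ a ^ x1 := (Int.natCast_dvd.1 hlR).trans ⟨_, by rw [hX, mul_comm]⟩
    have h2 : (l : ℤ) ∣ a := Int.natCast_dvd_natCast.2 (hl.dvd_of_dvd_pow h1)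
    rw [hU]
    exact Dvd.dvd.mul_right (h2.trans (dvd_pow_self _ (by omega))) _
  have hSl : ∀ l : ℕ, l.Prime → (l : ℤ) ∣ (cofactors U V k).2 → (l : ℤ) ∣ V := by
    intro l hl hlS
    have h1 : l ∣ b ^ y1 := (Int.natCast_dvd.1 hlS).trans ⟨_, by rw [hY, mul_comm]⟩
    have h2 : (l : ℤ) ∣ b := Int.natCast_dvd_natCast.2 (hl.dvd_of_dvd_pow h1)
    rw [hV]
    exact Dvd.dvd.mul_right (h2.trans (dvd_pow_self _ (by omega))) _
  have hswap : (cofactors V U k).1.natAbs = (cofactors U V k).2.natAbs := by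
    rw [cofactors_swap U V k]
    simp [Int.natAbs_mul, Int.natAbs_pow]
  obtain ⟨⟨i, hRi⟩, hR1, hR5⟩ := cofactor_bound hp hpk hUV hR0 hRl
  obtain ⟨⟨j, hSj⟩, hS1, hS5⟩ := cofactor_bound (U := V) (V := U) hp hpk hUV.symm
    (by rw [← Int.natAbs_ne_zero, hswap]; exact Int.natAbs_ne_zero.2 hS0)
    (by
      intro l hl hlS
      refine hSl l hl (Int.natCast_dvd.2 ?_)
      rw [← hswap]; exact Int.natCast_dvd.1 hlS)
  rw [hswap] at hSj hS1 hS5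
  have hnorm := cofactors_norm U V k
  rw [← hpk] at hnorm
  have hUV3 : 3 ≤ U + V := by
    by_contra hlt
    have hU1 : U = 1 := by omega
    rw [hU1] at hU
    have : (1 : ℤ) < (a : ℤ) ^ x0 := by
      exact_mod_cast Nat.one_lt_pow (by omega) ha
    have : 0 < X ^ 2 := by positivity
    nlinarith
  have hsq : ∀ {x : ℤ} {M : ℕ}, x.natAbs ≤ M → x ^ 2 ≤ (M : ℤ) ^ 2 := by
    intro x M h
    rw [← Int.natAbs_sq]
    have : (x.natAbs : ℤ) ≤ M := by exact_mod_cast h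
    gcongr
  have hsmall : ∀ M : ℕ, (cofactors U V k).1.natAbs ≤ M → (cofactors U V k).2.natAbs ≤ M →
      (U + V) ^ (p - 1) ≤ (M : ℤ) ^ 2 := by
    intro M h1 h2
    have e : (U + V) ^ p = (U + V) * (U + V) ^ (p - 1) := by
      rw [← pow_succ']; congr 1; have := hp.two_le; omega
    rw [e] at hnorm
    have h3 : (U + V) * (U + V) ^ (p - 1) ≤ (U + V) * (M : ℤ) ^ 2 := by
      rw [← hnorm]
      nlinarith [mul_le_mul_of_nonneg_left (hsq h1) hUpos.le,
        mul_le_mul_of_nonneg_left (hsq h2) hVpos.le]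
    exact le_of_mul_le_mul_left h3 (by linarith)
  rcases Nat.lt_or_ge p 5 with hlt | hge
  · have hp3 : p = 3 := by
      have := hp.two_le
      have : p ≠ 4 := by omega
      omega
    have hk1 : k = 1 := by omega
    subst hk1
    subst hp3
    refine ⟨rfl, ?_⟩
    have hRv : (cofactors U V 1).1 = U - 3 * V := by simp [cofactors]; ring
    have hSv : (cofactors U V 1).2 = 3 * U - V := by simp [cofactors]; ring
    rw [hRv] at hRi hR1 hX
    rw [hSv] at hSj hS1 hY
    by_cases h3U : (3 : ℤ) ∣ U
    · have h3V : ¬ (3 : ℤ) ∣ V := fun h3V =>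
        Int.prime_three.not_isUnit (hUV.isUnit_of_dvd' h3U h3V)
      exact exceptional ha hx0 hX0 hU hVpos h3U (hS1 h3V) hRi (by rw [hX, hRi])
    · by_cases h3V : (3 : ℤ) ∣ V
      · have := exceptional (U := V) (V := U) (j := j) hb hy0 hY0 hV hUpos h3V
          (by have := hR1 h3U; omega) (by rw [← hSj]; omega) (by rw [hY, hSj])
        linarith
      · have h1 := hsmall 1 (by rw [hRv, hR1 h3U]) (by rw [hSv, hS1 h3V])
        norm_num at h1
        have := le_abs_self (U + V)
        linarith
  · exfalso
    have h1 := hsmall p (Nat.le_of_dvd hp.pos (hR5 hge)) (Nat.le_of_dvd hp.pos (hS5 hge))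
    have h2 : (p : ℤ) ^ 2 < 3 ^ (p - 1) := by exact_mod_cast sq_lt_three_pow hge
    have h3 : (3 : ℤ) ^ (p - 1) ≤ (U + V) ^ (p - 1) := by gcongr
    linarith

/-! ### The bound -/

lemma key_bound {a b c d f x0 x1 y0 y1 z : ℕ} (ha : 1 < a) (hb : 1 < b) (hc : 1 < c)
    (hab : Nat.Coprime a b) (hac : Nat.Coprime a c) (hbc : Nat.Coprime b c) (hodd : Odd c)
    (hx0 : 1 ≤ x0) (hy0 : 1 ≤ y0) (hd : 0 < d) (hf : 0 < f) (hz : 0 < z)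
    (hD : a ^ x0 * b ^ y0 = d * f ^ 2)
    (heq : a ^ x0 * (a ^ x1) ^ 2 + b ^ y0 * (b ^ y1) ^ 2 = c ^ z) :
    2 * z ≤ classBound d f ∨ z ≤ 6 := by
  rcases Nat.lt_or_ge (2 * z) (classBound d f) with hlt | hT
  · exact Or.inl hlt.le
  have hDZ : ((a ^ x0 * b ^ y0 : ℕ) : ℤ) = (a : ℤ) ^ x0 * (b : ℤ) ^ y0 := by push_cast; ring
  have cab : IsCoprime (a : ℤ) b := Nat.isCoprime_iff_coprime.2 hab
  have cca : IsCoprime (c : ℤ) a := Nat.isCoprime_iff_coprime.2 hac.symm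
  have ccb : IsCoprime (c : ℤ) b := Nat.isCoprime_iff_coprime.2 hbc.symm
  have cc2 : IsCoprime (c : ℤ) 2 := by
    exact_mod_cast Nat.isCoprime_iff_coprime.2 (Nat.coprime_two_right.2 hodd)
  obtain ⟨m, k, X1, Y1, hzm, hmT, hn1, hw⟩ := exists_root (A := (a : ℤ) ^ x0) (B := (b : ℤ) ^ y0)
    (X := (a : ℤ) ^ x1) (Y := (b : ℤ) ^ y1) (c := c) (D := a ^ x0 * b ^ y0) (d := d) (f := f) (z := z)
    (by exact_mod_cast Nat.one_lt_pow (by omega) ha) (by exact_mod_cast Nat.one_lt_pow (by omega) hb)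
    hDZ hd hf hD (by exact_mod_cast hc) cab.pow cab.symm.pow cca.pow_right ccb.pow_right
    cca.pow_right ccb.pow_right cc2 hz (by exact_mod_cast heq) hT
  rcases Nat.eq_zero_or_pos k with hk0 | hk0
  · left
    have : z = m := by rw [hzm, hk0]; ring
    omega
  right
  -- split off a prime factor `p` of the odd exponent `2 k + 1 = p (2 k' + 1)`
  set p := Nat.minFac (2 * k + 1) with hpdef
  have hp : p.Prime := Nat.minFac_prime (by omega)
  obtain ⟨q', hq'⟩ : p ∣ 2 * k + 1 := Nat.minFac_dvd _
  have hodd' : Odd (p * q') := by rw [← hq']; exact ⟨k, rfl⟩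
  obtain ⟨κ, hκ⟩ := (Nat.odd_mul.1 hodd').1
  obtain ⟨k', hk'⟩ := (Nat.odd_mul.1 hodd').2
  have hkk : k = (2 * k' + 1) * κ + k' := by
    have : 2 * k + 1 = 2 * ((2 * k' + 1) * κ + k') + 1 := by rw [hq', hκ, hk']; ring
    omega
  set D := a ^ x0 * b ^ y0 with hDdef
  set A := (a : ℤ) ^ x0 with hA
  set B := (b : ℤ) ^ y0 with hB
  have hA0 : A ≠ 0 := by positivity
  have hw' := sqElt_pow_mul hDZ X1 Y1 k'
  set X' := X1 * (cofactors (A * X1 ^ 2) (B * Y1 ^ 2) k').1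
  set Y' := Y1 * (cofactors (A * X1 ^ 2) (B * Y1 ^ 2) k').2
  have hE' : sqElt D A B X' Y' = sqElt D A B X1 Y1 ^ (2 * k' + 1) := by
    apply Zsqrtd.eq_of_smul_eq_smul_left hA0
    rw [← elt_sq hDZ, ← hw', mul_pow, elt_sq hDZ]
    ring
  have hpow : sqElt D A B X1 Y1 ^ k * ⟨A * X1, Y1⟩ = sqElt D A B X' Y' ^ κ * ⟨A * X', Y'⟩ := by
    rw [hE', ← hw', ← mul_assoc, ← pow_mul, ← pow_add, ← hkk]
  rw [hpow, sqElt_pow_mul hDZ] at hw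
  have hnorm' : A * X' ^ 2 + B * Y' ^ 2 = c ^ (m * (2 * k' + 1)) := by
    have h1 := congrArg Zsqrtd.norm hE'
    rw [zsqrtd_norm_pow_s2, sqElt_norm hDZ, sqElt_norm hDZ, hn1] at h1
    have h2 : (A * X' ^ 2 + B * Y' ^ 2) ^ 2 = ((c : ℤ) ^ (m * (2 * k' + 1))) ^ 2 := by
      rw [h1, pow_mul]; ring
    exact (sq_eq_sq₀ (by positivity) (by positivity)).1 h2
  set U := A * X' ^ 2 with hU
  set V := B * Y' ^ 2 with hV
  have hXY : ((a : ℤ) ^ x1).natAbs = (X' * (cofactors U V κ).1).natAbs ∧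
      ((b : ℤ) ^ y1).natAbs = (Y' * (cofactors U V κ).2).natAbs := by
    rcases hw with hw | hw
    · have h1 := congrArg Zsqrtd.re hw
      have h2 := congrArg Zsqrtd.im hw
      simp only at h1 h2
      exact ⟨by rw [mul_left_cancel₀ hA0 h1], by rw [h2]⟩
    · have h1 := congrArg Zsqrtd.re hw
      have h2 := congrArg Zsqrtd.im hw
      simp only [Zsqrtd.re_neg, Zsqrtd.im_neg] at h1 h2
      rw [← mul_neg] at h1
      exact ⟨by rw [mul_left_cancel₀ hA0 h1, Int.natAbs_neg], by rw [h2, Int.natAbs_neg]⟩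
  obtain ⟨h1, h2⟩ := hXY
  rw [Int.natAbs_pow, Int.natAbs_natCast, Int.natAbs_mul] at h1 h2
  obtain ⟨hp3, h13⟩ := prime_step ha hb hab hx0 hy0 hp hκ hU hV h1 h2
  rw [hnorm'] at h13
  have hz3 : z = (m * (2 * k' + 1)) * 3 := by rw [hzm, hq', hp3, hk']; ring
  have hc3 : 3 ≤ c := by
    rcases hodd with ⟨t, ht⟩; omega
  have hle : m * (2 * k' + 1) ≤ 2 := by
    by_contra hgt
    have h3 : (c : ℤ) ^ 3 ≤ (c : ℤ) ^ (m * (2 * k' + 1)) :=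
      pow_le_pow_right₀ (by exact_mod_cast hc.le) (by omega)
    have h4 : (3 : ℤ) ^ 3 ≤ (c : ℤ) ^ 3 := by
      have : (3 : ℤ) ≤ c := by exact_mod_cast hc3
      gcongr
    linarith
  omega

/-- Splitting off the even part of the exponent: `a ^ x = a ^ x₀ (a ^ x₁) ^ 2` with `x₀ ∈ {1, 2}`,
and `a = d f` with `a ^ x₀ = d f ^ 2`. -/
lemma split_exponent {a x : ℕ} (ha : 0 < a) (hx : 0 < x) : ∃ x0 x1 d f : ℕ, 1 ≤ x0 ∧ 0 < d ∧ 0 < f ∧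
    a ^ x = a ^ x0 * (a ^ x1) ^ 2 ∧ a ^ x0 = d * f ^ 2 ∧ d * f = a := by
  rcases Nat.even_or_odd' x with ⟨t, h | h⟩
  · refine ⟨2, t - 1, 1, a, by norm_num, by norm_num, ha, ?_, by ring, by ring⟩
    rw [← pow_mul, ← pow_add]; congr 1; omega
  · refine ⟨1, t, a, 1, by norm_num, ha, by norm_num, ?_, by ring, by ring⟩
    rw [← pow_mul, ← pow_add]; congr 1; omega

theorem stmt_2 (a b c : ℕ) (ha : 0 < a) (hb : 0 < b) (hc : 0 < c)
    (hab : Nat.Coprime a b) (hac : Nat.Coprime a c) (hbc : Nat.Coprime b c)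
    (hmin : 1 < min a (min b c)) (hodd : Odd c)
    (x y z : ℕ) (hx : 0 < x) (hy : 0 < y) (hz : 0 < z)
    (heq : a ^ x + b ^ y = c ^ z) :
    (z : ℝ) < (2 / Real.pi) * a * b * Real.log (2 * Real.exp 1 * a * b) := by
  obtain ⟨ha1, hb1, hc1⟩ : 1 < a ∧ 1 < b ∧ 1 < c := by
    simpa [lt_min_iff] using hmin
  obtain ⟨x0, x1, d1, f1, hx0, hd1, hf1, hx1, hD1, hP1⟩ := split_exponent ha hx
  obtain ⟨y0, y1, d2, f2, hy0, hd2, hf2, hy1, hD2, hP2⟩ := split_exponent hb hy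
  have key := key_bound (d := d1 * d2) (f := f1 * f2) ha1 hb1 hc1 hab hac hbc hodd hx0 hy0
    (by positivity) (by positivity) hz (by rw [hD1, hD2]; ring) (by rw [← hx1, ← hy1, heq])
  set P : ℝ := a * b with hP
  have hP6 : (6 : ℝ) ≤ P := by
    have : 6 ≤ a * b := by
      have hne : a ≠ b := by
        rintro rfl
        rw [Nat.coprime_self] at hab; omega
      rcases Nat.lt_or_gt_of_ne hne with h | h <;> nlinarith
    rw [hP]; exact_mod_cast this
  have hlog : Real.log (2 * Real.exp 1 * a * b) = Real.log 2 + 1 + Real.log P := by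
    rw [mul_assoc, ← hP, Real.log_mul (by positivity) (by positivity),
      Real.log_mul (by norm_num) (by positivity), Real.log_exp]
  have hlog2 : 0 < Real.log 2 := Real.log_pos (by norm_num)
  have hlogP : 1 ≤ Real.log P := by
    rw [Real.le_log_iff_exp_le (by linarith)]
    linarith [Real.exp_one_lt_d9]
  have hpi : 1 / 2 < 2 / Real.pi := by
    rw [div_lt_div_iff₀ (by norm_num) Real.pi_pos]
    linarith [Real.pi_lt_four]
  have hmain : P * (1 + Real.log P) / 2 < 2 / Real.pi * P * Real.log (2 * Real.exp 1 * a * b) := by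
    rw [hlog]
    have h1 : P * (1 + Real.log P) < P * (Real.log 2 + 1 + Real.log P) := by
      apply mul_lt_mul_of_pos_left _ (by linarith)
      linarith
    have h2 : 1 / 2 * (P * (Real.log 2 + 1 + Real.log P))
        < 2 / Real.pi * (P * (Real.log 2 + 1 + Real.log P)) :=
      mul_lt_mul_of_pos_right hpi (mul_pos (by linarith) (by linarith))
    linarith
  rw [mul_assoc (2 / Real.pi) (a : ℝ) b, ← hP]
  refine lt_of_le_of_lt ?_ hmain
  rcases key with h | h
  · have h1 : (2 * z : ℝ) ≤ classBound (d1 * d2) (f1 * f2) := by exact_mod_cast h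
    have h2 := classBound_le (d1 * d2) (f1 * f2)
    have hdf : ((d1 * d2 : ℕ) : ℝ) * ((f1 * f2 : ℕ) : ℝ) = P := by
      rw [hP, ← hP1, ← hP2]; push_cast; ring
    have hfP : ((f1 * f2 : ℕ) : ℝ) ≤ P := by
      rw [← hdf]
      have : (1 : ℝ) ≤ ((d1 * d2 : ℕ) : ℝ) := by
        exact_mod_cast Nat.succ_le_of_lt (Nat.mul_pos hd1 hd2)
      nlinarith [Nat.cast_nonneg (α := ℝ) (f1 * f2)]
    have hlogf : Real.log ((f1 * f2 : ℕ) : ℝ) ≤ Real.log P :=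
      Real.log_le_log (by exact_mod_cast Nat.mul_pos hf1 hf2) hfP
    rw [hdf] at h2
    have h3 : P * (1 + Real.log ((f1 * f2 : ℕ) : ℝ)) ≤ P * (1 + Real.log P) := by
      apply mul_le_mul_of_nonneg_left _ (by linarith)
      linarith
    linarith
  · have h1 : (z : ℝ) ≤ 6 := by exact_mod_cast h
    nlinarith
end
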